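/- arXiv:0801.0939 — 2 statements merged into one kernel-verified Lean document; each statement's English description precedes it below -/
import Mathlib

section
/- Let d and k be integers with 0 ≤ k ≤ d-3. For every convex polytope P of dimension d, the graph G_k(P) is (k+1)(d-k)-vertex-connected. -/
open Set

/-- A convex polytope in `ℝ^N`: the convex hull of a finite set of points. -/
def IsPolytope {N : ℕ} (P : Set (EuclideanSpace ℝ (Fin N))) : Prop :=
  ∃ S : Set (EuclideanSpace ℝ (Fin N)), S.Finite ∧ P = convexHull ℝ S

/-- The dimension of a subset of `ℝ^N`: the dimension of its affine hull. -/
noncomputable def sdim {N : ℕ} (P : Set (EuclideanSpace ℝ (Fin N))) : ℕ :=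
  Module.finrank ℝ (affineSpan ℝ P).direction

/-- `F` is a face of `P` of dimension `k`: a nonempty exposed subset of `P`
(the set of minimizers over `P` of some linear functional) of dimension `k`. -/
def IsFaceDim {N : ℕ} (P F : Set (EuclideanSpace ℝ (Fin N))) (k : ℕ) : Prop :=
  IsExposed ℝ P F ∧ F.Nonempty ∧ sdim F = k

/-- The graph `G_k(P)` on the `k`-dimensional faces of `P`: two such faces
are adjacent if some `(k+1)`-dimensional face of `P` contains both. -/
def faceGraph {N : ℕ} (P : Set (EuclideanSpace ℝ (Fin N))) (k : ℕ) :
    SimpleGraph {F : Set (EuclideanSpace ℝ (Fin N)) // IsFaceDim P F k} :=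
  SimpleGraph.fromRel (fun F F' => ∃ G, IsFaceDim P G (k + 1) ∧ F.1 ⊆ G ∧ F'.1 ⊆ G)

/-- A graph is `m`-connected if it has at least `m+1` nodes and deleting any set
of at most `m-1` nodes (and incident edges) leaves a connected graph. -/
def MConnected {V : Type*} (G : SimpleGraph V) (m : ℕ) : Prop :=
  m + 1 ≤ Nat.card V ∧
    ∀ S : Set V, S.Finite → S.ncard < m → (G.induce Sᶜ).Connected

/-!
The points spanning a polytope of dimension `d`, placed on an affine hyperplane missing the origin,
form a configuration of vectors that spans a pointed cone of rank `d + 1`; the `k`-dimensional faces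
of the polytope are the faces of rank `r = k + 1` of the cone. Faces through a vertex are faces, of
rank one less, of the contraction by that vertex, so by induction on `r` the remaining faces through
a vertex stay connected unless too many deleted faces contain it. Double counting shows that the
vertices lying in too many deleted faces span a small subspace, and by Balinski's theorem any two
other vertices are joined by a path avoiding them. Counting the faces through an edge of this path,
and the facets of such faces that contain only one of its ends, shows that too few faces have been
deleted to separate the faces through one end from those through the other.

For `r = 2` the double count is too weak: a remaining edge may join two bad vertices. If no path led
from such an edge to a good vertex, then the vertices within reach would be left almost only by
deleted edges, and counting these gives more deleted edges than there are.
-/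

open Module

namespace VectorConfiguration

variable {𝕜 ι V : Type*} [Field 𝕜] [AddCommGroup V] [Module 𝕜 V]

/-! ### Spans, ranks and contractions -/

section Span

variable (𝕜) in
/-- The linear span of the vectors of the configuration `v` labelled by `A`. -/
def spanOf (v : ι → V) (A : Finset ι) : Submodule 𝕜 V :=
  Submodule.span 𝕜 (v '' A)

variable (𝕜) in
/-- The rank of a set of labels of a vector configuration. For a face of a pointed cone it is the
dimension of that face, hence one more than the dimension of the corresponding polytope face. -/
noncomputable def rank (v : ι → V) (A : Finset ι) : ℕ :=
  finrank 𝕜 (spanOf 𝕜 v A)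

variable (𝕜) in
/-- The contraction of the configuration `v` by `A`: the same labels, with vectors taken modulo the
span of `A`. Its faces are the faces of `v` containing `A`, so the contraction by a vertex encodes
the vertex figure. -/
def contract (v : ι → V) (A : Finset ι) : ι → V ⧸ spanOf 𝕜 v A :=
  fun i => (spanOf 𝕜 v A).mkQ (v i)

variable {v : ι → V} {A B : Finset ι} {i : ι} {W : Submodule 𝕜 V}

instance finiteDimensional_spanOf : FiniteDimensional 𝕜 (spanOf 𝕜 v A) :=
  FiniteDimensional.span_of_finite 𝕜 (A.finite_toSet.image v)

lemma mem_spanOf (hi : i ∈ A) : v i ∈ spanOf 𝕜 v A :=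
  Submodule.subset_span ⟨i, hi, rfl⟩

lemma spanOf_le : spanOf 𝕜 v A ≤ W ↔ ∀ i ∈ A, v i ∈ W := by
  simp only [spanOf, Submodule.span_le, Set.image_subset_iff]
  rfl

lemma spanOf_mono (h : A ⊆ B) : spanOf 𝕜 v A ≤ spanOf 𝕜 v B :=
  spanOf_le.2 fun _ hi => mem_spanOf (h hi)

lemma spanOf_union [DecidableEq ι] :
    spanOf 𝕜 v (A ∪ B) = spanOf 𝕜 v A ⊔ spanOf 𝕜 v B := by
  rw [spanOf, Finset.coe_union, Set.image_union, Submodule.span_union]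
  rfl

lemma rank_union_le [DecidableEq ι] : rank 𝕜 v (A ∪ B) ≤ rank 𝕜 v A + rank 𝕜 v B := by
  rw [rank, spanOf_union]
  exact Submodule.finrank_add_le_finrank_add_finrank _ _

variable (v) in
lemma rank_empty : rank 𝕜 v ∅ = 0 := by
  rw [rank, spanOf, Finset.coe_empty, Set.image_empty, Submodule.span_empty, finrank_bot]

lemma rank_pos (hi : i ∈ A) (h0 : v i ≠ 0) : 0 < rank 𝕜 v A := by
  refine Nat.pos_of_ne_zero fun h => h0 ?_
  simpa [Submodule.finrank_eq_zero.1 h] using mem_spanOf (𝕜 := 𝕜) (v := v) hi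

lemma rank_biUnion_le {κ : Type*} [DecidableEq ι] (s : Finset κ) (f : κ → Finset ι) :
    rank 𝕜 v (s.biUnion f) ≤ ∑ a ∈ s, rank 𝕜 v (f a) := by
  classical
  induction s using Finset.induction with
  | empty => simp [rank_empty]
  | insert a s ha ih =>
    rw [Finset.biUnion_insert, Finset.sum_insert ha]
    exact rank_union_le.trans (Nat.add_le_add_left ih _)

lemma rank_biUnion_le_card [DecidableEq ι] {X : Finset (Finset ι)}
    (hX : ∀ a ∈ X, rank 𝕜 v a = 1) : rank 𝕜 v (X.biUnion id) ≤ X.card := by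
  rw [Finset.card_eq_sum_ones]
  exact (rank_biUnion_le X id).trans_eq (Finset.sum_congr rfl hX)

lemma exists_notMem_of_finrank_lt [FiniteDimensional 𝕜 W] (h : finrank 𝕜 W < rank 𝕜 v A) :
    ∃ i ∈ A, v i ∉ W := by
  contrapose! h
  exact Submodule.finrank_mono (spanOf_le.2 h)

lemma exists_ne_zero_of_rank_pos (h : 0 < rank 𝕜 v A) : ∃ i ∈ A, v i ≠ 0 := by
  simpa using exists_notMem_of_finrank_lt (W := (⊥ : Submodule 𝕜 V)) (by simpa using h)

lemma exists_subset_le_rank_biUnion [DecidableEq ι] {X : Finset (Finset ι)} {m : ℕ}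
    (hm : m ≤ rank 𝕜 v (X.biUnion id)) :
    ∃ S ⊆ X, S.card ≤ m ∧ m ≤ rank 𝕜 v (S.biUnion id) := by
  induction m with
  | zero => exact ⟨∅, by simp⟩
  | succ m ih =>
    obtain ⟨S, hSX, hcard, hrank⟩ := ih (by lia)
    by_cases hlt : m < rank 𝕜 v (S.biUnion id)
    · exact ⟨S, hSX, by lia, hlt⟩
    obtain ⟨i, hi, hiS⟩ := exists_notMem_of_finrank_lt (𝕜 := 𝕜) (v := v) (A := X.biUnion id)
      (W := spanOf 𝕜 v (S.biUnion id)) (lt_of_le_of_lt (not_lt.1 hlt) hm)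
    obtain ⟨a, haX, hia⟩ := Finset.mem_biUnion.1 hi
    refine ⟨insert a S, Finset.insert_subset haX hSX,
      (Finset.card_insert_le a S).trans (by lia), hrank.trans_lt ?_⟩
    have hsub : S.biUnion id ⊆ (insert a S).biUnion id :=
      Finset.biUnion_subset_biUnion_of_subset_left _ (Finset.subset_insert a S)
    refine Submodule.finrank_lt_finrank_of_lt ((spanOf_mono hsub).lt_of_not_ge fun hle => hiS ?_)
    exact hle (mem_spanOf (Finset.mem_biUnion.2 ⟨a, Finset.mem_insert_self a S, hia⟩))

lemma spanOf_eq_span_singleton (hA : rank 𝕜 v A = 1) (hi : i ∈ A) (h0 : v i ≠ 0) :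
    spanOf 𝕜 v A = Submodule.span 𝕜 {v i} := by
  refine (Submodule.eq_of_le_of_finrank_le ?_ ?_).symm
  · exact (Submodule.span_singleton_le_iff_mem _ _).2 (mem_spanOf hi)
  · exact hA.le.trans_eq (finrank_span_singleton h0).symm

lemma contract_eq_zero_iff : contract 𝕜 v A i = 0 ↔ v i ∈ spanOf 𝕜 v A := by
  simp [contract]

lemma rank_contract_add (hAB : A ⊆ B) :
    rank 𝕜 (contract 𝕜 v A) B + rank 𝕜 v A = rank 𝕜 v B := by
  have hmap : spanOf 𝕜 (contract 𝕜 v A) B = (spanOf 𝕜 v B).map (spanOf 𝕜 v A).mkQ := by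
    simp only [spanOf, contract, Submodule.map_span, ← Set.image_comp]
    rfl
  have key := LinearMap.finrank_range_add_finrank_ker
    ((spanOf 𝕜 v A).mkQ.domRestrict (spanOf 𝕜 v B))
  rw [LinearMap.range_domRestrict, LinearMap.ker_domRestrict, Submodule.ker_mkQ, ← hmap,
    (Submodule.comapSubtypeEquivOfLe (spanOf_mono hAB)).finrank_eq] at key
  exact key

end Span

/-! ### Faces -/

section Face

variable [LinearOrder 𝕜]

/-- The functional `l` is nonnegative on the vectors labelled by `I` and vanishes, among them,
exactly on those labelled by `A`. -/
structure CutsOut (v : ι → V) (l : Dual 𝕜 V) (I A : Finset ι) : Prop where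
  subset : A ⊆ I
  nonneg : ∀ i ∈ I, 0 ≤ l (v i)
  eq_zero_iff : ∀ i ∈ I, l (v i) = 0 ↔ i ∈ A

variable (𝕜) in
/-- `A` is the set of labels of the generators lying on some face of the cone generated by the
vectors labelled by `I`. -/
def IsFace (v : ι → V) (I A : Finset ι) : Prop :=
  ∃ l : Dual 𝕜 V, CutsOut v l I A

variable (𝕜) in
/-- Faces of a given rank; those of rank `1` and `2` play the roles of vertices and edges. -/
structure IsFaceOfRank (v : ι → V) (I : Finset ι) (r : ℕ) (A : Finset ι) : Prop where
  isFace : IsFace 𝕜 v I A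
  rank_eq : rank 𝕜 v A = r

/-- The functional `l` is positive on all nonzero vectors labelled by `A`. Zero vectors are allowed
because contractions produce them. -/
def IsPositiveOn (v : ι → V) (l : Dual 𝕜 V) (A : Finset ι) : Prop :=
  ∀ i ∈ A, v i ≠ 0 → 0 < l (v i)

variable (𝕜) in
/-- The cone generated by the vectors labelled by `I` is pointed. -/
def Pointed (v : ι → V) (I : Finset ι) : Prop :=
  ∃ l : Dual 𝕜 V, IsPositiveOn v l I

variable {v : ι → V} {l : Dual 𝕜 V} {I A B F a : Finset ι} {i : ι} {r s : ℕ}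

namespace CutsOut

lemma pos (h : CutsOut v l I A) (hi : i ∈ I) (hiA : i ∉ A) : 0 < l (v i) :=
  (h.nonneg i hi).lt_of_ne' fun h0 => hiA ((h.eq_zero_iff i hi).1 h0)

lemma spanOf_le_ker (h : CutsOut v l I A) : spanOf 𝕜 v A ≤ l.ker :=
  spanOf_le.2 fun i hi => (h.eq_zero_iff i (h.subset hi)).2 hi

end CutsOut

lemma Pointed.mono (h : Pointed 𝕜 v I) (hA : A ⊆ I) : Pointed 𝕜 v A :=
  h.imp fun _ hl i hi => hl i (hA hi)

namespace IsFace

lemma refl : IsFace 𝕜 v I I :=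
  ⟨0, subset_rfl, fun _ _ => le_rfl, fun _ hi => by simp [hi]⟩

lemma subset (h : IsFace 𝕜 v I A) : A ⊆ I :=
  h.choose_spec.subset

lemma restrict (hA : IsFace 𝕜 v I A) (hAB : A ⊆ B) (hBI : B ⊆ I) : IsFace 𝕜 v B A :=
  hA.imp fun _ hl => ⟨hAB, fun i hi => hl.nonneg i (hBI hi), fun i hi => hl.eq_zero_iff i (hBI hi)⟩

lemma mem_of_mem_spanOf (hA : IsFace 𝕜 v I A) (hi : i ∈ I) (h : v i ∈ spanOf 𝕜 v A) : i ∈ A := by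
  obtain ⟨l, hl⟩ := hA
  exact (hl.eq_zero_iff i hi).1 (hl.spanOf_le_ker h)

lemma subset_of_spanOf_le (hA : IsFace 𝕜 v I A) (hB : B ⊆ I)
    (h : spanOf 𝕜 v B ≤ spanOf 𝕜 v A) : B ⊆ A :=
  fun _ hi => hA.mem_of_mem_spanOf (hB hi) (h (mem_spanOf hi))

lemma eq_of_subset_of_rank_le (hA : IsFace 𝕜 v I A) (hB : B ⊆ I) (hAB : A ⊆ B)
    (h : rank 𝕜 v B ≤ rank 𝕜 v A) : A = B :=
  hAB.antisymm <| hA.subset_of_spanOf_le hB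
    (Submodule.eq_of_le_of_finrank_le (spanOf_mono hAB) h).ge

lemma rank_lt_of_ssubset (hA : IsFace 𝕜 v I A) (hB : B ⊆ I) (hAB : A ⊂ B) :
    rank 𝕜 v A < rank 𝕜 v B :=
  lt_of_not_ge fun h => hAB.ne (hA.eq_of_subset_of_rank_le hB hAB.subset h)

lemma contract_iff (hA : A ⊆ I) :
    IsFace 𝕜 (contract 𝕜 v A) I B ↔ IsFace 𝕜 v I B ∧ A ⊆ B := by
  constructor
  · rintro ⟨l, hl⟩
    refine ⟨⟨l.comp (spanOf 𝕜 v A).mkQ, hl.subset, hl.nonneg, hl.eq_zero_iff⟩, fun i hi => ?_⟩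
    rw [← hl.eq_zero_iff i (hA hi), contract_eq_zero_iff.2 (mem_spanOf hi), map_zero]
  · rintro ⟨⟨l, hl⟩, hAB⟩
    refine ⟨(spanOf 𝕜 v A).liftQ l ((spanOf_mono hAB).trans hl.spanOf_le_ker), hl.subset, ?_, ?_⟩
    · simpa [contract] using hl.nonneg
    · simpa [contract] using hl.eq_zero_iff

lemma pointed_contract (hA : IsFace 𝕜 v I A) : Pointed 𝕜 (contract 𝕜 v A) I := by
  obtain ⟨l, hl⟩ := (contract_iff hA.subset).2 ⟨hA, subset_rfl⟩
  exact ⟨l, fun i hi h0 => hl.pos hi fun hiA => h0 (contract_eq_zero_iff.2 (mem_spanOf hiA))⟩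

end IsFace

lemma Pointed.isFaceOfRank_zero [DecidablePred fun i => v i = 0] (h : Pointed 𝕜 v I) :
    IsFaceOfRank 𝕜 v I 0 {i ∈ I | v i = 0} := by
  obtain ⟨l, hl⟩ := h
  refine ⟨⟨l, Finset.filter_subset _ _, fun i hi => ?_, fun i hi => ?_⟩, ?_⟩
  · by_cases h0 : v i = 0
    · simp [h0]
    · exact (hl i hi h0).le
  · by_cases h0 : v i = 0
    · simp [h0, hi]
    · simp [h0, (hl i hi h0).ne']
  · have hbot : spanOf 𝕜 v {i ∈ I | v i = 0} = ⊥ := eq_bot_iff.2 <| spanOf_le.2 <| by simp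
    rw [rank, hbot, finrank_bot]

namespace IsFaceOfRank

lemma subset (h : IsFaceOfRank 𝕜 v I r A) : A ⊆ I :=
  h.isFace.subset

lemma contract_iff (hA : IsFaceOfRank 𝕜 v I s A) :
    IsFaceOfRank 𝕜 (contract 𝕜 v A) I r B ↔ IsFaceOfRank 𝕜 v I (r + s) B ∧ A ⊆ B := by
  constructor
  · rintro ⟨hB, hr⟩
    obtain ⟨hB, hAB⟩ := (IsFace.contract_iff hA.subset).1 hB
    exact ⟨⟨hB, by rw [← rank_contract_add hAB, hr, hA.rank_eq]⟩, hAB⟩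
  · rintro ⟨⟨hB, hr⟩, hAB⟩
    refine ⟨(IsFace.contract_iff hA.subset).2 ⟨hB, hAB⟩, ?_⟩
    have := rank_contract_add (𝕜 := 𝕜) (v := v) hAB
    have := hA.rank_eq
    lia

lemma restrict (hA : IsFaceOfRank 𝕜 v I r A) (hAB : A ⊆ B) (hBI : B ⊆ I) :
    IsFaceOfRank 𝕜 v B r A :=
  ⟨hA.isFace.restrict hAB hBI, hA.rank_eq⟩

lemma eq_of_subset (hA : IsFaceOfRank 𝕜 v I r A) (hB : IsFaceOfRank 𝕜 v I r B) (hAB : A ⊆ B) :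
    A = B :=
  hA.isFace.eq_of_subset_of_rank_le hB.subset hAB (hB.rank_eq.trans hA.rank_eq.symm).le

lemma eq_of_le_rank (hA : IsFaceOfRank 𝕜 v I r A) (hB : IsFaceOfRank 𝕜 v I r B) (hFA : F ⊆ A)
    (hFB : F ⊆ B) (hr : r ≤ rank 𝕜 v F) : A = B := by
  have hspan : spanOf 𝕜 v F = spanOf 𝕜 v A :=
    Submodule.eq_of_le_of_finrank_le (spanOf_mono hFA) (hA.rank_eq.trans_le hr)
  exact hA.eq_of_subset hB
    (hB.isFace.subset_of_spanOf_le hA.subset (hspan.ge.trans (spanOf_mono hFB)))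

lemma two_le_rank_union [DecidableEq ι] (hA : IsFaceOfRank 𝕜 v I 1 A)
    (hB : IsFaceOfRank 𝕜 v I 1 B) (hAB : A ≠ B) : 2 ≤ rank 𝕜 v (A ∪ B) := by
  have hlt := hA.isFace.rank_lt_of_ssubset (Finset.union_subset hA.subset hB.subset)
    (Finset.subset_union_left.ssubset_of_ne fun h =>
      hAB (hB.eq_of_subset hA (Finset.union_eq_left.1 h.symm)).symm)
  have := hA.rank_eq
  lia

lemma exists_ne_zero (hA : IsFaceOfRank 𝕜 v I r A) (hr : 0 < r) : ∃ i ∈ A, v i ≠ 0 :=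
  exists_ne_zero_of_rank_pos (𝕜 := 𝕜) (hA.rank_eq.symm ▸ hr)

lemma vertex_subset_of_mem (ha : IsFaceOfRank 𝕜 v I 1 a) (hF : IsFace 𝕜 v I F) (hia : i ∈ a)
    (h0 : v i ≠ 0) (hiF : i ∈ F) : a ⊆ F := by
  refine hF.subset_of_spanOf_le ha.subset ?_
  rw [spanOf_eq_span_singleton ha.rank_eq hia h0, Submodule.span_singleton_le_iff_mem]
  exact mem_spanOf hiF

lemma exists_mem_ne_zero_notMem (ha : IsFaceOfRank 𝕜 v I 1 a) (hF : IsFace 𝕜 v I F)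
    (haF : ¬ a ⊆ F) : ∃ i ∈ a, v i ≠ 0 ∧ i ∉ F := by
  obtain ⟨i, hi, h0⟩ := ha.exists_ne_zero one_pos
  exact ⟨i, hi, h0, fun hiF => haF (ha.vertex_subset_of_mem hF hi h0 hiF)⟩

end IsFaceOfRank

end Face

/-! ### Facets and vertices of pointed cones -/

section PointedCone

variable [LinearOrder 𝕜] [IsStrictOrderedRing 𝕜]
variable {v : ι → V} {l g : Dual 𝕜 V} {I A B F a b e : Finset ι} {i : ι} {r : ℕ}

lemma exists_forall_pos_add_mul {κ : Type*} (s : Finset κ) (f h : κ → 𝕜)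
    (hs : ∀ j ∈ s, 0 < h j) : ∃ C : 𝕜, ∀ j ∈ s, 0 < f j + C * h j := by
  obtain ⟨C, hC⟩ := (s.finite_toSet.image fun j => -f j / h j).bddAbove
  refine ⟨C + 1, fun j hj => ?_⟩
  have hle : -f j / h j ≤ C := hC ⟨j, hj, rfl⟩
  rw [div_le_iff₀ (hs j hj)] at hle
  linarith [hs j hj]

lemma exists_dual_pos_of_notMem {W : Submodule 𝕜 V} {x : V} (hx : x ∉ W) :
    ∃ g : Dual 𝕜 V, W ≤ g.ker ∧ 0 < g x := by
  obtain ⟨f, hf, hW⟩ := Submodule.exists_le_ker_of_notMem hx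
  rcases hf.lt_or_gt with h | h
  · exact ⟨-f, fun y hy => by simpa using hW hy, by simpa using h⟩
  · exact ⟨f, hW, h⟩

lemma IsFace.trans (hB : IsFace 𝕜 v I B) (hA : IsFace 𝕜 v B A) : IsFace 𝕜 v I A := by
  classical
  obtain ⟨m, hm⟩ := hB
  obtain ⟨l, hl⟩ := hA
  obtain ⟨C, hC⟩ := exists_forall_pos_add_mul (I \ B) (fun i => l (v i)) (fun i => m (v i))
    fun i hi => hm.pos (Finset.mem_sdiff.1 hi).1 (Finset.mem_sdiff.1 hi).2
  have hB (i) (hi : i ∈ B) : (l + C • m) (v i) = l (v i) := by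
    simp [(hm.eq_zero_iff i (hm.subset hi)).2 hi]
  have hI (i) (hi : i ∈ I) (hiB : i ∉ B) : 0 < (l + C • m) (v i) := by
    simpa using hC i (Finset.mem_sdiff.2 ⟨hi, hiB⟩)
  refine ⟨l + C • m, hl.subset.trans hm.subset, fun i hi => ?_, fun i hi => ?_⟩
  · by_cases hiB : i ∈ B
    · exact (hl.nonneg i hiB).trans_eq (hB i hiB).symm
    · exact (hI i hi hiB).le
  · by_cases hiB : i ∈ B
    · rw [hB i hiB, hl.eq_zero_iff i hiB]
    · exact iff_of_false (hI i hi hiB).ne' fun hiA => hiB (hl.subset hiA)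

lemma IsFace.trans_isFaceOfRank (hB : IsFace 𝕜 v I B) (hA : IsFaceOfRank 𝕜 v B r A) :
    IsFaceOfRank 𝕜 v I r A :=
  ⟨hB.trans hA.isFace, hA.rank_eq⟩

/-- The face found here is where the ratio `g / l` is largest. -/
lemma IsPositiveOn.exists_cutsOut_smul_sub (hl : IsPositiveOn v l I) (hi : i ∈ I)
    (hg : 0 < g (v i)) :
    ∃ (t : 𝕜) (T : Finset ι), CutsOut v (t • l - g) I T ∧ IsPositiveOn v g T ∧ 0 < rank 𝕜 v T := by
  classical
  have hne {j} (hj : 0 < g (v j)) : v j ≠ 0 := fun h => by simp [h] at hj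
  obtain ⟨k, hk, hmax⟩ := Finset.exists_max_image {j ∈ I | v j ≠ 0}
    (fun j => g (v j) / l (v j)) ⟨i, Finset.mem_filter.2 ⟨hi, hne hg⟩⟩
  obtain ⟨hkI, hk0⟩ := Finset.mem_filter.1 hk
  set t := g (v k) / l (v k) with ht
  have ht_pos : 0 < t := (div_pos hg (hl i hi (hne hg))).trans_le
    (hmax i (Finset.mem_filter.2 ⟨hi, hne hg⟩))
  have hcut : CutsOut v (t • l - g) I {j ∈ I | (t • l - g) (v j) = 0} := by
    refine ⟨Finset.filter_subset _ _, fun j hj => ?_, fun j hj => ?_⟩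
    · by_cases h0 : v j = 0
      · simp [h0]
      · have hle := hmax j (Finset.mem_filter.2 ⟨hj, h0⟩)
        rw [div_le_iff₀ (hl j hj h0)] at hle
        simpa using hle
    · exact ⟨fun h => Finset.mem_filter.2 ⟨hj, h⟩, fun h => (Finset.mem_filter.1 h).2⟩
  refine ⟨t, _, hcut, fun j hj h0 => ?_, rank_pos (i := k) (Finset.mem_filter.2 ⟨hkI, ?_⟩) hk0⟩
  · have hzero := (Finset.mem_filter.1 hj).2
    simp only [LinearMap.sub_apply, LinearMap.smul_apply, smul_eq_mul, sub_eq_zero] at hzero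
    exact hzero ▸ mul_pos ht_pos (hl j (hcut.subset hj) h0)
  · simp [ht, (hl k hkI hk0).ne']

lemma IsFace.exists_ssuperset_notMem (hB : IsFace 𝕜 v I B) (hi : i ∈ I) (hiB : i ∉ B)
    (hr : rank 𝕜 v B + 2 ≤ rank 𝕜 v I) : ∃ T, IsFace 𝕜 v I T ∧ B ⊂ T ∧ i ∉ T := by
  have hrank := rank_contract_add (𝕜 := 𝕜) (v := v) hB.subset
  have hne : contract 𝕜 v B i ≠ 0 := fun h =>
    hiB (hB.mem_of_mem_spanOf hi (contract_eq_zero_iff.1 h))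
  obtain ⟨j, hj, hjW⟩ : ∃ j ∈ I, contract 𝕜 v B j ∉ Submodule.span 𝕜 {contract 𝕜 v B i} :=
    exists_notMem_of_finrank_lt <| (finrank_span_singleton hne).trans_lt (by lia)
  obtain ⟨g, hgi, hgj⟩ := exists_dual_pos_of_notMem hjW
  obtain ⟨l, hl⟩ := hB.pointed_contract
  obtain ⟨t, T, hT, hgT, hT0⟩ := hl.exists_cutsOut_smul_sub hj hgj
  obtain ⟨hTI, hBT⟩ := (IsFace.contract_iff hB.subset).1 ⟨_, hT⟩
  refine ⟨T, hTI, hBT.ssubset_of_ne ?_, fun hiT => ?_⟩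
  · rintro rfl
    have := rank_contract_add (𝕜 := 𝕜) (v := v) (subset_refl B)
    lia
  · exact (hgT i hiT hne).ne' (hgi (Submodule.mem_span_singleton_self _))

lemma Pointed.exists_facet_notMem (hp : Pointed 𝕜 v I) (hi : i ∈ I) (h0 : v i ≠ 0) :
    ∃ B, IsFace 𝕜 v I B ∧ rank 𝕜 v B + 1 = rank 𝕜 v I ∧ i ∉ B := by
  classical
  have hfin : {B | IsFace 𝕜 v I B ∧ i ∉ B}.Finite :=
    I.powerset.finite_toSet.subset fun B hB => Finset.mem_powerset.2 hB.1.subset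
  obtain ⟨B, ⟨hB, hiB⟩, hmax⟩ := hfin.exists_maximal
    ⟨_, hp.isFaceOfRank_zero.isFace, fun hi0 => h0 (Finset.mem_filter.1 hi0).2⟩
  have hlt := hB.rank_lt_of_ssubset subset_rfl
    (hB.subset.ssubset_of_ne fun h => hiB (h ▸ hi))
  refine ⟨B, hB, le_antisymm hlt ?_, hiB⟩
  by_contra! hr
  obtain ⟨T, hT, hBT, hiT⟩ := hB.exists_ssuperset_notMem hi hiB hr
  exact hBT.not_subset (hmax ⟨hT, hiT⟩ hBT.subset)

lemma Pointed.exists_vertex (hp : Pointed 𝕜 v I) (hI : 0 < rank 𝕜 v I) :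
    ∃ a, IsFaceOfRank 𝕜 v I 1 a := by
  induction h : rank 𝕜 v I using Nat.strong_induction_on generalizing I with
  | _ n ih =>
    rcases (show n = 1 ∨ 1 < n by lia) with rfl | hn
    · exact ⟨I, .refl, h⟩
    obtain ⟨i, hi, h0⟩ := exists_ne_zero_of_rank_pos hI
    obtain ⟨B, hB, hr, -⟩ := hp.exists_facet_notMem hi h0
    obtain ⟨a, ha⟩ := ih _ (by lia) (hp.mono hB.subset) (by lia) rfl
    exact ⟨a, hB.trans_isFaceOfRank ha⟩

lemma Pointed.exists_vertex_isPositiveOn (hp : Pointed 𝕜 v I) (hi : i ∈ I) (hg : 0 < g (v i)) :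
    ∃ a, IsFaceOfRank 𝕜 v I 1 a ∧ IsPositiveOn v g a := by
  obtain ⟨l, hl⟩ := id hp
  obtain ⟨t, T, hT, hgT, hT0⟩ := hl.exists_cutsOut_smul_sub hi hg
  obtain ⟨a, ha⟩ := (hp.mono hT.subset).exists_vertex hT0
  exact ⟨a, IsFace.trans_isFaceOfRank ⟨_, hT⟩ ha, fun j hj => hgT j (ha.subset hj)⟩

lemma Pointed.exists_vertex_not_spanOf_le (hp : Pointed 𝕜 v I) {W : Submodule 𝕜 V}
    (hF : IsFace 𝕜 v I F) (hW : ¬ spanOf 𝕜 v F ≤ W) :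
    ∃ a, IsFaceOfRank 𝕜 v I 1 a ∧ a ⊆ F ∧ ¬ spanOf 𝕜 v a ≤ W := by
  simp only [spanOf_le, not_forall] at hW
  obtain ⟨i, hi, hiW⟩ := hW
  obtain ⟨g, hgW, hgi⟩ := exists_dual_pos_of_notMem hiW
  obtain ⟨a, ha, hga⟩ := (hp.mono hF.subset).exists_vertex_isPositiveOn hi hgi
  refine ⟨a, hF.trans_isFaceOfRank ha, ha.subset, fun haW => ?_⟩
  obtain ⟨j, hj, hj0⟩ := ha.exists_ne_zero one_pos
  exact (hga j hj hj0).ne' (hgW (haW (mem_spanOf hj)))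

lemma Pointed.isPositiveOn_vertex (hp : Pointed 𝕜 v I) (ha : IsFaceOfRank 𝕜 v I 1 a)
    (hi : i ∈ a) (hg : 0 < g (v i)) : IsPositiveOn v g a := by
  obtain ⟨l, hl⟩ := hp
  have hi0 : v i ≠ 0 := fun h => by simp [h] at hg
  intro j hj hj0
  obtain ⟨c, hc⟩ : ∃ c : 𝕜, c • v i = v j := by
    rw [← Submodule.mem_span_singleton, ← spanOf_eq_span_singleton ha.rank_eq hi hi0]
    exact mem_spanOf hj
  have hlj := hl j (ha.subset hj) hj0
  rw [← hc, map_smul, smul_eq_mul] at hlj ⊢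
  exact mul_pos (pos_of_mul_pos_left hlj (hl i (ha.subset hi) hi0).le) hg

/-- The geometric form of a step of the simplex method: from a vertex that does not maximize `g`
some edge leads to a vertex with a larger value. -/
lemma Pointed.exists_edge_isPositiveOn (hp : Pointed 𝕜 v I) (ha : IsFaceOfRank 𝕜 v I 1 a)
    (hga : spanOf 𝕜 v a ≤ g.ker) (hi : i ∈ I) (hg : 0 < g (v i)) :
    ∃ e b, IsFaceOfRank 𝕜 v I 2 e ∧ a ⊆ e ∧ b ⊆ e ∧ IsFaceOfRank 𝕜 v I 1 b ∧
      IsPositiveOn v g b := by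
  obtain ⟨e, he, hge⟩ := ha.isFace.pointed_contract.exists_vertex_isPositiveOn
    (g := (spanOf 𝕜 v a).liftQ g hga) hi hg
  obtain ⟨k, hk, hk0⟩ := he.exists_ne_zero one_pos
  obtain ⟨he, hae⟩ := ha.contract_iff.1 he
  obtain ⟨b, hb, hgb⟩ := (hp.mono he.subset).exists_vertex_isPositiveOn hk (hge k hk hk0)
  exact ⟨e, b, he, hae, hb.subset, he.isFace.trans_isFaceOfRank hb, hgb⟩

end PointedCone

/-! ### Deleting faces: Balinski's theorem -/

section Graph

variable [LinearOrder 𝕜] {v : ι → V} {I F G H A : Finset ι} {r s : ℕ} {U : Set (Finset ι)}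

variable (𝕜) in
/-- The faces of rank `r` that remain when the faces in `U` are deleted. -/
def survivors (v : ι → V) (I : Finset ι) (r : ℕ) (U : Set (Finset ι)) : Set (Finset ι) :=
  {F | IsFaceOfRank 𝕜 v I r F ∧ F ∉ U}

variable (𝕜) in
/-- The graph obtained by deleting the faces in `U` from the graph whose nodes are the faces of
rank `r`, two of them being adjacent if they lie in a common face of rank `r + 1`. To avoid
subtypes every set of labels is a node; those outside `survivors 𝕜 v I r U` are isolated. -/
def avoidingGraph (v : ι → V) (I : Finset ι) (r : ℕ) (U : Set (Finset ι)) :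
    SimpleGraph (Finset ι) where
  Adj F G := F ≠ G ∧ F ∈ survivors 𝕜 v I r U ∧ G ∈ survivors 𝕜 v I r U ∧
    ∃ H, IsFaceOfRank 𝕜 v I (r + 1) H ∧ F ⊆ H ∧ G ⊆ H
  symm := ⟨fun _ _ ⟨hne, hF, hG, H, hH, hFH, hGH⟩ => ⟨hne.symm, hG, hF, H, hH, hGH, hFH⟩⟩
  loopless := ⟨fun _ h => h.1 rfl⟩

variable (𝕜) in
/-- Deleting fewer than `m` faces of rank `r` does not disconnect the graph of such faces. -/
def FacesConnected (v : ι → V) (I : Finset ι) (r m : ℕ) : Prop :=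
  ∀ U : Finset (Finset ι), (∀ F ∈ U, IsFaceOfRank 𝕜 v I r F) → U.card < m →
    ∀ F ∈ survivors 𝕜 v I r U, ∀ G ∈ survivors 𝕜 v I r U,
      (avoidingGraph 𝕜 v I r U).Reachable F G

lemma reachable_of_subset (hF : F ∈ survivors 𝕜 v I r U) (hG : G ∈ survivors 𝕜 v I r U)
    (hH : IsFaceOfRank 𝕜 v I (r + 1) H) (hFH : F ⊆ H) (hGH : G ⊆ H) :
    (avoidingGraph 𝕜 v I r U).Reachable F G := by
  rcases eq_or_ne F G with rfl | hne
  · exact .rfl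
  · exact SimpleGraph.Adj.reachable ⟨hne, hF, hG, H, hH, hFH, hGH⟩

lemma avoidingGraph_anti {U' : Set (Finset ι)}
    (h : survivors 𝕜 v I r U ⊆ survivors 𝕜 v I r U') :
    avoidingGraph 𝕜 v I r U ≤ avoidingGraph 𝕜 v I r U' :=
  fun _ _ ⟨hne, hF, hG, hH⟩ => ⟨hne, h hF, h hG, hH⟩

lemma IsFaceOfRank.avoidingGraph_contract_le (hA : IsFaceOfRank 𝕜 v I s A)
    {U' : Set (Finset ι)} (hU : ∀ F ∈ U, A ⊆ F → F ∈ U') :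
    avoidingGraph 𝕜 (contract 𝕜 v A) I r U' ≤ avoidingGraph 𝕜 v I (r + s) U := by
  have hsurv {F} (hF : F ∈ survivors 𝕜 (contract 𝕜 v A) I r U') :
      F ∈ survivors 𝕜 v I (r + s) U :=
    have ⟨hF', hAF⟩ := hA.contract_iff.1 hF.1
    ⟨hF', fun hFU => hF.2 (hU F hFU hAF)⟩
  rintro F G ⟨hne, hF, hG, H, hH, hFH, hGH⟩
  exact ⟨hne, hsurv hF, hsurv hG, H, by
    simpa only [Nat.add_right_comm] using (hA.contract_iff.1 hH).1, hFH, hGH⟩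

end Graph

section Balinski

variable [LinearOrder 𝕜] [IsStrictOrderedRing 𝕜]
variable {v : ι → V} {l g m : Dual 𝕜 V} {t : 𝕜} {I B a b : Finset ι} {r : ℕ} {U : Set (Finset ι)}

lemma IsFace.avoidingGraph_le (hB : IsFace 𝕜 v I B) :
    avoidingGraph 𝕜 v B r U ≤ avoidingGraph 𝕜 v I r U :=
  fun _ _ ⟨hne, hF, hG, H, hH, hHF⟩ => ⟨hne, ⟨hB.trans_isFaceOfRank hF.1, hF.2⟩,
    ⟨hB.trans_isFaceOfRank hG.1, hG.2⟩, H, hB.trans_isFaceOfRank hH, hHF⟩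

/-- A step of the simplex method for minimizing the ratio `m / l`. -/
lemma IsPositiveOn.exists_edge_div_lt (hl : IsPositiveOn v l I) (hm : CutsOut v m I B)
    (hB : 0 < rank 𝕜 v B) (hb : IsFaceOfRank 𝕜 v I 1 b) {i : ι} (hib : i ∈ b) (hi0 : v i ≠ 0)
    (hiB : i ∉ B) :
    ∃ e c, IsFaceOfRank 𝕜 v I 2 e ∧ b ⊆ e ∧ c ⊆ e ∧ IsFaceOfRank 𝕜 v I 1 c ∧
      IsPositiveOn v ((m (v i) / l (v i)) • l - m) c := by
  have hli := hl i (hb.subset hib) hi0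
  have hρ_pos : 0 < m (v i) / l (v i) := div_pos (hm.pos (hb.subset hib) hiB) hli
  have hker : spanOf 𝕜 v b ≤ ((m (v i) / l (v i)) • l - m).ker := by
    rw [spanOf_eq_span_singleton hb.rank_eq hib hi0, Submodule.span_singleton_le_iff_mem]
    simp [hli.ne']
  obtain ⟨k, hk, hk0⟩ := exists_ne_zero_of_rank_pos hB
  have hkI := hm.subset hk
  refine Pointed.exists_edge_isPositiveOn ⟨l, hl⟩ hb hker hkI ?_
  simpa [(hm.eq_zero_iff k hkI).2 hk] using mul_pos hρ_pos (hl k hkI hk0)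

/-- Among the generators of the vertices that can be reached while `m / l < t`, one with the
smallest ratio lies in the face where `m` vanishes. -/
lemma IsPositiveOn.exists_reachable_subset (hl : IsPositiveOn v l I) (hm : CutsOut v m I B)
    (hB : 0 < rank 𝕜 v B) (ha : IsFaceOfRank 𝕜 v I 1 a) (hta : IsPositiveOn v (t • l - m) a) :
    ∃ b, IsFaceOfRank 𝕜 v I 1 b ∧ b ⊆ B ∧
      (avoidingGraph 𝕜 v I 1 {c | ¬ IsPositiveOn v (t • l - m) c}).Reachable a b := by
  classical
  let Γ := avoidingGraph 𝕜 v I 1 {c | ¬ IsPositiveOn v (t • l - m) c}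
  let IsReached (i : ι) : Prop := v i ≠ 0 ∧ ∃ b, IsFaceOfRank 𝕜 v I 1 b ∧ i ∈ b ∧
    IsPositiveOn v (t • l - m) b ∧ Γ.Reachable a b
  obtain ⟨j, hj, hj0⟩ := ha.exists_ne_zero one_pos
  obtain ⟨i, hi, hmin⟩ := Finset.exists_min_image {i ∈ I | IsReached i}
    (fun i => m (v i) / l (v i))
    ⟨j, Finset.mem_filter.2 ⟨ha.subset hj, hj0, a, ha, hj, hta, .rfl⟩⟩
  obtain ⟨hiI, hi0, b, hb, hib, htb, hab⟩ := Finset.mem_filter.1 hi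
  refine ⟨b, hb, ?_, hab⟩
  by_cases hiB : i ∈ B
  · exact hb.vertex_subset_of_mem ⟨m, hm⟩ hib hi0 hiB
  exfalso
  obtain ⟨e, c, he, hbe, hce, hc, hρc⟩ := hl.exists_edge_div_lt hm hB hb hib hi0 hiB
  have hρt : m (v i) / l (v i) < t :=
    (div_lt_iff₀ (hl i hiI hi0)).2 (by simpa using htb i hib hi0)
  have htc : IsPositiveOn v (t • l - m) c := fun j hj hj0 => by
    have hlt := mul_lt_mul_of_pos_right hρt (hl j (hc.subset hj) hj0)
    have hpos := hρc j hj hj0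
    simp only [LinearMap.sub_apply, LinearMap.smul_apply, smul_eq_mul] at hpos ⊢
    linarith
  obtain ⟨j, hj, hj0⟩ := hc.exists_ne_zero one_pos
  have hle := hmin j <| Finset.mem_filter.2 ⟨hc.subset hj, hj0, c, hc, hj, htc,
    hab.trans (reachable_of_subset ⟨hb, not_not.2 htb⟩ ⟨hc, not_not.2 htc⟩ he hbe hce)⟩
  rw [le_div_iff₀ (hl j (hc.subset hj) hj0)] at hle
  exact hle.not_gt (by simpa using hρc j hj hj0)

lemma Pointed.vertices_reachable (hp : Pointed 𝕜 v I) (ha : IsFaceOfRank 𝕜 v I 1 a)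
    (hb : IsFaceOfRank 𝕜 v I 1 b) : (avoidingGraph 𝕜 v I 1 ∅).Reachable a b := by
  classical
  obtain ⟨l, hl⟩ := hp
  obtain ⟨m, hm⟩ := id hb.isFace
  obtain ⟨t, ht⟩ := exists_forall_pos_add_mul {i ∈ I | v i ≠ 0} (fun i => -m (v i))
    (fun i => l (v i)) fun i hi => hl i (Finset.mem_filter.1 hi).1 (Finset.mem_filter.1 hi).2
  have hta : IsPositiveOn v (t • l - m) a := fun i hi h0 => by
    simpa [neg_add_eq_sub] using ht i (Finset.mem_filter.2 ⟨ha.subset hi, h0⟩)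
  obtain ⟨c, hc, hcb, hac⟩ := hl.exists_reachable_subset hm (by simp [hb.rank_eq]) ha hta
  rw [hc.eq_of_subset hb hcb] at hac
  exact hac.mono (avoidingGraph_anti fun F hF => ⟨hF.1, id⟩)

lemma Pointed.reachable_of_isPositiveOn (hp : Pointed 𝕜 v I) (ha : IsFaceOfRank 𝕜 v I 1 a)
    (hb : IsFaceOfRank 𝕜 v I 1 b) (hga : IsPositiveOn v g a) (hgb : IsPositiveOn v g b) :
    (avoidingGraph 𝕜 v I 1 {c | ¬ IsPositiveOn v g c}).Reachable a b := by
  obtain ⟨i, hi, h0⟩ := ha.exists_ne_zero one_pos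
  obtain ⟨l, hl⟩ := id hp
  obtain ⟨t, T, hT, hgT, hT0⟩ := hl.exists_cutsOut_smul_sub (ha.subset hi) (hga i hi h0)
  obtain ⟨m, hm⟩ : ∃ m, m = t • l - g := ⟨_, rfl⟩
  obtain rfl : g = t • l - m := by rw [hm, sub_sub_cancel]
  rw [← hm] at hT
  have hTI : IsFace 𝕜 v I T := ⟨m, hT⟩
  obtain ⟨a', ha', haT, haa'⟩ := hl.exists_reachable_subset hT hT0 ha hga
  obtain ⟨b', hb', hbT, hbb'⟩ := hl.exists_reachable_subset hT hT0 hb hgb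
  have hab' := (hp.mono hT.subset).vertices_reachable
    (ha'.restrict haT hT.subset) (hb'.restrict hbT hT.subset)
  refine haa'.trans (.trans (hab'.mono ?_) hbb'.symm)
  exact (avoidingGraph_anti fun c hc =>
    ⟨hc.1, not_not.2 fun i hi => hgT i (hc.1.subset hi)⟩).trans hTI.avoidingGraph_le

/-- Climbing off the hyperplane `g = 0`, on which all deleted vertices lie, leads into the open
half-space `g > 0`, whose vertices are connected among themselves. -/
lemma Pointed.reachable_of_spanOf_le_ker (hp : Pointed 𝕜 v I)
    (hU : ∀ c ∈ U, spanOf 𝕜 v c ≤ g.ker) {i : ι} (hi : i ∈ I) (hg : 0 < g (v i))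
    (ha : a ∈ survivors 𝕜 v I 1 U) (hb : b ∈ survivors 𝕜 v I 1 U)
    (hga : spanOf 𝕜 v a ≤ g.ker) (hgb : spanOf 𝕜 v b ≤ g.ker ∨ IsPositiveOn v g b) :
    (avoidingGraph 𝕜 v I 1 U).Reachable a b := by
  have hpos {c} (hc : IsFaceOfRank 𝕜 v I 1 c) (hgc : IsPositiveOn v g c) :
      c ∈ survivors 𝕜 v I 1 U := by
    refine ⟨hc, fun hcU => ?_⟩
    obtain ⟨j, hj, h0⟩ := hc.exists_ne_zero one_pos
    exact (hgc j hj h0).ne' (hU c hcU (mem_spanOf hj))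
  have hclimb {c} (hc : c ∈ survivors 𝕜 v I 1 U) (hgc : spanOf 𝕜 v c ≤ g.ker) :
      ∃ d, IsFaceOfRank 𝕜 v I 1 d ∧ IsPositiveOn v g d ∧
        (avoidingGraph 𝕜 v I 1 U).Reachable c d := by
    obtain ⟨e, d, he, hce, hde, hd, hgd⟩ := hp.exists_edge_isPositiveOn hc.1 hgc hi hg
    exact ⟨d, hd, hgd, reachable_of_subset hc (hpos hd hgd) he hce hde⟩
  obtain ⟨a', ha', hga', haa'⟩ := hclimb ha hga
  obtain ⟨b', hb', hgb', hbb'⟩ : ∃ d, IsFaceOfRank 𝕜 v I 1 d ∧ IsPositiveOn v g d ∧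
      (avoidingGraph 𝕜 v I 1 U).Reachable b d :=
    hgb.elim (hclimb hb) fun h => ⟨b, hb.1, h, .rfl⟩
  have hab' := hp.reachable_of_isPositiveOn ha' hb' hga' hgb'
  refine haa'.trans (.trans (hab'.mono ?_) hbb'.symm)
  exact avoidingGraph_anti fun c hc => hpos hc.1 (not_not.1 hc.2)

/-- Balinski's theorem, in the strong form where any number of vertices may be deleted as long as
their span has codimension at least two. -/
theorem Pointed.reachable_of_rank_biUnion [DecidableEq ι] (hp : Pointed 𝕜 v I)
    {X : Finset (Finset ι)} (hX : rank 𝕜 v (X.biUnion id) + 2 ≤ rank 𝕜 v I)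
    (ha : a ∈ survivors 𝕜 v I 1 X) (hb : b ∈ survivors 𝕜 v I 1 X) :
    (avoidingGraph 𝕜 v I 1 X).Reachable a b := by
  have hrank := rank_union_le (𝕜 := 𝕜) (v := v) (A := X.biUnion id) (B := a)
  obtain ⟨j, hj, hjW⟩ : ∃ j ∈ I, v j ∉ spanOf 𝕜 v (X.biUnion id ∪ a) :=
    exists_notMem_of_finrank_lt <| hrank.trans_lt (by rw [ha.1.rank_eq]; lia)
  obtain ⟨g, hg, hgj⟩ := exists_dual_pos_of_notMem hjW
  have hgX (c) (hc : c ∈ (X : Set (Finset ι))) : spanOf 𝕜 v c ≤ g.ker :=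
    (spanOf_mono <| (Finset.subset_biUnion_of_mem id hc).trans Finset.subset_union_left).trans hg
  have hga : spanOf 𝕜 v a ≤ g.ker := (spanOf_mono Finset.subset_union_right).trans hg
  obtain ⟨i, hi, h0⟩ := hb.1.exists_ne_zero one_pos
  rcases lt_trichotomy (g (v i)) 0 with h | h | h
  · have hneg : 0 < (-g) (v i) := by simpa using h
    have hker : (-g).ker = g.ker := by ext; simp
    rw [← hker] at hga
    simp only [← hker] at hgX
    exact hp.reachable_of_spanOf_le_ker hgX (hb.1.subset hi) hneg ha hb hga
      (.inr (hp.isPositiveOn_vertex hb.1 hi hneg))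
  · refine hp.reachable_of_spanOf_le_ker hgX hj hgj ha hb hga (.inl ?_)
    rw [spanOf_eq_span_singleton hb.1.rank_eq hi h0, Submodule.span_singleton_le_iff_mem]
    exact h
  · exact hp.reachable_of_spanOf_le_ker hgX hj hgj ha hb hga
      (.inr (hp.isPositiveOn_vertex hb.1 hi h))

theorem Pointed.facesConnected_one (hp : Pointed 𝕜 v I) :
    FacesConnected 𝕜 v I 1 (rank 𝕜 v I - 1) := by
  classical
  intro X hX hcard a ha b hb
  have := rank_biUnion_le_card fun c hc => (hX c hc).rank_eq
  exact hp.reachable_of_rank_biUnion (by lia) ha hb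

end Balinski

/-! ### Counting faces -/

section Counting

variable [LinearOrder 𝕜] {v : ι → V} {I A B F a b e : Finset ι} {r s : ℕ} {U : Finset (Finset ι)}

open Classical in
variable (𝕜) in
/-- The faces of rank `r`, as a finite set. -/
noncomputable def faces (v : ι → V) (I : Finset ι) (r : ℕ) : Finset (Finset ι) :=
  {A ∈ I.powerset | IsFaceOfRank 𝕜 v I r A}

/-- The members of the family `U` of faces that contain the face `a`. -/
def facesThrough [DecidableEq ι] (U : Finset (Finset ι)) (a : Finset ι) : Finset (Finset ι) :=
  {F ∈ U | a ⊆ F}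

lemma mem_faces : A ∈ faces 𝕜 v I r ↔ IsFaceOfRank 𝕜 v I r A := by
  simpa [faces] using IsFaceOfRank.subset

section FacesThrough

variable [DecidableEq ι]

lemma mem_facesThrough : F ∈ facesThrough U a ↔ F ∈ U ∧ a ⊆ F :=
  Finset.mem_filter

lemma facesThrough_subset : facesThrough U a ⊆ U :=
  Finset.filter_subset _ _

lemma sum_card_facesThrough (S : Finset (Finset ι)) :
    ∑ a ∈ S, (facesThrough U a).card = ∑ F ∈ U, Finset.card {a ∈ S | a ⊆ F} := by
  simp only [facesThrough, Finset.card_filter]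
  exact Finset.sum_comm

lemma IsFaceOfRank.faces_contract (hA : IsFaceOfRank 𝕜 v I s A) :
    faces 𝕜 (contract 𝕜 v A) I r = facesThrough (faces 𝕜 v I (r + s)) A := by
  ext F
  rw [mem_faces, mem_facesThrough, mem_faces, hA.contract_iff]

end FacesThrough

lemma reachable_of_facesThrough [DecidableEq ι] {m : ℕ} (ha : IsFaceOfRank 𝕜 v I s a)
    (hlink : FacesConnected 𝕜 (contract 𝕜 v a) I r m)
    (hU : ∀ F ∈ U, IsFaceOfRank 𝕜 v I (r + s) F) (hm : (facesThrough U a).card < m)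
    (hA : A ∈ survivors 𝕜 v I (r + s) U) (hB : B ∈ survivors 𝕜 v I (r + s) U) (haA : a ⊆ A)
    (haB : a ⊆ B) : (avoidingGraph 𝕜 v I (r + s) U).Reachable A B := by
  refine (hlink (facesThrough U a) (fun F hF => ?_) hm A ⟨?_, ?_⟩ B ⟨?_, ?_⟩).mono
    (ha.avoidingGraph_contract_le fun F hF haF => mem_facesThrough.2 ⟨hF, haF⟩)
  · have hF := mem_facesThrough.1 hF
    exact ha.contract_iff.2 ⟨hU F hF.1, hF.2⟩
  · exact ha.contract_iff.2 ⟨hA.1, haA⟩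
  · exact fun h => hA.2 (facesThrough_subset h)
  · exact ha.contract_iff.2 ⟨hB.1, haB⟩
  · exact fun h => hB.2 (facesThrough_subset h)

/-- A face contains at most `r` members of a spanning set of `r + 1` vertices, except for the one
face spanned by it. -/
lemma sum_card_facesThrough_le [DecidableEq ι] {S : Finset (Finset ι)}
    (hU : ∀ F ∈ U, IsFaceOfRank 𝕜 v I (r + 1) F) (hcard : S.card ≤ r + 1)
    (hrank : r + 1 ≤ rank 𝕜 v (S.biUnion id)) :
    ∑ a ∈ S, (facesThrough U a).card ≤ r * U.card + 1 := by
  have hunique : (facesThrough U (S.biUnion id)).card ≤ 1 := by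
    refine Finset.card_le_one.2 fun A hA B hB => ?_
    rw [mem_facesThrough] at hA hB
    exact (hU A hA.1).eq_of_le_rank (hU B hB.1) hA.2 hB.2 hrank
  have hF (F) : Finset.card {a ∈ S | a ⊆ F} ≤ r + if S.biUnion id ⊆ F then 1 else 0 := by
    split_ifs with hSF
    · exact (Finset.card_filter_le _ _).trans hcard
    · refine Nat.le_of_lt_succ (lt_of_lt_of_le (Finset.card_lt_card ?_) hcard)
      refine Finset.filter_ssubset.2 ?_
      simpa [Finset.biUnion_subset] using hSF
  calc ∑ a ∈ S, (facesThrough U a).card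
      = ∑ F ∈ U, Finset.card {a ∈ S | a ⊆ F} := sum_card_facesThrough S
    _ ≤ ∑ F ∈ U, (r + if S.biUnion id ⊆ F then 1 else 0) := Finset.sum_le_sum fun F _ => hF F
    _ = r * U.card + (facesThrough U (S.biUnion id)).card := by
        rw [Finset.sum_add_distrib, Finset.sum_const, smul_eq_mul, mul_comm, ← Finset.card_filter,
          facesThrough]
    _ ≤ r * U.card + 1 := by gcongr

lemma rank_biUnion_le_of_le_card_facesThrough [DecidableEq ι] {X : Finset (Finset ι)} {m : ℕ}
    (hU : ∀ F ∈ U, IsFaceOfRank 𝕜 v I (r + 1) F) (hX : ∀ a ∈ X, rank 𝕜 v a = 1)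
    (hXU : ∀ a ∈ X, m ≤ (facesThrough U a).card) (hm : r * U.card + 1 < (r + 1) * m) :
    rank 𝕜 v (X.biUnion id) ≤ r := by
  by_contra! hlt
  obtain ⟨S, hSX, hcard, hrank⟩ := exists_subset_le_rank_biUnion hlt
  have hSrank := rank_biUnion_le_card fun a ha => hX a (hSX ha)
  have hsum := Finset.card_nsmul_le_sum S _ m fun a ha => hXU a (hSX ha)
  rw [show S.card = r + 1 by lia, smul_eq_mul] at hsum
  have := sum_card_facesThrough_le hU hcard hrank
  lia

variable [IsStrictOrderedRing 𝕜]

lemma Pointed.choose_le_card_faces (hp : Pointed 𝕜 v I) (r : ℕ) :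
    (rank 𝕜 v I).choose r ≤ (faces 𝕜 v I r).card := by
  classical
  induction hn : rank 𝕜 v I generalizing V v I r with
  | zero =>
    cases r with
    | zero => exact Finset.card_pos.2 ⟨_, mem_faces.2 hp.isFaceOfRank_zero⟩
    | succ r => simp
  | succ n ih =>
    cases r with
    | zero =>
      rw [Nat.choose_zero_right]
      exact Finset.card_pos.2 ⟨_, mem_faces.2 hp.isFaceOfRank_zero⟩
    | succ r =>
      obtain ⟨a, ha⟩ := hp.exists_vertex (by lia)
      obtain ⟨i, hia, h0⟩ := ha.exists_ne_zero one_pos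
      obtain ⟨B, hB, hBrank, hiB⟩ := hp.exists_facet_notMem (ha.subset hia) h0
      have hrank := rank_contract_add (𝕜 := 𝕜) (v := v) ha.subset
      rw [ha.rank_eq, hn] at hrank
      have ha_le := ih ha.isFace.pointed_contract r (Nat.succ_injective hrank)
      have hB_le := ih (hp.mono hB.subset) (r + 1) (by lia)
      rw [ha.faces_contract] at ha_le
      rw [Nat.choose_succ_succ]
      refine (add_le_add ha_le hB_le).trans ?_
      rw [← Finset.card_union_of_disjoint]
      · refine Finset.card_le_card (Finset.union_subset facesThrough_subset fun F hF => ?_)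
        exact mem_faces.2 (hB.trans_isFaceOfRank (mem_faces.1 hF))
      · refine Finset.disjoint_left.2 fun F haF hFB => hiB ?_
        exact (mem_faces.1 hFB).subset ((mem_facesThrough.1 haF).2 hia)

lemma IsFaceOfRank.choose_le_card_facesThrough [DecidableEq ι] (hA : IsFaceOfRank 𝕜 v I s A)
    (r : ℕ) : (rank 𝕜 v I - s).choose r ≤ (facesThrough (faces 𝕜 v I (r + s)) A).card := by
  have hrank := rank_contract_add (𝕜 := 𝕜) (v := v) hA.subset
  rw [hA.rank_eq] at hrank
  rw [← hA.faces_contract, ← hrank, Nat.add_sub_cancel]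
  exact hA.isFace.pointed_contract.choose_le_card_faces r

lemma IsFaceOfRank.exists_facet_not_subset {H : Finset ι} (hH : IsFaceOfRank 𝕜 v I (r + 1) H)
    (ha : IsFace 𝕜 v I a) (hb : IsFaceOfRank 𝕜 v I 1 b) (haH : a ⊆ H) (hbH : b ⊆ H)
    (hba : ¬ b ⊆ a) : ∃ F, IsFaceOfRank 𝕜 v I r F ∧ F ⊆ H ∧ a ⊆ F ∧ ¬ b ⊆ F := by
  obtain ⟨i, hi, -, hia⟩ := hb.exists_mem_ne_zero_notMem ha hba
  have haH' := ha.restrict haH hH.subset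
  obtain ⟨F, hF, hrank, hiF⟩ := haH'.pointed_contract.exists_facet_notMem (hbH hi)
    fun h => hia (haH'.mem_of_mem_spanOf (hbH hi) (contract_eq_zero_iff.1 h))
  obtain ⟨hF, haF⟩ := (IsFace.contract_iff haH).1 hF
  refine ⟨F, ⟨hH.isFace.trans hF, ?_⟩, hF.subset, haF, fun hbF => hiF (hbF hi)⟩
  have hFadd := rank_contract_add (𝕜 := 𝕜) (v := v) haF
  have hHadd := rank_contract_add (𝕜 := 𝕜) (v := v) haH
  rw [hH.rank_eq] at hHadd
  lia

end Counting

/-! ### Connecting faces along a path of vertices -/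

section Bridge

variable [LinearOrder 𝕜] {v : ι → V} {I F G a b e : Finset ι} {r : ℕ} {U : Finset (Finset ι)}

variable (𝕜) in
/-- Some two remaining faces of rank `r`, one containing `a` and the other containing `b`, are
joined by a path of remaining faces. -/
def Bridged (v : ι → V) (I : Finset ι) (r : ℕ) (U : Finset (Finset ι)) (a b : Finset ι) : Prop :=
  ∃ F ∈ survivors 𝕜 v I r U, ∃ G ∈ survivors 𝕜 v I r U,
    a ⊆ F ∧ b ⊆ G ∧ (avoidingGraph 𝕜 v I r U).Reachable F G

variable [IsStrictOrderedRing 𝕜]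

lemma Pointed.reachable_of_bridged [DecidableEq ι] (hp : Pointed 𝕜 v I) {X : Finset (Finset ι)}
    (hX : rank 𝕜 v (X.biUnion id) + 2 ≤ rank 𝕜 v I)
    (hlink : ∀ a ∈ survivors 𝕜 v I 1 X, ∀ F ∈ survivors 𝕜 v I r U, ∀ G ∈ survivors 𝕜 v I r U,
      a ⊆ F → a ⊆ G → (avoidingGraph 𝕜 v I r U).Reachable F G)
    (hbridge : ∀ a b, (avoidingGraph 𝕜 v I 1 X).Adj a b → Bridged 𝕜 v I r U a b)
    (ha : a ∈ survivors 𝕜 v I 1 X) (hb : b ∈ survivors 𝕜 v I 1 X)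
    (hF : F ∈ survivors 𝕜 v I r U) (hG : G ∈ survivors 𝕜 v I r U) (haF : a ⊆ F) (hbG : b ⊆ G) :
    (avoidingGraph 𝕜 v I r U).Reachable F G := by
  obtain ⟨p⟩ := hp.reachable_of_rank_biUnion hX ha hb
  induction p generalizing F with
  | nil => exact hlink _ ha F hF G hG haF hbG
  | cons hadj _ ih =>
    obtain ⟨F', hF', G', hG', haF', hcG', hreach⟩ := hbridge _ _ hadj
    exact (hlink _ ha F hF F' hF' haF haF').trans
      (hreach.trans (ih hadj.2.2.1 hb hG' hcG' hbG))

variable [DecidableEq ι]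

lemma choose_le_card_facesThrough_edge (he : IsFaceOfRank 𝕜 v I 2 e) (hae : a ⊆ e) (hbe : b ⊆ e)
    (hab : ¬ Bridged 𝕜 v I (r + 2) U a b) :
    (rank 𝕜 v I - 2).choose r ≤ (facesThrough U e).card := by
  refine (he.choose_le_card_facesThrough r).trans (Finset.card_le_card fun F hF => ?_)
  rw [mem_facesThrough, mem_faces] at hF
  refine mem_facesThrough.2 ⟨?_, hF.2⟩
  by_contra hFU
  exact hab ⟨F, ⟨hF.1, hFU⟩, F, ⟨hF.1, hFU⟩, hae.trans hF.2, hbe.trans hF.2, .rfl⟩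

/-- Every face of rank `r + 3` through the edge has a facet missing `b` and one missing `a`. They
are adjacent, so one of them is deleted, and together with the edge it spans the face. -/
lemma choose_le_card_facesThrough_sdiff (ha : IsFaceOfRank 𝕜 v I 1 a)
    (hb : IsFaceOfRank 𝕜 v I 1 b) (hne : a ≠ b) (he : IsFaceOfRank 𝕜 v I 2 e) (hae : a ⊆ e)
    (hbe : b ⊆ e) (hab : ¬ Bridged 𝕜 v I (r + 2) U a b) :
    (rank 𝕜 v I - 2).choose (r + 1) ≤
      ((facesThrough U a ∪ facesThrough U b) \ facesThrough U e).card := by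
  have hdeleted (H) (hH : H ∈ facesThrough (faces 𝕜 v I (r + 3)) e) :
      ∃ F ∈ (facesThrough U a ∪ facesThrough U b) \ facesThrough U e,
        IsFaceOfRank 𝕜 v I (r + 2) F ∧ F ⊆ H ∧ ¬ e ⊆ F := by
    rw [mem_facesThrough, mem_faces] at hH
    obtain ⟨hH, heH⟩ := hH
    obtain ⟨F, hF, hFH, haF, hbF⟩ := hH.exists_facet_not_subset ha.isFace hb (hae.trans heH)
      (hbe.trans heH) fun h => hne (hb.eq_of_subset ha h).symm
    obtain ⟨G, hG, hGH, hbG, haG⟩ := hH.exists_facet_not_subset hb.isFace ha (hbe.trans heH)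
      (hae.trans heH) fun h => hne (ha.eq_of_subset hb h)
    simp only [Finset.mem_sdiff, Finset.mem_union, mem_facesThrough]
    by_cases hFU : F ∈ U
    · have heF : ¬ e ⊆ F := fun h => hbF (hbe.trans h)
      exact ⟨F, ⟨.inl ⟨hFU, haF⟩, fun h => heF h.2⟩, hF, hFH, heF⟩
    by_cases hGU : G ∈ U
    · have heG : ¬ e ⊆ G := fun h => haG (hae.trans h)
      exact ⟨G, ⟨.inr ⟨hGU, hbG⟩, fun h => heG h.2⟩, hG, hGH, heG⟩
    exact absurd ⟨F, ⟨hF, hFU⟩, G, ⟨hG, hGU⟩, haF, hbG,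
      reachable_of_subset ⟨hF, hFU⟩ ⟨hG, hGU⟩ hH hFH hGH⟩ hab
  choose! f hf using hdeleted
  refine (he.choose_le_card_facesThrough (r + 1)).trans
    (Finset.card_le_card_of_injOn f (fun H hH => (hf H hH).1) fun H hH H' hH' hHH' => ?_)
  obtain ⟨-, hF, hFH, heF⟩ := hf H hH
  have hFH' := (hf H' hH').2.2.1
  rw [← hHH'] at hFH'
  rw [Finset.mem_coe, mem_facesThrough, mem_faces] at hH hH'
  have hlt := hF.isFace.rank_lt_of_ssubset (Finset.union_subset hF.subset he.subset)
    (Finset.subset_union_left.ssubset_of_ne fun h => heF (Finset.union_eq_left.1 h.symm))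
  rw [hF.rank_eq] at hlt
  exact hH.1.eq_of_le_rank hH'.1 (Finset.union_subset hFH hH.2) (Finset.union_subset hFH' hH'.2) hlt

lemma choose_le_card_facesThrough_union (hr : r + 2 < rank 𝕜 v I) (ha : IsFaceOfRank 𝕜 v I 1 a)
    (hb : IsFaceOfRank 𝕜 v I 1 b) (hne : a ≠ b) (he : IsFaceOfRank 𝕜 v I 2 e) (hae : a ⊆ e)
    (hbe : b ⊆ e) (hab : ¬ Bridged 𝕜 v I (r + 2) U a b) :
    (rank 𝕜 v I - 1).choose (r + 1) ≤ (facesThrough U a ∪ facesThrough U b).card := by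
  have hsub : facesThrough U e ⊆ facesThrough U a ∪ facesThrough U b := fun F hF => by
    rw [mem_facesThrough] at hF
    exact Finset.mem_union_left _ (mem_facesThrough.2 ⟨hF.1, hae.trans hF.2⟩)
  rw [show rank 𝕜 v I - 1 = rank 𝕜 v I - 2 + 1 by lia, Nat.choose_succ_succ,
    ← Finset.card_sdiff_add_card_eq_card hsub, add_comm]
  exact add_le_add (choose_le_card_facesThrough_sdiff ha hb hne he hae hbe hab)
    (choose_le_card_facesThrough_edge he hae hbe hab)

end Bridge

/-! ### Deleting edges -/

section Edge

variable [LinearOrder 𝕜] {v : ι → V} {I F a b c d e y : Finset ι} {m r : ℕ}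
variable {T U X : Finset (Finset ι)}

lemma IsFaceOfRank.eq_of_vertices_subset (he : IsFaceOfRank 𝕜 v I 2 e)
    (hd : IsFaceOfRank 𝕜 v I 2 d) (ha : IsFaceOfRank 𝕜 v I 1 a) (hb : IsFaceOfRank 𝕜 v I 1 b)
    (hab : a ≠ b) (hae : a ⊆ e) (hbe : b ⊆ e) (had : a ⊆ d) (hbd : b ⊆ d) : e = d := by
  classical
  exact he.eq_of_le_rank hd (Finset.union_subset hae hbe) (Finset.union_subset had hbd)
    (ha.two_le_rank_union hb hab)

section Ordered

variable [IsStrictOrderedRing 𝕜]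

lemma Pointed.exists_vertex_ne (hp : Pointed 𝕜 v I) (ha : IsFaceOfRank 𝕜 v I 1 a)
    (hF : IsFaceOfRank 𝕜 v I r F) (hr : 1 < r) : ∃ b, IsFaceOfRank 𝕜 v I 1 b ∧ b ⊆ F ∧ b ≠ a := by
  obtain ⟨b, hb, hbF, hba⟩ := hp.exists_vertex_not_spanOf_le hF.isFace (W := spanOf 𝕜 v a)
    fun h => by
      have hle := Submodule.finrank_mono h
      have := ha.rank_eq
      have := hF.rank_eq
      unfold rank at *
      lia
  exact ⟨b, hb, hbF, fun h => hba (h ▸ le_rfl)⟩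

/-- A third vector in the span of two others would be a positive combination of them, because the
functionals cutting out the two vertices are positive on it; the functional cutting out the third
vertex excludes that. -/
lemma IsFaceOfRank.eq_or_eq_of_subset_edge (he : IsFaceOfRank 𝕜 v I 2 e)
    (ha : IsFaceOfRank 𝕜 v I 1 a) (hb : IsFaceOfRank 𝕜 v I 1 b) (hab : a ≠ b)
    (hc : IsFaceOfRank 𝕜 v I 1 c) (hae : a ⊆ e) (hbe : b ⊆ e) (hce : c ⊆ e) : c = a ∨ c = b := by
  classical
  by_contra! hcab
  have hnotMem {x y i} (hx : IsFaceOfRank 𝕜 v I 1 x) (hy : IsFaceOfRank 𝕜 v I 1 y) (hxy : x ≠ y)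
      (hi : i ∈ x) (h0 : v i ≠ 0) : i ∉ y := fun hiy =>
    hxy (hx.eq_of_subset hy (hx.vertex_subset_of_mem hy.isFace hi h0 hiy))
  obtain ⟨i, hi, hi0⟩ := ha.exists_ne_zero one_pos
  obtain ⟨j, hj, hj0⟩ := hb.exists_ne_zero one_pos
  obtain ⟨k, hk, hk0⟩ := hc.exists_ne_zero one_pos
  have hspan : spanOf 𝕜 v (a ∪ b) = spanOf 𝕜 v e :=
    Submodule.eq_of_le_of_finrank_le (spanOf_mono (Finset.union_subset hae hbe))
      (he.rank_eq.trans_le (ha.two_le_rank_union hb hab))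
  obtain ⟨s, t, hst⟩ : ∃ s t : 𝕜, s • v i + t • v j = v k := by
    rw [← Submodule.mem_span_pair, Submodule.span_insert,
      ← spanOf_eq_span_singleton ha.rank_eq hi hi0, ← spanOf_eq_span_singleton hb.rank_eq hj hj0,
      ← spanOf_union, hspan]
    exact mem_spanOf (hce hk)
  obtain ⟨la, hla⟩ := id ha.isFace
  obtain ⟨lb, hlb⟩ := id hb.isFace
  obtain ⟨lc, hlc⟩ := id hc.isFace
  have hak := hla.pos (hc.subset hk) (hnotMem hc ha hcab.1 hk hk0)
  have hbk := hlb.pos (hc.subset hk) (hnotMem hc hb hcab.2 hk hk0)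
  have hck := (hlc.eq_zero_iff k (hc.subset hk)).2 hk
  have hai := (hla.eq_zero_iff i (ha.subset hi)).2 hi
  have hbj := (hlb.eq_zero_iff j (hb.subset hj)).2 hj
  simp only [← hst, map_add, map_smul, smul_eq_mul, hai, hbj, mul_zero, zero_add,
    add_zero] at hak hbk hck
  have ht := pos_of_mul_pos_left hak (hla.nonneg j (hb.subset hj))
  have hs := pos_of_mul_pos_left hbk (hlb.nonneg i (ha.subset hi))
  have hci := hlc.pos (ha.subset hi) (hnotMem ha hc hcab.1.symm hi hi0)
  have hcj := hlc.pos (hb.subset hj) (hnotMem hb hc hcab.2.symm hj hj0)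
  exact (add_pos (mul_pos hs hci) (mul_pos ht hcj)).ne' hck

end Ordered

/-- The edges in `U` leaving the set of vertices `T` at `y`. -/
def leavingEdges [DecidableEq ι] (U T : Finset (Finset ι)) (y : Finset ι) : Finset (Finset ι) :=
  {e ∈ facesThrough U y | ∀ a ∈ T, a ⊆ e → a = y}

variable [DecidableEq ι]

lemma card_mul_add_card_biUnion_le {Y B : Finset (Finset ι)} {l : ℕ} (hYT : Y ⊆ T) (hBT : B ⊆ T)
    (hYB : Disjoint Y B) (hY : ∀ y ∈ Y, l ≤ (leavingEdges U T y).card) :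
    Y.card * l + (B.biUnion (facesThrough U)).card ≤ U.card := by
  have hleave {y e} (he : e ∈ leavingEdges U T y) :
      (e ∈ U ∧ y ⊆ e) ∧ ∀ a ∈ T, a ⊆ e → a = y := by
    simpa only [leavingEdges, Finset.mem_filter, mem_facesThrough] using he
  have hdisj : (Y : Set (Finset ι)).PairwiseDisjoint (leavingEdges U T) :=
    fun y hy z _ hyz => Finset.disjoint_left.2 fun e hey hez =>
      hyz ((hleave hez).2 y (hYT hy) (hleave hey).1.2)
  have hstar : Disjoint (Y.biUnion (leavingEdges U T)) (B.biUnion (facesThrough U)) := by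
    simp only [Finset.disjoint_biUnion_left, Finset.disjoint_biUnion_right]
    refine fun b hb y hy => Finset.disjoint_left.2 fun e hey heb => ?_
    obtain rfl := (hleave hey).2 b (hBT hb) (mem_facesThrough.1 heb).2
    exact Finset.disjoint_left.1 hYB hy hb
  calc Y.card * l + (B.biUnion (facesThrough U)).card
      ≤ (Y.biUnion (leavingEdges U T)).card + (B.biUnion (facesThrough U)).card := by
        rw [Finset.card_biUnion hdisj, ← smul_eq_mul]
        gcongr
        exact Finset.card_nsmul_le_sum _ _ _ hY
    _ = (Y.biUnion (leavingEdges U T) ∪ B.biUnion (facesThrough U)).card :=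
        (Finset.card_union_of_disjoint hstar).symm
    _ ≤ U.card := Finset.card_le_card <| Finset.union_subset
        (Finset.biUnion_subset.2 fun _ _ => (Finset.filter_subset _ _).trans facesThrough_subset)
        (Finset.biUnion_subset.2 fun _ _ => facesThrough_subset)

lemma card_inter_facesThrough_le_one (hU : ∀ F ∈ U, IsFaceOfRank 𝕜 v I 2 F)
    (ha : IsFaceOfRank 𝕜 v I 1 a) (hb : IsFaceOfRank 𝕜 v I 1 b) (hab : a ≠ b) :
    (facesThrough U a ∩ facesThrough U b).card ≤ 1 := by
  simp only [Finset.card_le_one, Finset.mem_inter, mem_facesThrough]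
  exact fun e he d hd => (hU e he.1.1).eq_of_vertices_subset (hU d hd.1.1) ha hb hab he.1.2 he.2.2
    hd.1.2 hd.2.2

lemma two_mul_le_card_biUnion_add_card_inter {B : Finset (Finset ι)}
    (hBU : ∀ c ∈ B, m ≤ (facesThrough U c).card) (ha : a ∈ B) (hb : b ∈ B) : 2 * m ≤
      (B.biUnion (facesThrough U)).card + (facesThrough U a ∩ facesThrough U b).card := by
  have hsub := Finset.card_le_card <| Finset.union_subset
    (Finset.subset_biUnion_of_mem (facesThrough U) ha) (Finset.subset_biUnion_of_mem _ hb)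
  have := Finset.card_union_add_card_inter (facesThrough U a) (facesThrough U b)
  have := hBU a ha
  have := hBU b hb
  lia

lemma two_mul_le_mul_add_card_biUnion {B : Finset (Finset ι)} {n : ℕ}
    (hU : ∀ e ∈ U, IsFaceOfRank 𝕜 v I 2 e) (hB : ∀ a ∈ B, IsFaceOfRank 𝕜 v I 1 a)
    (hBU : ∀ a ∈ B, m ≤ (facesThrough U a).card) (hn : 0 < n) (htwo : 2 ≤ n + B.card)
    (hm : n + B.card ≤ m) :
    2 * m ≤ n * (m + 2 - (n + B.card)) + (B.biUnion (facesThrough U)).card := by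
  obtain ⟨k, rfl⟩ := Nat.exists_eq_add_of_le hm
  rw [show n + B.card + k + 2 - (n + B.card) = k + 2 by lia]
  rcases Nat.lt_trichotomy B.card 1 with h | h | h
  · nlinarith
  · obtain ⟨c, hc⟩ := Finset.card_pos.1 (h.symm ▸ one_pos)
    have hcard := (hBU c hc).trans (Finset.card_le_card (Finset.subset_biUnion_of_mem _ hc))
    nlinarith
  · obtain ⟨c, hc, d, hd, hcd⟩ := Finset.one_lt_card.1 h
    have hinter := card_inter_facesThrough_le_one hU (hB c hc) (hB d hd) hcd
    have hcard := two_mul_le_card_biUnion_add_card_inter hBU hc hd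
    nlinarith

variable [IsStrictOrderedRing 𝕜]

lemma sum_card_facesThrough_le_two_mul (hU : ∀ F ∈ U, IsFaceOfRank 𝕜 v I 2 F)
    (hX : ∀ a ∈ X, IsFaceOfRank 𝕜 v I 1 a) :
    ∑ a ∈ X, (facesThrough U a).card ≤ 2 * U.card := by
  calc ∑ a ∈ X, (facesThrough U a).card
      = ∑ e ∈ U, Finset.card {a ∈ X | a ⊆ e} := sum_card_facesThrough X
    _ ≤ ∑ e ∈ U, 2 := Finset.sum_le_sum fun e he => by
        by_contra! h
        obtain ⟨a, b, c, ha, hb, hc, hab, hac, hbc⟩ := Finset.two_lt_card_iff.1 h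
        rw [Finset.mem_filter] at ha hb hc
        rcases (hU e he).eq_or_eq_of_subset_edge (hX a ha.1) (hX b hb.1) hab (hX c hc.1) ha.2 hb.2
          hc.2 with h | h
        · exact hac h.symm
        · exact hbc h.symm
    _ = 2 * U.card := by rw [Finset.sum_const, smul_eq_mul, mul_comm]

lemma card_le_of_le_two_mul_card_facesThrough (hm : 3 ≤ m)
    (hU : ∀ F ∈ U, IsFaceOfRank 𝕜 v I 2 F) (hcard : U.card < 2 * m)
    (hX : ∀ a ∈ X, IsFaceOfRank 𝕜 v I 1 a)
    (hXU : ∀ a ∈ X, m + 2 ≤ 2 * (facesThrough U a).card) : X.card ≤ m := by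
  by_contra! hlt
  have hsum : X.card * ((m + 3) / 2) ≤ 2 * U.card :=
    (Finset.card_nsmul_le_sum X _ _ fun a ha => by have := hXU a ha; lia).trans
      (sum_card_facesThrough_le_two_mul hU hX)
  have hmul : (m + 1) * ((m + 3) / 2) ≤ 4 * m - 2 := by
    refine (Nat.mul_le_mul_right _ hlt).trans (hsum.trans ?_)
    lia
  rcases hm.eq_or_lt with rfl | hm
  · simp at hmul
  · have : (m + 1) * (m + 2) ≤ (m + 1) * (2 * ((m + 3) / 2)) := Nat.mul_le_mul_left _ (by lia)
    have : 4 * m - 2 + 2 = 4 * m := by lia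
    nlinarith

/-- At least `rank 𝕜 v I - 1` edges meet at a vertex, and at most `T.card - 1` of them lead to
`T`. -/
lemma rank_le_card_leavingEdges_add_card (hy : IsFaceOfRank 𝕜 v I 1 y) (hyT : y ∈ T)
    (hT : ∀ a ∈ T, IsFaceOfRank 𝕜 v I 1 a)
    (hclosed : ∀ e ∈ survivors 𝕜 v I 2 U, y ⊆ e → ∃ a ∈ T, a ⊆ e ∧ a ≠ y) :
    rank 𝕜 v I ≤ (leavingEdges U T y).card + T.card := by
  have hstar := hy.choose_le_card_facesThrough 1
  rw [Nat.choose_one_right] at hstar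
  have hreturn (e) (he : e ∈ facesThrough (faces 𝕜 v I 2) y \ leavingEdges U T y) :
      ∃ a ∈ T, a ⊆ e ∧ a ≠ y := by
    simp only [Finset.mem_sdiff, mem_facesThrough, mem_faces, leavingEdges, Finset.mem_filter] at he
    by_cases heU : e ∈ U
    · simpa [heU, he.1.2] using he.2
    · exact hclosed e ⟨he.1.1, heU⟩ he.1.2
  choose! f hf using hreturn
  have hinj : (facesThrough (faces 𝕜 v I 2) y \ leavingEdges U T y).card ≤ (T.erase y).card := by
    refine Finset.card_le_card_of_injOn f (fun e he => ?_) fun e he d hd hed => ?_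
    · exact Finset.mem_erase.2 ⟨(hf e he).2.2, (hf e he).1⟩
    · obtain ⟨haT, hae, hay⟩ := hf e he
      have had := (hf d hd).2.1
      rw [← hed] at had
      simp only [Finset.mem_coe, Finset.mem_sdiff, mem_facesThrough, mem_faces] at he hd
      exact he.1.1.eq_of_vertices_subset hd.1.1 (hT _ haT) hy hay hae he.1.2 had hd.1.2
  have hsdiff := Finset.le_card_sdiff (leavingEdges U T y) (facesThrough (faces 𝕜 v I 2) y)
  have := Finset.card_erase_add_one hyT
  lia

/-- Let `T` contain both ends of a remaining edge, and let no remaining edge leave `T` at a vertex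
through which fewer than `m` deleted edges pass. Then at each such vertex many deleted edges leave
`T`; they are counted together with the deleted edges through the other vertices of `T`. -/
lemma two_mul_le_card_of_closed (hrank : rank 𝕜 v I = m + 2)
    (hU : ∀ e ∈ U, IsFaceOfRank 𝕜 v I 2 e) (hT : ∀ a ∈ T, IsFaceOfRank 𝕜 v I 1 a)
    (hTm : T.card ≤ m) (hF : F ∈ survivors 𝕜 v I 2 U) (ha : a ∈ T) (hb : b ∈ T) (hab : a ≠ b)
    (haF : a ⊆ F) (hbF : b ⊆ F)
    (hclosed : ∀ y ∈ T, (facesThrough U y).card < m → ∀ e ∈ survivors 𝕜 v I 2 U, y ⊆ e →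
      ∃ c ∈ T, c ⊆ e ∧ c ≠ y) : 2 * m ≤ U.card := by
  let Y : Finset (Finset ι) := {y ∈ T | (facesThrough U y).card < m}
  let B : Finset (Finset ι) := {y ∈ T | ¬ (facesThrough U y).card < m}
  have hBT : B ⊆ T := Finset.filter_subset _ _
  have hBU (c) (hc : c ∈ B) : m ≤ (facesThrough U c).card := not_lt.1 (Finset.mem_filter.1 hc).2
  have hYB : Y.card + B.card = T.card := Finset.card_filter_add_card_filter_not _
  have hcount : Y.card * (m + 2 - T.card) + (B.biUnion (facesThrough U)).card ≤ U.card := by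
    refine card_mul_add_card_biUnion_le (Finset.filter_subset _ _) hBT
      (Finset.disjoint_filter_filter_not _ _ _) fun y hy => ?_
    obtain ⟨hyT, hy⟩ := Finset.mem_filter.1 hy
    have := rank_le_card_leavingEdges_add_card (hT y hyT) hyT hT (hclosed y hyT hy)
    lia
  refine le_trans ?_ hcount
  rcases Y.card.eq_zero_or_pos with hY | hY
  · have hBeq : B = T := Finset.eq_of_subset_of_card_le hBT (by lia)
    have hinter : facesThrough U a ∩ facesThrough U b = ∅ := by
      simp only [Finset.eq_empty_iff_forall_notMem, Finset.mem_inter, mem_facesThrough]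
      refine fun e ⟨⟨heU, hae⟩, _, hbe⟩ => hF.2 ?_
      rwa [Finset.mem_coe, hF.1.eq_of_vertices_subset (hU e heU) (hT a ha) (hT b hb) hab haF hbF
        hae hbe]
    have := two_mul_le_card_biUnion_add_card_inter hBU (hBeq ▸ ha) (hBeq ▸ hb)
    rw [hinter, Finset.card_empty] at this
    lia
  · rw [← hYB]
    have htwo : 1 < T.card := Finset.one_lt_card.2 ⟨a, ha, b, hb, hab⟩
    exact two_mul_le_mul_add_card_biUnion hU (fun c hc => hT c (hBT hc)) hBU hY (by lia) (by lia)

lemma Pointed.exists_reachable_vertex_notMem (hp : Pointed 𝕜 v I) (hrank : rank 𝕜 v I = m + 2)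
    (hU : ∀ e ∈ U, IsFaceOfRank 𝕜 v I 2 e) (hcard : U.card < 2 * m)
    (hX : ∀ a ∈ X, IsFaceOfRank 𝕜 v I 1 a) (hXm : X.card ≤ m)
    (hlight : ∀ a, IsFaceOfRank 𝕜 v I 1 a → (facesThrough U a).card < m →
      ∀ F ∈ survivors 𝕜 v I 2 U, ∀ G ∈ survivors 𝕜 v I 2 U, a ⊆ F → a ⊆ G →
        (avoidingGraph 𝕜 v I 2 U).Reachable F G)
    (hF : F ∈ survivors 𝕜 v I 2 U) :
    ∃ G ∈ survivors 𝕜 v I 2 U, (avoidingGraph 𝕜 v I 2 U).Reachable F G ∧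
      ∃ a ∈ survivors 𝕜 v I 1 X, a ⊆ G := by
  classical
  by_contra! htrap
  let T : Finset (Finset ι) := {a ∈ X | ∃ G ∈ survivors 𝕜 v I 2 U,
    (avoidingGraph 𝕜 v I 2 U).Reachable F G ∧ a ⊆ G}
  have hT {a G} (ha : IsFaceOfRank 𝕜 v I 1 a) (hG : G ∈ survivors 𝕜 v I 2 U)
      (hFG : (avoidingGraph 𝕜 v I 2 U).Reachable F G) (haG : a ⊆ G) : a ∈ T :=
    Finset.mem_filter.2 ⟨by_contra fun haX => htrap G hG hFG a ⟨ha, haX⟩ haG, G, hG, hFG, haG⟩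
  have hTX : T ⊆ X := Finset.filter_subset _ _
  obtain ⟨a, haF⟩ := (hp.mono hF.1.subset).exists_vertex (by simp [hF.1.rank_eq])
  have ha := hF.1.isFace.trans_isFaceOfRank haF
  obtain ⟨b, hb, hbF, hba⟩ := hp.exists_vertex_ne ha hF.1 one_lt_two
  refine hcard.not_ge (two_mul_le_card_of_closed hrank hU (fun a ha => hX a (hTX ha))
    ((Finset.card_le_card hTX).trans hXm) hF (hT ha hF .rfl haF.subset) (hT hb hF .rfl hbF) hba.symm
    haF.subset hbF fun y hy hym e he hye => ?_)
  obtain ⟨hyX, G, hG, hFG, hyG⟩ := Finset.mem_filter.1 hy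
  obtain ⟨c, hc, hce, hcy⟩ := hp.exists_vertex_ne (hX y hyX) he.1 one_lt_two
  exact ⟨c, hT hc he (hFG.trans (hlight y (hX y hyX) hym G hG e he hyG hye)) hce, hce, hcy⟩

lemma bridged_of_two_mul_card_lt (hm : 1 ≤ m) (hrank : rank 𝕜 v I = m + 2)
    (ha : IsFaceOfRank 𝕜 v I 1 a) (hb : IsFaceOfRank 𝕜 v I 1 b) (hne : a ≠ b)
    (he : IsFaceOfRank 𝕜 v I 2 e) (hae : a ⊆ e) (hbe : b ⊆ e)
    (haU : 2 * (facesThrough U a).card < m + 2) (hbU : 2 * (facesThrough U b).card < m + 2) :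
    Bridged 𝕜 v I 2 U a b := by
  by_contra hab
  have hunion := choose_le_card_facesThrough_union (r := 0) (by lia) ha hb hne he hae hbe hab
  have hedge := choose_le_card_facesThrough_edge (r := 0) he hae hbe hab
  have hinter : (facesThrough U e).card ≤ (facesThrough U a ∩ facesThrough U b).card :=
    Finset.card_le_card fun F hF => by
      rw [mem_facesThrough] at hF
      simp only [Finset.mem_inter, mem_facesThrough]
      exact ⟨⟨hF.1, hae.trans hF.2⟩, hF.1, hbe.trans hF.2⟩
  have := Finset.card_union_add_card_inter (facesThrough U a) (facesThrough U b)
  rw [Nat.choose_one_right] at hunion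
  rw [Nat.choose_zero_right] at hedge
  lia

end Edge

/-! ### Deleting faces of any rank -/

section Connected

variable [LinearOrder 𝕜] [IsStrictOrderedRing 𝕜] {v : ι → V} {I : Finset ι} {r : ℕ}

theorem Pointed.facesConnected_two (hp : Pointed 𝕜 v I) (hr : 5 ≤ rank 𝕜 v I) :
    FacesConnected 𝕜 v I 2 (2 * (rank 𝕜 v I - 2)) := by
  classical
  obtain ⟨m, hrank⟩ := Nat.exists_eq_add_of_le' (show 2 ≤ rank 𝕜 v I by lia)
  rw [hrank, Nat.add_sub_cancel]
  intro U hU hcard F hF G hG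
  have hlight (a) (ha : IsFaceOfRank 𝕜 v I 1 a) (ham : (facesThrough U a).card < m)
      (F) (hF : F ∈ survivors 𝕜 v I 2 U) (G) (hG : G ∈ survivors 𝕜 v I 2 U) (haF : a ⊆ F)
      (haG : a ⊆ G) : (avoidingGraph 𝕜 v I 2 U).Reachable F G := by
    have hlink := ha.isFace.pointed_contract.facesConnected_one
    have hadd := rank_contract_add (𝕜 := 𝕜) (v := v) ha.subset
    rw [ha.rank_eq] at hadd
    rw [show rank 𝕜 (contract 𝕜 v a) I - 1 = m by lia] at hlink
    exact reachable_of_facesThrough ha hlink hU ham hF hG haF haG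
  let X : Finset (Finset ι) := {a ∈ faces 𝕜 v I 1 | m + 2 ≤ 2 * (facesThrough U a).card}
  have hX (a) (ha : a ∈ X) : IsFaceOfRank 𝕜 v I 1 a := mem_faces.1 (Finset.mem_filter.1 ha).1
  have hXm : X.card ≤ m := card_le_of_le_two_mul_card_facesThrough (by lia) hU hcard hX
    fun a ha => (Finset.mem_filter.1 ha).2
  have hdeg {a} (ha : a ∈ survivors 𝕜 v I 1 X) : 2 * (facesThrough U a).card < m + 2 := by
    by_contra! h
    exact ha.2 (Finset.mem_filter.2 ⟨mem_faces.2 ha.1, h⟩)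
  have hXrank := rank_biUnion_le_card fun a ha => (hX a ha).rank_eq
  obtain ⟨F', hF', hFF', a, ha, haF'⟩ :=
    hp.exists_reachable_vertex_notMem hrank hU hcard hX hXm hlight hF
  obtain ⟨G', hG', hGG', b, hb, hbG'⟩ :=
    hp.exists_reachable_vertex_notMem hrank hU hcard hX hXm hlight hG
  refine hFF'.trans (.trans ?_ hGG'.symm)
  refine hp.reachable_of_bridged (X := X) (by lia)
    (fun a ha => hlight a ha.1 (by have := hdeg ha; lia)) (fun a b h => ?_) ha hb hF' hG' haF' hbG'
  obtain ⟨hne, ha, hb, e, he, hae, hbe⟩ := h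
  exact bridged_of_two_mul_card_lt (by lia) hrank ha.1 hb.1 hne he hae hbe (hdeg ha) (hdeg hb)

lemma mul_lt_add_choose (a b : ℕ) : a * b < (a + b).choose a := by
  induction a generalizing b with
  | zero => simp
  | succ a iha =>
    induction b with
    | zero => simp
    | succ b ihb =>
      have h := iha (b + 1)
      rw [show a + 1 + (b + 1) = a + 1 + b + 1 by ring, Nat.choose_succ_succ]
      rw [show a + (b + 1) = a + 1 + b by ring] at h
      lia

lemma add_three_mul_add_three_le_choose (a b : ℕ) :
    (a + 3) * (b + 3) ≤ (a + b + 5).choose (a + 2) := by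
  induction a with
  | zero =>
    rw [zero_add, zero_add, zero_add, Nat.choose_two_right, Nat.le_div_iff_mul_le two_pos,
      Nat.add_sub_assoc (by lia)]
    lia
  | succ a ih =>
    have h := mul_lt_add_choose (a + 3) (b + 2)
    rw [show a + 3 + (b + 2) = a + b + 5 by ring] at h
    rw [show a + 1 + b + 5 = a + b + 5 + 1 by ring, Nat.choose_succ_succ]
    lia

/-- The inductive step: the vertices lying in too many deleted faces for their links to remain
connected span a subspace of rank at most `r + 2`, so Balinski's theorem connects the others. -/
lemma Pointed.facesConnected_add_three (hp : Pointed 𝕜 v I) {s : ℕ}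
    (hrank : rank 𝕜 v I = r + s + 6)
    (hlink : ∀ a, IsFaceOfRank 𝕜 v I 1 a →
      FacesConnected 𝕜 (contract 𝕜 v a) I (r + 2) ((r + 2) * (s + 3))) :
    FacesConnected 𝕜 v I (r + 3) ((r + 3) * (s + 3)) := by
  classical
  intro U hU hcard F hF G hG
  let X : Finset (Finset ι) :=
    {a ∈ faces 𝕜 v I 1 | (r + 2) * (s + 3) ≤ (facesThrough U a).card}
  have hdeg {a} (ha : a ∈ survivors 𝕜 v I 1 X) : (facesThrough U a).card < (r + 2) * (s + 3) := by
    by_contra! h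
    exact ha.2 (Finset.mem_filter.2 ⟨mem_faces.2 ha.1, h⟩)
  have hXrank : rank 𝕜 v (X.biUnion id) ≤ r + 2 := by
    refine rank_biUnion_le_of_le_card_facesThrough hU
      (fun a ha => (mem_faces.1 (Finset.mem_filter.1 ha).1).rank_eq)
      (fun a ha => (Finset.mem_filter.1 ha).2) ?_
    nlinarith
  have hvertex {F} (hF : IsFaceOfRank 𝕜 v I (r + 3) F) : ∃ a ∈ survivors 𝕜 v I 1 X, a ⊆ F := by
    obtain ⟨a, ha, haF, haX⟩ := hp.exists_vertex_not_spanOf_le hF.isFace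
      (W := spanOf 𝕜 v (X.biUnion id)) fun h => by
        have := (Submodule.finrank_mono h).trans hXrank
        have := hF.rank_eq
        unfold rank at this
        lia
    exact ⟨a, ⟨ha, fun h => haX (spanOf_mono (Finset.subset_biUnion_of_mem id h))⟩, haF⟩
  have hbridge (a b) (hab : (avoidingGraph 𝕜 v I 1 X).Adj a b) : Bridged 𝕜 v I (r + 3) U a b := by
    obtain ⟨hne, ha, hb, e, he, hae, hbe⟩ := hab
    by_contra hab
    have hunion := choose_le_card_facesThrough_union (r := r + 1) (by lia) ha.1 hb.1 hne he hae hbe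
      hab
    have := hunion.trans
      (Finset.card_le_card (Finset.union_subset facesThrough_subset facesThrough_subset))
    have := add_three_mul_add_three_le_choose r s
    rw [hrank] at *
    lia
  obtain ⟨a, ha, haF⟩ := hvertex hF.1
  obtain ⟨b, hb, hbG⟩ := hvertex hG.1
  refine hp.reachable_of_bridged (by lia) (fun a ha F hF G hG haF haG => ?_) hbridge ha hb hF hG
    haF hbG
  exact reachable_of_facesThrough (r := r + 2) ha.1 (hlink a ha.1) hU (hdeg ha) hF hG haF haG

theorem Pointed.facesConnected (hp : Pointed 𝕜 v I) (hr : 1 ≤ r) (hrank : r + 3 ≤ rank 𝕜 v I) :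
    FacesConnected 𝕜 v I r (r * (rank 𝕜 v I - r)) := by
  induction r using Nat.strong_induction_on generalizing V v with
  | h r ih =>
    match r, hr with
    | 1, _ => simpa using hp.facesConnected_one
    | 2, _ => exact hp.facesConnected_two hrank
    | r + 3, _ =>
      obtain ⟨s, hs⟩ := Nat.exists_eq_add_of_le' hrank
      rw [show rank 𝕜 v I - (r + 3) = s + 3 by lia]
      refine hp.facesConnected_add_three (by lia) fun a ha => ?_
      have hadd := rank_contract_add (𝕜 := 𝕜) (v := v) ha.subset
      rw [ha.rank_eq] at hadd
      have := ih (r + 2) (by lia) ha.isFace.pointed_contract (by lia) (by lia)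
      rwa [show rank 𝕜 (contract 𝕜 v a) I - (r + 2) = s + 3 by lia] at this

end Connected

/-! ### The cone over a polytope -/

section Homogenize

variable {E : Type*} [AddCommGroup E] [Module 𝕜 E]

variable (𝕜) in
/-- The embedding of a space as an affine hyperplane missing the origin. It turns the points
spanning a polytope into a configuration spanning the cone over the polytope. -/
def homogenize (x : E) : E × 𝕜 :=
  (x, 1)

variable {I A B : Finset E} {a x : E}

lemma homogenize_sum {w : E → 𝕜} (hw : ∑ y ∈ A, w y = 1) :
    homogenize 𝕜 (∑ y ∈ A, w y • y) = ∑ y ∈ A, w y • homogenize 𝕜 y := by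
  ext <;> simp [homogenize, Prod.fst_sum, Prod.snd_sum, hw]

lemma spanOf_homogenize (ha : a ∈ A) : spanOf 𝕜 (homogenize 𝕜) A =
    (vectorSpan 𝕜 (A : Set E)).map (LinearMap.inl 𝕜 E 𝕜) ⊔
      Submodule.span 𝕜 {homogenize 𝕜 a} := by
  have hsub (i : E) : LinearMap.inl 𝕜 E 𝕜 (i - a) = homogenize 𝕜 i - homogenize 𝕜 a := by
    simp [homogenize]
  refine le_antisymm (spanOf_le.2 fun i hi => ?_) (sup_le ?_ ?_)
  · rw [← sub_add_cancel (homogenize 𝕜 i) (homogenize 𝕜 a), ← hsub]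
    exact Submodule.add_mem_sup (Submodule.mem_map_of_mem (vsub_mem_vectorSpan 𝕜 hi ha))
      (Submodule.mem_span_singleton_self _)
  · rw [vectorSpan_eq_span_vsub_set_right 𝕜 ha, Submodule.map_span_le]
    rintro _ ⟨i, hi, rfl⟩
    simp only [vsub_eq_sub, hsub]
    exact Submodule.sub_mem _ (mem_spanOf hi) (mem_spanOf ha)
  · exact (Submodule.span_singleton_le_iff_mem _ _).2 (mem_spanOf ha)

lemma rank_homogenize (hA : A.Nonempty) :
    rank 𝕜 (homogenize 𝕜) A = finrank 𝕜 (vectorSpan 𝕜 (A : Set E)) + 1 := by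
  obtain ⟨a, ha⟩ := hA
  have : FiniteDimensional 𝕜 (vectorSpan 𝕜 (A : Set E)) :=
    finiteDimensional_vectorSpan_of_finite 𝕜 A.finite_toSet
  have hdisj : (vectorSpan 𝕜 (A : Set E)).map (LinearMap.inl 𝕜 E 𝕜) ⊓
      Submodule.span 𝕜 {homogenize 𝕜 a} = ⊥ := by
    rw [← disjoint_iff, Submodule.disjoint_span_singleton' (by simp [homogenize])]
    simp [homogenize]
  have hsup := Submodule.finrank_sup_add_finrank_inf_eq
    ((vectorSpan 𝕜 (A : Set E)).map (LinearMap.inl 𝕜 E 𝕜)) (Submodule.span 𝕜 {homogenize 𝕜 a})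
  rw [hdisj, finrank_bot, add_zero, finrank_span_singleton (by simp [homogenize]),
    ← (Submodule.equivMapOfInjective _ LinearMap.inl_injective _).finrank_eq] at hsup
  rw [rank, spanOf_homogenize ha, hsup]

variable [LinearOrder 𝕜] [IsStrictOrderedRing 𝕜] {l : Dual 𝕜 (E × 𝕜)}

variable (𝕜) in
lemma pointed_homogenize (I : Finset E) : Pointed 𝕜 (homogenize 𝕜) I :=
  ⟨LinearMap.snd 𝕜 E 𝕜, fun _ _ _ => zero_lt_one⟩

lemma CutsOut.nonneg_of_mem_convexHull (hl : CutsOut (homogenize 𝕜) l I A)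
    (hx : x ∈ convexHull 𝕜 (I : Set E)) : 0 ≤ l (homogenize 𝕜 x) := by
  obtain ⟨w, hw, hw1, rfl⟩ := Finset.mem_convexHull'.1 hx
  rw [homogenize_sum hw1, map_sum]
  refine Finset.sum_nonneg fun y hy => ?_
  rw [map_smul]
  exact mul_nonneg (hw y hy) (hl.nonneg y hy)

lemma CutsOut.eq_zero_iff_mem_convexHull (hl : CutsOut (homogenize 𝕜) l I A)
    (hx : x ∈ convexHull 𝕜 (I : Set E)) :
    l (homogenize 𝕜 x) = 0 ↔ x ∈ convexHull 𝕜 (A : Set E) := by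
  constructor
  · obtain ⟨w, hw, hw1, rfl⟩ := Finset.mem_convexHull'.1 hx
    rw [homogenize_sum hw1, map_sum, Finset.sum_eq_zero_iff_of_nonneg fun y hy => by
      rw [map_smul]; exact mul_nonneg (hw y hy) (hl.nonneg y hy)]
    intro hzero
    have hwA (y) (hy : y ∈ I) (hyA : y ∉ A) : w y = 0 := by
      have := hzero y hy
      rw [map_smul, smul_eq_mul] at this
      exact (mul_eq_zero.1 this).resolve_right (hl.pos hy hyA).ne'
    rw [Finset.mem_convexHull']
    refine ⟨w, fun y hy => hw y (hl.subset hy), ?_, ?_⟩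
    · rw [← hw1]
      exact Finset.sum_subset hl.subset hwA
    · exact Finset.sum_subset hl.subset fun y hy hyA => by rw [hwA y hy hyA, zero_smul]
  · intro hxA
    obtain ⟨w, -, hw1, rfl⟩ := Finset.mem_convexHull'.1 hxA
    rw [homogenize_sum hw1, map_sum]
    refine Finset.sum_eq_zero fun y hy => ?_
    rw [map_smul, (hl.eq_zero_iff y (hl.subset hy)).2 hy, smul_zero]

lemma IsFace.convexHull_subset_convexHull_iff (hB : IsFace 𝕜 (homogenize 𝕜) I B) (hA : A ⊆ I) :
    convexHull 𝕜 (A : Set E) ⊆ convexHull 𝕜 (B : Set E) ↔ A ⊆ B := by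
  refine ⟨fun h x hx => ?_, fun h => convexHull_mono h⟩
  obtain ⟨l, hl⟩ := hB
  exact (hl.eq_zero_iff x (hA hx)).1 <|
    (hl.eq_zero_iff_mem_convexHull (subset_convexHull 𝕜 _ (hA hx))).2 <|
      h (subset_convexHull 𝕜 _ hx)

end Homogenize

section Exposed

variable {E : Type*} [AddCommGroup E] [Module ℝ E] [TopologicalSpace E] {I A : Finset E}

lemma IsFace.isExposed_convexHull [IsTopologicalAddGroup E] [ContinuousSMul ℝ E] [T2Space E]
    [FiniteDimensional ℝ E] (hA : IsFace ℝ (homogenize ℝ) I A) :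
    IsExposed ℝ (convexHull ℝ (I : Set E)) (convexHull ℝ (A : Set E)) := by
  rintro ⟨a, ha⟩
  have haI := convexHull_mono hA.subset ha
  obtain ⟨l, hl⟩ := hA
  have hl_apply (x : E) : (-(l ∘ₗ LinearMap.inl ℝ E ℝ)) x = l (0, 1) - l (homogenize ℝ x) := by
    simp [← map_sub, homogenize, ← map_neg]
  refine ⟨(-(l ∘ₗ LinearMap.inl ℝ E ℝ)).toContinuousLinearMap, ?_⟩
  ext x
  simp only [LinearMap.coe_toContinuousLinearMap', hl_apply, sub_le_sub_iff_left, mem_ofPred_eq]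
  refine ⟨fun hx => ?_, fun ⟨hxI, hx⟩ => ?_⟩
  · have hxI := convexHull_mono hl.subset hx
    rw [(hl.eq_zero_iff_mem_convexHull hxI).2 hx]
    exact ⟨hxI, fun y hy => hl.nonneg_of_mem_convexHull hy⟩
  · refine (hl.eq_zero_iff_mem_convexHull hxI).1 (le_antisymm ?_ (hl.nonneg_of_mem_convexHull hxI))
    exact (hx a haI).trans_eq ((hl.eq_zero_iff_mem_convexHull haI).2 ha)

lemma exists_isFace_convexHull_eq {F : Set E} (hF : IsExposed ℝ (convexHull ℝ (I : Set E)) F)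
    (hne : F.Nonempty) :
    ∃ A, IsFace ℝ (homogenize ℝ) I A ∧ convexHull ℝ (A : Set E) = F := by
  obtain ⟨l, rfl⟩ := hF hne
  obtain ⟨a, haI, hmax⟩ := hne
  let A : Finset E := {i ∈ I | l i = l a}
  let m : Dual ℝ (E × ℝ) := l a • LinearMap.snd ℝ E ℝ - (l : E →ₗ[ℝ] ℝ) ∘ₗ LinearMap.fst ℝ E ℝ
  have hm_apply (x : E) : m (homogenize ℝ x) = l a - l x := by simp [m, homogenize]
  have hm : CutsOut (homogenize ℝ) m I A := by
    refine ⟨Finset.filter_subset _ _, fun i hi => ?_, fun i hi => ?_⟩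
    · rw [hm_apply, sub_nonneg]
      exact hmax i (subset_convexHull ℝ _ hi)
    · rw [hm_apply, sub_eq_zero, Finset.mem_filter, eq_comm, and_iff_right hi]
  refine ⟨A, ⟨m, hm⟩, ?_⟩
  ext x
  refine ⟨fun hx => ?_, fun ⟨hxI, hx⟩ => ?_⟩
  · have hxI := convexHull_mono hm.subset hx
    have hxa := (hm.eq_zero_iff_mem_convexHull hxI).2 hx
    rw [hm_apply, sub_eq_zero] at hxa
    exact ⟨hxI, fun y hy => hxa ▸ hmax y hy⟩
  · rw [← hm.eq_zero_iff_mem_convexHull hxI, hm_apply, sub_eq_zero]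
    exact le_antisymm (hx a haI) (hmax x hxI)

end Exposed

section FaceGraph

variable {N : ℕ} {I A : Finset (EuclideanSpace ℝ (Fin N))} {k : ℕ}

lemma rank_homogenize_eq_sdim_add_one (hA : A.Nonempty) :
    rank ℝ (homogenize ℝ) A = sdim (convexHull ℝ (A : Set (EuclideanSpace ℝ (Fin N)))) + 1 := by
  rw [rank_homogenize hA, sdim, affineSpan_convexHull, direction_affineSpan]

lemma IsFaceOfRank.isFaceDim_convexHull (hA : IsFaceOfRank ℝ (homogenize ℝ) I (k + 1) A) :
    IsFaceDim (convexHull ℝ (I : Set (EuclideanSpace ℝ (Fin N)))) (convexHull ℝ A) k := by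
  obtain ⟨i, hi, -⟩ := hA.exists_ne_zero k.succ_pos
  refine ⟨hA.isFace.isExposed_convexHull, convexHull_nonempty_iff.2 ⟨i, hi⟩, ?_⟩
  exact Nat.succ_injective ((rank_homogenize_eq_sdim_add_one ⟨i, hi⟩).symm.trans hA.rank_eq)

lemma exists_isFaceOfRank_convexHull_eq {F : Set (EuclideanSpace ℝ (Fin N))}
    (hF : IsFaceDim (convexHull ℝ (I : Set (EuclideanSpace ℝ (Fin N)))) F k) :
    ∃ A, IsFaceOfRank ℝ (homogenize ℝ) I (k + 1) A ∧ convexHull ℝ A = F := by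
  obtain ⟨hexp, hne, hdim⟩ := hF
  obtain ⟨A, hA, rfl⟩ := exists_isFace_convexHull_eq hexp hne
  have hAne : A.Nonempty := convexHull_nonempty_iff.1 hne
  exact ⟨A, ⟨hA, by rw [rank_homogenize_eq_sdim_add_one hAne, hdim]⟩, rfl⟩

/-- The faces of rank `k + 1` of the cone over a polytope correspond to the `k`-dimensional faces of
the polytope. -/
noncomputable def facesEquiv (I : Finset (EuclideanSpace ℝ (Fin N))) (k : ℕ) :
    faces ℝ (homogenize ℝ) I (k + 1) ≃
      {F // IsFaceDim (convexHull ℝ (I : Set (EuclideanSpace ℝ (Fin N)))) F k} :=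
  Equiv.ofBijective
    (fun A => ⟨convexHull ℝ A.1, (mem_faces.1 A.2).isFaceDim_convexHull⟩) <| by
      refine ⟨fun ⟨A, hA⟩ ⟨B, hB⟩ hAB => ?_, fun ⟨F, hF⟩ => ?_⟩
      · have hAB := congrArg Subtype.val hAB
        rw [mem_faces] at hA hB
        exact Subtype.ext <| Finset.Subset.antisymm
          ((hB.isFace.convexHull_subset_convexHull_iff hA.subset).1 hAB.le)
          ((hA.isFace.convexHull_subset_convexHull_iff hB.subset).1 hAB.ge)
      · obtain ⟨A, hA, rfl⟩ := exists_isFaceOfRank_convexHull_eq hF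
        exact ⟨⟨A, mem_faces.2 hA⟩, rfl⟩

lemma choose_le_natCard_isFaceDim (I : Finset (EuclideanSpace ℝ (Fin N))) (k : ℕ) :
    (rank ℝ (homogenize ℝ) I).choose (k + 1) ≤
      Nat.card {F // IsFaceDim (convexHull ℝ (I : Set (EuclideanSpace ℝ (Fin N)))) F k} := by
  rw [← Nat.card_congr (facesEquiv I k), Nat.card_eq_finsetCard]
  exact (pointed_homogenize ℝ I).choose_le_card_faces (k + 1)

lemma faceGraph_adj_facesEquiv {A B : faces ℝ (homogenize ℝ) I (k + 1)} {U : Set (Finset _)}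
    (h : (avoidingGraph ℝ (homogenize ℝ) I (k + 1) U).Adj A B) :
    (faceGraph _ k).Adj (facesEquiv I k A) (facesEquiv I k B) := by
  obtain ⟨hne, -, -, H, hH, hAH, hBH⟩ := h
  refine (SimpleGraph.fromRel_adj ..).2 ⟨fun h => hne ?_, .inl ⟨convexHull ℝ H, ?_, ?_, ?_⟩⟩
  · exact congrArg Subtype.val ((facesEquiv I k).injective h)
  · exact hH.isFaceDim_convexHull
  · exact convexHull_mono hAH
  · exact convexHull_mono hBH

lemma reachable_induce_compl {U : Set (Finset (EuclideanSpace ℝ (Fin N)))}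
    {S : Set {F // IsFaceDim (convexHull ℝ (I : Set (EuclideanSpace ℝ (Fin N)))) F k}}
    (hSU : ∀ F ∈ S, ((facesEquiv I k).symm F).1 ∈ U) (F G : ↥Sᶜ)
    (h : (avoidingGraph ℝ (homogenize ℝ) I (k + 1) U).Reachable
      ((facesEquiv I k).symm F).1 ((facesEquiv I k).symm G).1) :
    ((faceGraph _ k).induce Sᶜ).Reachable F G := by
  obtain ⟨p⟩ := h
  generalize hA : ((facesEquiv I k).symm F).1 = A at p
  generalize hB : ((facesEquiv I k).symm G).1 = B at p
  induction p generalizing F with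
  | nil =>
    obtain rfl : F = G :=
      Subtype.ext ((facesEquiv I k).symm.injective (Subtype.ext (hA.trans hB.symm)))
    exact .rfl
  | @cons A C _ hAC _ ih =>
    have hC := hAC.2.2.1
    obtain ⟨H, hH⟩ := (facesEquiv I k).symm.surjective ⟨C, mem_faces.2 hC.1⟩
    have hHS : H ∈ Sᶜ := fun h => hC.2 (by simpa [hH] using hSU H h)
    refine SimpleGraph.Reachable.trans (SimpleGraph.Adj.reachable ?_)
      (ih ⟨H, hHS⟩ (by rw [hH]) hB)
    have := faceGraph_adj_facesEquiv (A := (facesEquiv I k).symm F) (B := (facesEquiv I k).symm H)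
      (by rwa [hA, hH])
    simpa using this

theorem preconnected_induce_compl (hk : k + 4 ≤ rank ℝ (homogenize ℝ) I)
    {S : Set {F // IsFaceDim (convexHull ℝ (I : Set (EuclideanSpace ℝ (Fin N)))) F k}}
    (hS : S.Finite) (hcard : S.ncard < (k + 1) * (rank ℝ (homogenize ℝ) I - (k + 1))) :
    ((faceGraph _ k).induce Sᶜ).Preconnected := by
  classical
  let U := hS.toFinset.image fun F => ((facesEquiv I k).symm F).1
  have hU {F} : ((facesEquiv I k).symm F).1 ∈ U ↔ F ∈ S := by
    simp only [U, Finset.mem_image, Set.Finite.mem_toFinset, Subtype.val_inj,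
      EmbeddingLike.apply_eq_iff_eq, exists_eq_right]
  have hsurv (F : ↥Sᶜ) :
      ((facesEquiv I k).symm F).1 ∈ survivors ℝ (homogenize ℝ) I (k + 1) U :=
    ⟨mem_faces.1 (Subtype.prop _), fun h => F.2 (hU.1 h)⟩
  refine fun F G => reachable_induce_compl (U := U) (fun F => hU.2) F G <|
    (pointed_homogenize ℝ I).facesConnected (by lia) hk U (fun A hA => ?_) ?_ _ (hsurv F) _
      (hsurv G)
  · obtain ⟨F, -, rfl⟩ := Finset.mem_image.1 hA
    exact mem_faces.1 (Subtype.prop _)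
  · rw [Set.ncard_eq_toFinset_card S hS] at hcard
    exact Finset.card_image_le.trans_lt hcard

end FaceGraph

end VectorConfiguration

/-- For `0 ≤ k ≤ d-3`, the graph `G_k(P)` of any `d`-dimensional convex
polytope `P` is `(k+1)(d-k)`-vertex-connected. -/
theorem stmt_0 (d k : ℕ) (hk : k + 3 ≤ d) {N : ℕ}
    (P : Set (EuclideanSpace ℝ (Fin N))) (hP : IsPolytope P) (hdim : sdim P = d) :
    MConnected (faceGraph P k) ((k + 1) * (d - k)) := by
  obtain ⟨I, hI, rfl⟩ := hP
  lift I to Finset (EuclideanSpace ℝ (Fin N)) using hI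
  have hne : I.Nonempty := by
    rw [Finset.nonempty_iff_ne_empty]
    rintro rfl
    rw [Finset.coe_empty, convexHull_empty, sdim, direction_affineSpan, vectorSpan_empty,
      Module.finrank_zero_of_subsingleton] at hdim
    lia
  have hrank := VectorConfiguration.rank_homogenize_eq_sdim_add_one hne
  rw [hdim] at hrank
  have hnodes := VectorConfiguration.choose_le_natCard_isFaceDim I k
  have hchoose := VectorConfiguration.mul_lt_add_choose (k + 1) (d - k)
  rw [hrank, show d + 1 = k + 1 + (d - k) by lia] at hnodes
  refine ⟨hchoose.trans_le hnodes, fun S hS hcard => ?_⟩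
  have hproper : Sᶜ.Nonempty := by
    rw [Set.nonempty_compl]
    rintro rfl
    rw [Set.ncard_univ] at hcard
    lia
  have := hproper.to_subtype
  exact ⟨VectorConfiguration.preconnected_induce_compl (hrank ▸ by lia) hS
    (by rwa [hrank, Nat.add_sub_add_right])⟩
end

section
/- For every convex polytope P of dimension d ≥ 4, the graph G_1(P), whose nodes are the edges (one-dimensional faces) of P with two edges adjacent when some two-dimensional face of P contains both, is (2d-2)-vertex-connected. -/
open Set

/-!
Suppose that deleting a set `D` of at most `2d - 3` edges separates `G_1(P)`. By Balinski's theorem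
for the vertex figures, the edges at a vertex form a `(d-1)`-connected graph, so all remaining edges
at a vertex with at most `d - 2` edges of `D` lie on one side of the separation. By Bonferroni's
inequality, at most two vertices have more, and each side together with these has at least four
vertices. If adjacent vertices lie on different sides, then `D` contains their common edge, and it
meets each of the `d - 1` pairs of edges at the two vertices that lie in a common two-dimensional
face through that edge; so these vertices have more than `d` edges of `D` together. An averaging
argument then gives at most three vertices separating the graph of `P`, against Balinski's theorem
for `P`, as `d ≥ 4`.

A face is represented by the points on it of a finite set whose convex hull is the polytope.
-/

/-! ### Separations of graphs -/

section Graph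

variable {V W : Type*} {G : SimpleGraph V} {S X : Set V} {m : ℕ}

/-- `X` is a union of components of the graph `G - S`. Nodes of `S` may belong to `X` or not. -/
def IsComponentUnion (G : SimpleGraph V) (S X : Set V) : Prop :=
  ∀ ⦃a b⦄, G.Adj a b → a ∉ S → b ∉ S → (a ∈ X ↔ b ∈ X)

theorem IsComponentUnion.compl (hX : IsComponentUnion G S X) : IsComponentUnion G S Xᶜ :=
  fun _ _ hab ha hb => not_congr (hX hab ha hb)

theorem isComponentUnion_setOf_reachable (a : ↥Sᶜ) :
    IsComponentUnion G S {b | ∃ hb : b ∈ Sᶜ, (G.induce Sᶜ).Reachable a ⟨b, hb⟩} := by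
  intro b c hbc hb hc
  have hbc' : (G.induce Sᶜ).Adj ⟨b, hb⟩ ⟨c, hc⟩ := hbc
  exact ⟨fun ⟨_, h⟩ => ⟨hc, h.trans hbc'.reachable⟩,
    fun ⟨_, h⟩ => ⟨hb, h.trans hbc'.symm.reachable⟩⟩

theorem preconnected_induce_compl_iff :
    (G.induce Sᶜ).Preconnected ↔
      ∀ X, IsComponentUnion G S X → ∀ ⦃a b⦄, a ∉ S → b ∉ S → a ∈ X → b ∈ X := by
  constructor
  · intro h X hX a b ha hb haX
    obtain ⟨p⟩ := h ⟨a, ha⟩ ⟨b, hb⟩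
    have mem_of_walk : ∀ {u v : ↥Sᶜ}, (G.induce Sᶜ).Walk u v → u.1 ∈ X → v.1 ∈ X := by
      intro u v p
      induction p with
      | nil => exact id
      | @cons u w _ huw _ ih => exact fun hu => ih ((hX huw u.2 w.2).1 hu)
    exact mem_of_walk p haX
  · rintro h ⟨a, ha⟩ ⟨b, hb⟩
    obtain ⟨_, hab⟩ :=
      h _ (isComponentUnion_setOf_reachable ⟨a, ha⟩) ha hb ⟨ha, SimpleGraph.Reachable.refl _⟩
    exact hab

theorem MConnected.finite (hG : MConnected G m) : Finite V :=
  Nat.finite_of_card_ne_zero (Nat.ne_zero_of_lt hG.1)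

theorem MConnected.mem_of_mem (hG : MConnected G m) (hS : S.ncard < m)
    (hX : IsComponentUnion G S X) {a b : V} (ha : a ∉ S) (hb : b ∉ S) (haX : a ∈ X) : b ∈ X :=
  have := hG.finite
  preconnected_induce_compl_iff.1 (hG.2 S S.toFinite hS).preconnected X hX ha hb haX

theorem mConnected_of_forall_isComponentUnion (hV : m + 1 ≤ Nat.card V)
    (hG : ∀ S : Set V, S.Finite → S.ncard < m → ∀ X, IsComponentUnion G S X →
      ∀ ⦃a b⦄, a ∉ S → b ∉ S → a ∈ X → b ∈ X) : MConnected G m := by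
  refine ⟨hV, fun S hS hSm => ?_⟩
  have : Finite V := Nat.finite_of_card_ne_zero (Nat.ne_zero_of_lt hV)
  have hSV : S ≠ univ := by
    rintro rfl
    rw [ncard_univ] at hSm
    omega
  exact
    { preconnected := preconnected_induce_compl_iff.2 (hG S hS hSm)
      nonempty := (nonempty_compl.2 hSV).to_subtype }

theorem MConnected.of_iso {G' : SimpleGraph W} (e : G ≃g G') (hG : MConnected G m) :
    MConnected G' m := by
  refine mConnected_of_forall_isComponentUnion (Nat.card_congr e.toEquiv ▸ hG.1) ?_
  intro S _ hSm X hX a b ha hb haX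
  have hX' : IsComponentUnion G (e ⁻¹' S) (e ⁻¹' X) :=
    fun u v huv hu hv => hX (e.map_adj_iff.2 huv) hu hv
  have hcard : (e ⁻¹' S).ncard < m := by
    rwa [ncard_preimage_of_injective_subset_range e.injective
      (e.surjective.range_eq ▸ subset_univ S)]
  simpa using hG.mem_of_mem hcard hX' (a := e.symm a) (b := e.symm b) (by simpa) (by simpa)
    (by simpa)

end Graph

section Threshold

open Finset

variable {α β : Type*}

theorem sum_card_filter_le_le_sum (A : Finset α) (f : α → ℕ) (n : ℕ) :
    ∑ t ∈ Finset.Icc 1 n, #{a ∈ A | t ≤ f a} ≤ ∑ a ∈ A, f a := by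
  calc ∑ t ∈ Finset.Icc 1 n, #{a ∈ A | t ≤ f a} = ∑ a ∈ A, #{t ∈ Finset.Icc 1 n | t ≤ f a} :=
        sum_card_bipartiteAbove_eq_sum_card_bipartiteBelow fun t a => t ≤ f a
    _ ≤ ∑ a ∈ A, f a := sum_le_sum fun a _ => by
        have hsub : {t ∈ Finset.Icc 1 n | t ≤ f a} ⊆ Finset.Icc 1 (f a) := fun t ht => by
          simp only [Finset.mem_filter, Finset.mem_Icc] at ht ⊢
          exact ⟨ht.1.1, ht.2⟩
        simpa using Finset.card_le_card hsub

theorem exists_card_filter_add_card_filter_le (A : Finset α) (B : Finset β) (f : α → ℕ)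
    (g : β → ℕ) {n c : ℕ} (h : ∑ a ∈ A, f a + ∑ b ∈ B, g b < n * (c + 1)) :
    ∃ t, #{a ∈ A | t ≤ f a} + #{b ∈ B | n + 1 - t ≤ g b} ≤ c := by
  have hB : ∑ t ∈ Finset.Icc 1 n, #{b ∈ B | n + 1 - t ≤ g b} =
      ∑ t ∈ Finset.Icc 1 n, #{b ∈ B | t ≤ g b} :=
    sum_nbij' (n + 1 - ·) (n + 1 - ·) (by simp; omega) (by simp; omega) (by simp; omega)
      (by simp; omega) (by simp)
  have hsum : ∑ t ∈ Finset.Icc 1 n, (#{a ∈ A | t ≤ f a} + #{b ∈ B | n + 1 - t ≤ g b}) <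
      ∑ _t ∈ Finset.Icc 1 n, (c + 1) := by
    rw [sum_add_distrib, hB, sum_const, Nat.card_Icc, smul_eq_mul]
    exact (Nat.add_le_add (sum_card_filter_le_le_sum A f n)
      (sum_card_filter_le_le_sum B g n)).trans_lt h
  obtain ⟨t, -, ht⟩ := exists_lt_of_sum_lt hsum
  exact ⟨t, Nat.le_of_lt_succ ht⟩

end Threshold

/-! ### Graphs on the edges of a graph -/

section Incidence

open Finset

variable {ν ι : Type*} {inc : ν → ι → Prop} {G : SimpleGraph ν} {H : SimpleGraph ι} {d : ℕ}

/-- `inc` is the incidence relation between the vertices `ν` and the edges `ι` of a simple graph: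
every edge has exactly two ends and no two edges have the same ends. -/
structure IsSimpleIncidence (inc : ν → ι → Prop) : Prop where
  exists_ends (e : ι) : ∃ a b, a ≠ b ∧ ∀ v, inc v e ↔ v = a ∨ v = b
  edge_unique ⦃a b : ν⦄ (hab : a ≠ b) ⦃e f : ι⦄ (hae : inc a e) (hbe : inc b e) (haf : inc a f)
    (hbf : inc b f) : e = f

namespace IsSimpleIncidence

theorem finite [Finite ν] (hinc : IsSimpleIncidence inc) : Finite ι := by
  choose a b hab hends using hinc.exists_ends
  refine Finite.of_injective (fun e => (a e, b e)) fun e f hef => ?_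
  obtain ⟨ha, hb⟩ := Prod.mk.inj hef
  exact hinc.edge_unique (hab e) ((hends e _).2 (.inl rfl)) ((hends e _).2 (.inr rfl))
    ((hends f _).2 (.inl ha)) ((hends f _).2 (.inr hb))

theorem exists_other_end (hinc : IsSimpleIncidence inc) {v : ν} {e : ι} (hve : inc v e) :
    ∃ w, w ≠ v ∧ inc w e := by
  obtain ⟨a, b, hab, hends⟩ := hinc.exists_ends e
  rcases (hends v).1 hve with rfl | rfl
  · exact ⟨b, hab.symm, (hends b).2 (.inr rfl)⟩
  · exact ⟨a, hab, (hends a).2 (.inl rfl)⟩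

end IsSimpleIncidence

open scoped Classical in
/-- The edges of `D` that are incident with `v`. -/
noncomputable def edgeStar (inc : ν → ι → Prop) (D : Finset ι) (v : ν) : Finset ι :=
  {e ∈ D | inc v e}

theorem mem_edgeStar {D : Finset ι} {v : ν} {e : ι} :
    e ∈ edgeStar inc D v ↔ e ∈ D ∧ inc v e := by
  simp [edgeStar]

theorem edgeStar_subset (D : Finset ι) (v : ν) : edgeStar inc D v ⊆ D :=
  fun _ he => (mem_edgeStar.1 he).1

namespace IsSimpleIncidence

theorem card_edgeStar_inter_le_one [DecidableEq ι] (hinc : IsSimpleIncidence inc) (D : Finset ι)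
    {a b : ν} (hab : a ≠ b) : #(edgeStar inc D a ∩ edgeStar inc D b) ≤ 1 := by
  refine card_le_one.2 fun e he f hf => ?_
  simp only [Finset.mem_inter, mem_edgeStar] at he hf
  exact hinc.edge_unique hab he.1.2 he.2.2 hf.1.2 hf.2.2

/-- Bonferroni's inequality for the stars of the vertices of `S`, two of which share at most one
edge. -/
theorem sum_card_edgeStar_le [DecidableEq ι] (hinc : IsSimpleIncidence inc) (D : Finset ι)
    (S : Finset ν) :
    ∑ v ∈ S, #(edgeStar inc D v) ≤ #(S.biUnion (edgeStar inc D)) + (#S).choose 2 := by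
  classical
  induction S using Finset.induction with
  | empty => simp
  | insert a S ha ih =>
    have hinter : #(edgeStar inc D a ∩ S.biUnion (edgeStar inc D)) ≤ #S * 1 := by
      rw [inter_biUnion]
      exact card_biUnion_le_card_mul _ _ _ fun v hv =>
        hinc.card_edgeStar_inter_le_one D (ne_of_mem_of_not_mem hv ha).symm
    have hunion := card_union_add_card_inter (edgeStar inc D a) (S.biUnion (edgeStar inc D))
    rw [sum_insert ha, Finset.biUnion_insert, card_insert_of_notMem ha, Nat.choose_succ_succ' _ 1,
      Nat.choose_one_right, one_add_one_eq_two]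
    omega

theorem sum_card_edgeStar_le_card (hinc : IsSimpleIncidence inc) (D : Finset ι) (S : Finset ν) :
    ∑ v ∈ S, #(edgeStar inc D v) ≤ #D + (#S).choose 2 := by
  classical
  exact (hinc.sum_card_edgeStar_le D S).trans
    (Nat.add_le_add_right
      (Finset.card_le_card (Finset.biUnion_subset.2 fun v _ => edgeStar_subset D v)) _)

theorem sum_card_edgeStar [Fintype ν] (hinc : IsSimpleIncidence inc) (D : Finset ι) :
    ∑ v, #(edgeStar inc D v) = 2 * #D := by
  classical
  have card_ends (e : ι) : #(univ.filter fun v => inc v e) = 2 := by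
    obtain ⟨a, b, hab, hends⟩ := hinc.exists_ends e
    rw [← card_pair hab]
    congr 1
    ext
    simp [hends]
  calc ∑ v, #(edgeStar inc D v) = ∑ e ∈ D, #(univ.filter fun v => inc v e) := by
        simpa only [edgeStar, bipartiteAbove, bipartiteBelow] using
          sum_card_bipartiteAbove_eq_sum_card_bipartiteBelow inc
    _ = 2 * #D := by simp [card_ends, mul_comm]

end IsSimpleIncidence

section Saturated

variable [Fintype ν]

open scoped Classical in
/-- The vertices at which `D` contains at least `d - 1` edges, so that deleting `D` may disconnect
the link of the vertex. -/
noncomputable def saturated (inc : ν → ι → Prop) (d : ℕ) (D : Finset ι) : Finset ν :=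
  {v | d ≤ #(edgeStar inc D v) + 1}

theorem mem_saturated {D : Finset ι} {v : ν} :
    v ∈ saturated inc d D ↔ d ≤ #(edgeStar inc D v) + 1 := by
  simp [saturated]

theorem notMem_saturated {D : Finset ι} {v : ν} :
    v ∉ saturated inc d D ↔ #(edgeStar inc D v) + 2 ≤ d := by
  rw [mem_saturated]
  omega

theorem IsSimpleIncidence.card_saturated_le_two (hinc : IsSimpleIncidence inc) (hd : 4 ≤ d)
    {D : Finset ι} (hD : #D + 3 ≤ 2 * d) : #(saturated inc d D) ≤ 2 := by
  by_contra! hlt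
  obtain ⟨T, hT, hcard⟩ := exists_subset_card_eq (Nat.succ_le_of_lt hlt)
  have hle : #T • (d - 1) ≤ ∑ v ∈ T, #(edgeStar inc D v) :=
    card_nsmul_le_sum _ _ _ fun v hv => by have := mem_saturated.1 (hT hv); omega
  have hbonferroni := hinc.sum_card_edgeStar_le_card D T
  have hchoose : (#T).choose 2 = 3 := by simp [hcard]
  rw [hcard, smul_eq_mul] at hle
  omega

theorem IsSimpleIncidence.exists_end_notMem_saturated (hinc : IsSimpleIncidence inc)
    {D : Finset ι} (hD : #D + 3 ≤ 2 * d) {e : ι} (he : e ∉ D) :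
    ∃ v ∉ saturated inc d D, inc v e := by
  classical
  obtain ⟨a, b, hab, hends⟩ := hinc.exists_ends e
  have card_insert_star {v : ν} (hv : inc v e) :
      #(edgeStar inc (insert e D) v) = #(edgeStar inc D v) + 1 := by
    rw [edgeStar, filter_insert, if_pos hv, ← edgeStar,
      card_insert_of_notMem fun h => he (edgeStar_subset D v h)]
  have hae := (hends a).2 (.inl rfl)
  have hbe := (hends b).2 (.inr rfl)
  have hbonferroni := hinc.sum_card_edgeStar_le_card (insert e D) {a, b}
  rw [sum_pair hab, card_insert_star hae, card_insert_star hbe, card_insert_of_notMem he,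
    card_pair hab, Nat.choose_self] at hbonferroni
  by_contra! hsat
  have ha := mem_saturated.1 (not_not.1 fun h => hsat a h hae)
  have hb := mem_saturated.1 (not_not.1 fun h => hsat b h hbe)
  omega

end Saturated

section SmallNeighbourhood

open scoped Classical in
/-- The edges of `D` whose only end in `Z` is `a`. -/
noncomputable def outerStar (inc : ν → ι → Prop) (D : Finset ι) (Z : Finset ν) (a : ν) :
    Finset ι :=
  {e ∈ edgeStar inc D a | ∀ z ∈ Z, inc z e → z = a}

theorem mem_outerStar {D : Finset ι} {Z : Finset ν} {a : ν} {e : ι} :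
    e ∈ outerStar inc D Z a ↔ e ∈ edgeStar inc D a ∧ ∀ z ∈ Z, inc z e → z = a := by
  simp [outerStar]

theorem outerStar_subset (D : Finset ι) (Z : Finset ν) (a : ν) :
    outerStar inc D Z a ⊆ edgeStar inc D a :=
  fun _ he => (mem_outerStar.1 he).1

namespace IsSimpleIncidence

theorem le_card_outerStar_add_card [Fintype ι] (hinc : IsSimpleIncidence inc) {D : Finset ι}
    {Z : Finset ν} {a : ν} (ha : a ∈ Z) (hdeg : d ≤ #(edgeStar inc univ a))
    (haZ : ∀ v ∉ Z, ∀ e, inc a e → inc v e → e ∈ D) : d + 1 ≤ #(outerStar inc D Z a) + #Z := by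
  classical
  have hsub : edgeStar inc univ a ⊆ outerStar inc D Z a ∪
      (Z.erase a).biUnion fun z => edgeStar inc univ a ∩ edgeStar inc univ z := by
    intro e he
    by_cases hz : ∃ z ∈ Z, z ≠ a ∧ inc z e
    · obtain ⟨z, hzZ, hza, hze⟩ := hz
      refine mem_union_right _ (mem_biUnion.2 ⟨z, mem_erase.2 ⟨hza, hzZ⟩, mem_inter.2 ⟨he, ?_⟩⟩)
      exact mem_edgeStar.2 ⟨Finset.mem_univ e, hze⟩
    · push Not at hz
      have hae := (mem_edgeStar.1 he).2
      obtain ⟨v, hva, hve⟩ := hinc.exists_other_end hae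
      have heD : e ∈ D := haZ v (fun hv => hz v hv hva hve) e hae hve
      refine mem_union_left _ (mem_outerStar.2 ⟨mem_edgeStar.2 ⟨heD, hae⟩, fun z hzZ hze => ?_⟩)
      by_contra hza
      exact hz z hzZ hza hze
  have hinner : #((Z.erase a).biUnion fun z => edgeStar inc univ a ∩ edgeStar inc univ z) ≤
      #(Z.erase a) * 1 :=
    card_biUnion_le_card_mul _ _ _ fun z hz =>
      hinc.card_edgeStar_inter_le_one univ (ne_of_mem_erase hz).symm
  have hcard := (Finset.card_le_card hsub).trans (card_union_le _ _)
  have hZ := card_erase_add_one ha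
  omega

theorem sum_card_outerStar_add_sum_card_edgeStar_le (hinc : IsSimpleIncidence inc)
    (D : Finset ι) {A K : Finset ν} (hAK : Disjoint A K) [DecidableEq ν] :
    ∑ a ∈ A, #(outerStar inc D (A ∪ K) a) + ∑ v ∈ K, #(edgeStar inc D v) ≤
      #D + (#K).choose 2 := by
  classical
  have eq_of_mem {a v : ν} {e : ι} (he : e ∈ outerStar inc D (A ∪ K) a) (hv : v ∈ A ∪ K)
      (hve : inc v e) : v = a := (mem_outerStar.1 he).2 v hv hve
  have hdisj : Disjoint (A.biUnion (outerStar inc D (A ∪ K))) (K.biUnion (edgeStar inc D)) := by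
    refine (disjoint_biUnion_left _ _ _).2 fun a ha => (disjoint_biUnion_right _ _ _).2
      fun v hv => Finset.disjoint_left.2 fun e he hve => ?_
    have hva := eq_of_mem he (Finset.mem_union_right A hv) (mem_edgeStar.1 hve).2
    exact Finset.disjoint_left.1 hAK ha (hva ▸ hv)
  have houter : #(A.biUnion (outerStar inc D (A ∪ K))) = ∑ a ∈ A, #(outerStar inc D (A ∪ K) a) :=
    card_biUnion fun a _ b hb hab => Finset.disjoint_left.2 fun e he he' =>
      hab (eq_of_mem he (Finset.mem_union_left K hb)
        (mem_edgeStar.1 (outerStar_subset _ _ _ he')).2).symm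
  have hD : A.biUnion (outerStar inc D (A ∪ K)) ∪ K.biUnion (edgeStar inc D) ⊆ D :=
    Finset.union_subset
      (Finset.biUnion_subset.2 fun a _ => (outerStar_subset D _ a).trans (edgeStar_subset D a))
      (Finset.biUnion_subset.2 fun v _ => edgeStar_subset D v)
  have hcard := Finset.card_le_card hD
  rw [card_union_of_disjoint hdisj, houter] at hcard
  have := hinc.sum_card_edgeStar_le D K
  omega

/-- If `D` contains all edges leaving `A ∪ K` from `A`, then few vertices in `A ∪ K` would force
the stars of these vertices to contain more edges than `D` has. -/
theorem four_le_card_union [Fintype ι] [DecidableEq ν] (hinc : IsSimpleIncidence inc)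
    (hd : 4 ≤ d) {D : Finset ι} (hD : #D + 3 ≤ 2 * d) {A K : Finset ν} (hA : A.Nonempty)
    (hdeg : ∀ a ∈ A, d ≤ #(edgeStar inc univ a)) (hAd : ∀ a ∈ A, #(edgeStar inc D a) + 2 ≤ d)
    (hKd : ∀ v ∈ K, d ≤ #(edgeStar inc D v) + 1)
    (hAD : ∀ a ∈ A, ∀ v ∉ A ∪ K, ∀ e, inc a e → inc v e → e ∈ D) : 4 ≤ #(A ∪ K) := by
  have houter (a) (ha : a ∈ A) : d + 1 ≤ #(outerStar inc D (A ∪ K) a) + #(A ∪ K) :=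
    hinc.le_card_outerStar_add_card (Finset.mem_union_left K ha) (hdeg a ha) (hAD a ha)
  obtain ⟨a, ha⟩ := hA
  have hAK : Disjoint A K := Finset.disjoint_left.2 fun v hvA hvK => by
    have := hAd v hvA
    have := hKd v hvK
    omega
  by_contra! hlt
  have hcard : #A + #K = 3 := by
    have := Finset.card_le_card (outerStar_subset (inc := inc) D (A ∪ K) a)
    have := houter a ha
    have := hAd a ha
    rw [← card_union_of_disjoint hAK]
    omega
  have hsumA : #A • (d - 2) ≤ ∑ a ∈ A, #(outerStar inc D (A ∪ K) a) :=
    card_nsmul_le_sum _ _ _ fun v hv => by have := houter v hv; omega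
  have hsumK : #K • (d - 1) ≤ ∑ v ∈ K, #(edgeStar inc D v) :=
    card_nsmul_le_sum _ _ _ fun v hv => by have := hKd v hv; omega
  have hsum := hinc.sum_card_outerStar_add_sum_card_edgeStar_le D hAK
  have hA0 : 0 < #A := card_pos.2 ⟨a, ha⟩
  have hchoose : (#K).choose 2 ≤ #K := by
    have : #K ≤ 2 := by omega
    interval_cases #K <;> decide
  obtain ⟨n, rfl⟩ : ∃ n, d = n + 2 := ⟨d - 2, by omega⟩
  have hprod : (#A + #K) * n = 3 * n := by rw [hcard]
  simp only [smul_eq_mul, Nat.add_sub_cancel, Nat.add_succ_sub_one] at hsumA hsumK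
  linarith

end IsSimpleIncidence

end SmallNeighbourhood

section LineGraph

/-- Some `n` nodes of `s` are matched along edges of `H` with `n` nodes of `t`. -/
def HasMatching (H : SimpleGraph ι) (s t : Set ι) (n : ℕ) : Prop :=
  ∃ p q : Fin n → ι, p.Injective ∧ q.Injective ∧ ∀ i, p i ∈ s ∧ q i ∈ t ∧ H.Adj (p i) (q i)

theorem HasMatching.le_card_add_card {s t X : Set ι} {n : ℕ} (h : HasMatching H s t n)
    {D D₁ D₂ : Finset ι} (hX : IsComponentUnion H D X) (hs : ∀ e ∈ s, e ∉ D → e ∈ X)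
    (ht : ∀ e ∈ t, e ∉ D → e ∉ X) (hD₁ : ∀ e ∈ s, e ∈ D → e ∈ D₁) (hD₂ : ∀ e ∈ t, e ∈ D → e ∈ D₂) :
    n ≤ #D₁ + #D₂ := by
  classical
  obtain ⟨p, q, hp, hq, hpq⟩ := h
  have hcover : (univ : Finset (Fin n)) ⊆
      univ.filter (fun i => p i ∈ D₁) ∪ univ.filter (fun i => q i ∈ D₂) := by
    intro i _
    obtain ⟨hps, hqt, hadj⟩ := hpq i
    simp only [Finset.mem_union, Finset.mem_filter, Finset.mem_univ, true_and]
    by_contra! hD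
    have hpD : p i ∉ D := fun h => hD.1 (hD₁ _ hps h)
    have hqD : q i ∉ D := fun h => hD.2 (hD₂ _ hqt h)
    exact ht _ hqt hqD ((hX hadj hpD hqD).1 (hs _ hps hpD))
  calc n = #(univ : Finset (Fin n)) := (card_fin n).symm
    _ ≤ _ := (Finset.card_le_card hcover).trans (card_union_le _ _)
    _ ≤ #D₁ + #D₂ := Nat.add_le_add
        (card_le_card_of_injOn p (fun i hi => (Finset.mem_filter.1 hi).2) hp.injOn)
        (card_le_card_of_injOn q (fun i hi => (Finset.mem_filter.1 hi).2) hq.injOn)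

/-- `H` is a graph on the edges of the graph `G` with the local properties of the graph `G_1(P)`
of a `d`-polytope: the edges at a vertex span a `(d-1)`-connected graph, and `d-1` of the other
edges at one end of an edge are matched with other edges at its other end. -/
structure IsEdgeGraph (inc : ν → ι → Prop) (G : SimpleGraph ν) (H : SimpleGraph ι) (d : ℕ) :
    Prop extends IsSimpleIncidence inc where
  exists_edge ⦃a b : ν⦄ (hab : G.Adj a b) : ∃ e, inc a e ∧ inc b e
  link_mConnected (v : ν) : MConnected (H.induce {e | inc v e}) (d - 1)
  hasMatching ⦃a b : ν⦄ (hab : a ≠ b) ⦃e : ι⦄ (hae : inc a e) (hbe : inc b e) :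
    HasMatching H {f | f ≠ e ∧ inc a f} {f | f ≠ e ∧ inc b f} (d - 1)

namespace IsEdgeGraph

variable {D : Finset ι} {X : Set ι}

theorem le_card_edgeStar [Fintype ι] (h : IsEdgeGraph inc G H d) (v : ν) :
    d ≤ #(edgeStar inc univ v) := by
  have hcard := (h.link_mConnected v).1
  have heq : {e | inc v e} = (edgeStar inc univ v : Set ι) := by
    ext
    simp [mem_edgeStar]
  rw [heq, Nat.card_coe_set_eq, ncard_coe_finset] at hcard
  omega

theorem mem_of_inc (h : IsEdgeGraph inc G H d) (hX : IsComponentUnion H D X) {v : ν}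
    (hv : #(edgeStar inc D v) + 2 ≤ d) {e f : ι} (he : inc v e) (hf : inc v f) (heD : e ∉ D)
    (hfD : f ∉ D) (heX : e ∈ X) : f ∈ X := by
  have hX' : IsComponentUnion (H.induce {e | inc v e}) (Subtype.val ⁻¹' (D : Set ι))
      (Subtype.val ⁻¹' X) := fun _ _ hadj ha hb => hX hadj ha hb
  have hcard : (Subtype.val ⁻¹' (D : Set ι) : Set {e | inc v e}).ncard ≤ #(edgeStar inc D v) := by
    rw [← ncard_coe_finset, ← ncard_image_of_injective _ Subtype.val_injective]
    refine ncard_le_ncard ?_ (Finset.finite_toSet _)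
    rintro _ ⟨e, heD, rfl⟩
    exact mem_edgeStar.2 ⟨heD, e.2⟩
  exact (h.link_mConnected v).mem_of_mem (hcard.trans_lt (by omega)) hX'
    (a := ⟨e, he⟩) (b := ⟨f, hf⟩) heD hfD heX

theorem lt_card_edgeStar_add_card_edgeStar (h : IsEdgeGraph inc G H d)
    (hX : IsComponentUnion H D X) {a b : ν} (hab : G.Adj a b)
    (ha : ∀ e, inc a e → e ∉ D → e ∈ X) (hb : ∀ e, inc b e → e ∉ D → e ∉ X) :
    d < #(edgeStar inc D a) + #(edgeStar inc D b) := by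
  classical
  obtain ⟨e, hae, hbe⟩ := h.exists_edge hab
  have heD : e ∈ D := by_contra fun heD => hb e hbe heD (ha e hae heD)
  have hle : d - 1 ≤ #((edgeStar inc D a).erase e) + #((edgeStar inc D b).erase e) :=
    (h.hasMatching hab.ne hae hbe).le_card_add_card hX (fun f hf => ha f hf.2)
      (fun f hf => hb f hf.2) (fun f hf hfD => mem_erase.2 ⟨hf.1, mem_edgeStar.2 ⟨hfD, hf.2⟩⟩)
      (fun f hf hfD => mem_erase.2 ⟨hf.1, mem_edgeStar.2 ⟨hfD, hf.2⟩⟩)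
  have := card_erase_add_one (mem_edgeStar.2 ⟨heD, hae⟩)
  have := card_erase_add_one (mem_edgeStar.2 ⟨heD, hbe⟩)
  omega

section Side

variable [Fintype ν]

open scoped Classical in
/-- The unsaturated vertices all of whose edges outside `D` belong to `X`. -/
noncomputable def side (inc : ν → ι → Prop) (d : ℕ) (D : Finset ι) (X : Set ι) : Finset ν :=
  {v | v ∉ saturated inc d D ∧ ∀ e, inc v e → e ∉ D → e ∈ X}

theorem mem_side {v : ν} :
    v ∈ side inc d D X ↔ v ∉ saturated inc d D ∧ ∀ e, inc v e → e ∉ D → e ∈ X := by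
  simp [side]

theorem mem_side_of_inc (h : IsEdgeGraph inc G H d) (hX : IsComponentUnion H D X) {v : ν}
    (hv : v ∉ saturated inc d D) {e : ι} (he : inc v e) (heD : e ∉ D) (heX : e ∈ X) :
    v ∈ side inc d D X :=
  mem_side.2 ⟨hv, fun _ hf hfD => h.mem_of_inc hX (notMem_saturated.1 hv) he hf heD hfD heX⟩

theorem mem_side_or_mem_side_compl (h : IsEdgeGraph inc G H d) (hX : IsComponentUnion H D X)
    {v : ν} (hv : v ∉ saturated inc d D) : v ∈ side inc d D X ∨ v ∈ side inc d D Xᶜ := by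
  by_cases hvX : ∃ e, inc v e ∧ e ∉ D ∧ e ∈ X
  · obtain ⟨e, he, heD, heX⟩ := hvX
    exact .inl (h.mem_side_of_inc hX hv he heD heX)
  · push Not at hvX
    exact .inr (mem_side.2 ⟨hv, hvX⟩)

theorem disjoint_side_side_compl (h : IsEdgeGraph inc G H d) :
    Disjoint (side inc d D X) (side inc d D Xᶜ) := by
  have := h.finite
  have := Fintype.ofFinite ι
  refine Finset.disjoint_left.2 fun v hv hv' => ?_
  obtain ⟨hsat, hvX⟩ := mem_side.1 hv
  have hlt := notMem_saturated.1 hsat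
  have hdeg := h.le_card_edgeStar v
  obtain ⟨e, he, heD⟩ := exists_mem_notMem_of_card_lt_card
    (show #(edgeStar inc D v) < #(edgeStar inc univ v) by omega)
  have hve := (mem_edgeStar.1 he).2
  have heD' : e ∉ D := fun h => heD (mem_edgeStar.2 ⟨h, hve⟩)
  exact (mem_side.1 hv').2 e hve heD' (hvX e hve heD')

theorem four_le_card_side_union_saturated [DecidableEq ν] (h : IsEdgeGraph inc G H d)
    (hd : 4 ≤ d) (hD : #D + 3 ≤ 2 * d) (hX : IsComponentUnion H D X)
    (hne : (side inc d D X).Nonempty) : 4 ≤ #(side inc d D X ∪ saturated inc d D) := by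
  have := h.finite
  have := Fintype.ofFinite ι
  refine h.four_le_card_union hd hD hne (fun a _ => h.le_card_edgeStar a)
    (fun a ha => notMem_saturated.1 (mem_side.1 ha).1) (fun v hv => mem_saturated.1 hv) ?_
  intro a ha v hv e hae hve
  by_contra heD
  have heX := (mem_side.1 ha).2 e hae heD
  rw [Finset.mem_union, not_or] at hv
  exact hv.1 (h.mem_side_of_inc hX hv.2 hve heD heX)

theorem sum_side_add_sum_side_compl_lt (h : IsEdgeGraph inc G H d) (hd : 4 ≤ d)
    (hD : #D + 3 ≤ 2 * d) :
    ∑ v ∈ side inc d D X, #(edgeStar inc D v) + ∑ v ∈ side inc d D Xᶜ, #(edgeStar inc D v) <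
      (d + 1) * (3 - #(saturated inc d D) + 1) := by
  classical
  set K := saturated inc d D
  have hK2 : #K ≤ 2 := h.card_saturated_le_two hd hD
  have hdisj : Disjoint (side inc d D X ∪ side inc d D Xᶜ) K :=
    Finset.disjoint_left.2 fun v hv =>
      (Finset.mem_union.1 hv).elim (fun hv => (mem_side.1 hv).1) fun hv => (mem_side.1 hv).1
  have hsum : ∑ v ∈ side inc d D X, #(edgeStar inc D v) +
      ∑ v ∈ side inc d D Xᶜ, #(edgeStar inc D v) + ∑ v ∈ K, #(edgeStar inc D v) ≤ 2 * #D := by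
    rw [← sum_union h.disjoint_side_side_compl, ← sum_union hdisj, ← h.sum_card_edgeStar D]
    exact sum_le_sum_of_subset (Finset.subset_univ _)
  have hsumK : #K • (d - 1) ≤ ∑ v ∈ K, #(edgeStar inc D v) :=
    card_nsmul_le_sum _ _ _ fun v hv => by have := mem_saturated.1 hv; omega
  rw [smul_eq_mul] at hsumK
  interval_cases #K <;> omega

/-- Adjacent vertices on different sides have more than `d` edges of `D` together. Hence, for every
threshold `t`, deleting the vertices of one side with at least `t` edges of `D` and those of the
other side with at least `d + 2 - t` edges of `D` separates the sides; the average number of these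
vertices is small. -/
theorem exists_isComponentUnion_side (h : IsEdgeGraph inc G H d) (hd : 4 ≤ d)
    (hD : #D + 3 ≤ 2 * d) (hX : IsComponentUnion H D X) :
    ∃ C, #C ≤ 3 ∧ saturated inc d D ⊆ C ∧ IsComponentUnion G C (side inc d D X) := by
  classical
  set K := saturated inc d D
  set A := side inc d D X
  set B := side inc d D Xᶜ
  have hK2 : #K ≤ 2 := h.card_saturated_le_two hd hD
  obtain ⟨t, ht⟩ := exists_card_filter_add_card_filter_le A B (fun a => #(edgeStar inc D a))
    (fun b => #(edgeStar inc D b)) (h.sum_side_add_sum_side_compl_lt hd hD)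
  change _ ≤ 3 - #K at ht
  set A' := {a ∈ A | t ≤ #(edgeStar inc D a)}
  set B' := {b ∈ B | d + 1 + 1 - t ≤ #(edgeStar inc D b)}
  have not_adj {a b : ν} (ha : a ∈ A) (haC : a ∉ K ∪ (A' ∪ B')) (hbC : b ∉ K ∪ (A' ∪ B'))
      (hab : G.Adj a b) : b ∈ A := by
    simp only [Finset.mem_union, not_or, A', B', Finset.mem_filter, not_and, not_le] at haC hbC
    refine (h.mem_side_or_mem_side_compl hX hbC.1).resolve_right fun hb => ?_
    have hlt := h.lt_card_edgeStar_add_card_edgeStar hX hab (mem_side.1 ha).2 (mem_side.1 hb).2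
    have hat := haC.2.1 ha
    have hbt := hbC.2.2 hb
    omega
  refine ⟨K ∪ (A' ∪ B'), ?_, Finset.subset_union_left, fun a b hab haC hbC =>
    ⟨fun ha => not_adj ha haC hbC hab, fun hb => not_adj hb hbC haC hab.symm⟩⟩
  have := card_union_le K (A' ∪ B')
  have := card_union_le A' B'
  omega

end Side

theorem mem_of_notMem (h : IsEdgeGraph inc G H d) (hd : 4 ≤ d) (hG : MConnected G d)
    (hD : #D + 3 ≤ 2 * d) (hX : IsComponentUnion H D X) {e f : ι} (he : e ∉ D) (hf : f ∉ D)
    (heX : e ∈ X) : f ∈ X := by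
  classical
  have := hG.finite
  have := Fintype.ofFinite ν
  by_contra hfX
  obtain ⟨a, haK, hae⟩ := h.exists_end_notMem_saturated hD he
  obtain ⟨b, hbK, hbf⟩ := h.exists_end_notMem_saturated hD hf
  have hA := h.four_le_card_side_union_saturated hd hD hX ⟨a, h.mem_side_of_inc hX haK hae he heX⟩
  have hB := h.four_le_card_side_union_saturated hd hD hX.compl
    ⟨b, h.mem_side_of_inc hX.compl hbK hbf hf hfX⟩
  obtain ⟨C, hC, hKC, hCA⟩ := h.exists_isComponentUnion_side hd hD hX
  have exists_notMem {A : Finset ν} (hA : 4 ≤ #(A ∪ saturated inc d D)) : ∃ a ∈ A, a ∉ C := by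
    by_contra! hAC
    have := Finset.card_le_card (Finset.union_subset hAC hKC)
    omega
  obtain ⟨a, haA, haC⟩ := exists_notMem hA
  obtain ⟨b, hbB, hbC⟩ := exists_notMem hB
  have hbA : b ∈ side inc d D X :=
    hG.mem_of_mem (by rw [ncard_coe_finset]; omega) hCA haC hbC haA
  exact Finset.disjoint_left.1 h.disjoint_side_side_compl hbA hbB

theorem two_mul_sub_one_le_card [Finite ι] (h : IsEdgeGraph inc G H d) {a b : ν} (hab : a ≠ b) :
    2 * d - 1 ≤ Nat.card ι := by
  classical
  have := Fintype.ofFinite ι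
  have hbonferroni := h.sum_card_edgeStar_le_card univ {a, b}
  rw [sum_pair hab, card_pair hab, Nat.choose_self, card_univ, ← Nat.card_eq_fintype_card]
    at hbonferroni
  have ha := h.le_card_edgeStar a
  have hb := h.le_card_edgeStar b
  omega

theorem mConnected (h : IsEdgeGraph inc G H d) (hd : 4 ≤ d) (hG : MConnected G d) :
    MConnected H (2 * d - 2) := by
  have := hG.finite
  have := h.finite
  have : Nontrivial ν := Finite.one_lt_card_iff_nontrivial.1 (by have := hG.1; omega)
  obtain ⟨a, b, hab⟩ := exists_pair_ne ν
  refine mConnected_of_forall_isComponentUnion ?_ fun S hS hSd X hX e f he hf heX => ?_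
  · have := h.two_mul_sub_one_le_card hab
    omega
  · lift S to Finset ι using hS
    rw [ncard_coe_finset] at hSd
    exact h.mem_of_notMem hd hG (by omega) hX he hf heX

end IsEdgeGraph

end LineGraph

end Incidence

/-! ### Faces of finite point configurations -/

section Configuration

variable {E : Type*} [AddCommGroup E] [Module ℝ E] {V T U F : Set E} {l : E →ₗ[ℝ] ℝ} {v : E}
  {k : ℕ}

/-- The dimension of the affine hull of a set of points, with value `0` for the empty set. -/
noncomputable def affDim (T : Set E) : ℕ :=
  Module.finrank ℝ (vectorSpan ℝ T)

/-- `T` consists of the points of the configuration `V` on a face of the convex hull of `V`: it is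
empty, or the set of minimizers over `V` of some linear functional. -/
def IsConfigFace (V T : Set E) : Prop :=
  T ⊆ V ∧ ∃ (l : E →ₗ[ℝ] ℝ) (c : ℝ), (∀ x ∈ T, l x = c) ∧ ∀ x ∈ V, x ∉ T → c < l x

theorem vectorSpan_le_ker (hl : ∀ x ∈ T, ∀ y ∈ T, l x = l y) :
    vectorSpan ℝ T ≤ LinearMap.ker l := by
  rw [vectorSpan_def, Submodule.span_le]
  rintro _ ⟨x, hx, y, hy, rfl⟩
  simp [hl x hx y hy]

theorem affDim_mono (hV : V.Finite) (hT : T ⊆ V) : affDim T ≤ affDim V :=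
  have := finiteDimensional_vectorSpan_of_finite ℝ hV
  Submodule.finrank_mono (vectorSpan_mono ℝ hT)

theorem affDim_eq_zero_iff (hT : T.Finite) : affDim T = 0 ↔ T.Subsingleton := by
  have := finiteDimensional_vectorSpan_of_finite ℝ hT
  rw [affDim, Submodule.finrank_eq_zero, vectorSpan_eq_bot_iff_subsingleton]

namespace IsConfigFace

theorem refl (V : Set E) : IsConfigFace V V :=
  ⟨Subset.rfl, 0, 0, by simp, fun _ hx h => absurd hx h⟩

theorem mem (hv : IsConfigFace V {v}) : v ∈ V :=
  hv.1 rfl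

theorem of_subset (hU : IsConfigFace V U) (hTV : T ⊆ V) (hUT : U ⊆ T) : IsConfigFace T U := by
  obtain ⟨_, l, c, hUc, hlt⟩ := hU
  exact ⟨hUT, l, c, hUc, fun x hx => hlt x (hTV hx)⟩

/-- A large multiple of a functional exposing `T` in `V` dominates a functional exposing `U`
in `T`. -/
theorem trans (hV : V.Finite) (hT : IsConfigFace V T) (hU : IsConfigFace T U) :
    IsConfigFace V U := by
  obtain ⟨hTV, l, c, hTc, hlt⟩ := hT
  obtain ⟨hUT, l', c', hUc, hlt'⟩ := hU
  obtain ⟨K, hK⟩ := (hV.image fun x => (c' - l' x) / (l x - c)).bddAbove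
  refine ⟨hUT.trans hTV, (K + 1) • l + l', (K + 1) * c + c', fun x hx => ?_, fun x hx hxU => ?_⟩
  · simp [hTc x (hUT hx), hUc x hx]
  · simp only [LinearMap.add_apply, LinearMap.smul_apply, smul_eq_mul]
    by_cases hxT : x ∈ T
    · rw [hTc x hxT]
      linarith [hlt' x hxT hxU]
    · have hpos : 0 < l x - c := sub_pos.2 (hlt x hx hxT)
      have hle : (c' - l' x) / (l x - c) ≤ K := hK ⟨x, hx, rfl⟩
      rw [div_le_iff₀ hpos] at hle
      linarith

theorem inter (hT : IsConfigFace V T) (hU : IsConfigFace V U) : IsConfigFace V (T ∩ U) := by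
  obtain ⟨hTV, l, c, hTc, hlt⟩ := hT
  obtain ⟨-, l', c', hUc, hlt'⟩ := hU
  have hle (x) (hx : x ∈ V) : c ≤ l x := by
    by_cases hxT : x ∈ T
    exacts [(hTc x hxT).ge, (hlt x hx hxT).le]
  have hle' (x) (hx : x ∈ V) : c' ≤ l' x := by
    by_cases hxU : x ∈ U
    exacts [(hUc x hxU).ge, (hlt' x hx hxU).le]
  refine ⟨inter_subset_left.trans hTV, l + l', c + c', fun x hx => ?_, fun x hx hxTU => ?_⟩
  · simp [hTc x hx.1, hUc x hx.2]
  · rw [mem_inter_iff, not_and_or] at hxTU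
    rcases hxTU with hxT | hxU
    · exact add_lt_add_of_lt_of_le (hlt x hx hxT) (hle' x hx)
    · exact add_lt_add_of_le_of_lt (hle x hx) (hlt' x hx hxU)

theorem affDim_lt (hV : V.Finite) (hT : IsConfigFace V T) (hne : T.Nonempty) (hTV : T ≠ V) :
    affDim T < affDim V := by
  have := finiteDimensional_vectorSpan_of_finite ℝ hV
  obtain ⟨hsub, l, c, hTc, hlt⟩ := hT
  obtain ⟨t, ht⟩ := hne
  obtain ⟨x, hx, hxT⟩ := exists_of_ssubset (hsub.ssubset_of_ne hTV)
  refine Submodule.finrank_lt_finrank_of_lt ((vectorSpan_mono ℝ hsub).lt_of_ne fun heq => ?_)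
  have hker : vectorSpan ℝ V ≤ LinearMap.ker l :=
    heq ▸ vectorSpan_le_ker fun x hx y hy => (hTc x hx).trans (hTc y hy).symm
  have hzero := hker (vsub_mem_vectorSpan ℝ hx (hsub ht))
  rw [LinearMap.mem_ker, vsub_eq_sub, map_sub, hTc t ht] at hzero
  linarith [hlt x hx hxT]

/-- The other two points of the configuration have larger values under a functional exposing `b`. -/
theorem eq_or_eq_of_wbtw {a b c : E} (hb : IsConfigFace V {b}) (ha : a ∈ V) (hc : c ∈ V)
    (h : Wbtw ℝ a b c) : b = a ∨ b = c := by
  by_contra! hne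
  obtain ⟨-, l, r, hbr, hlt⟩ := hb
  have hbr : l b = r := hbr b rfl
  have hmem : l b ∈ segment ℝ (l a) (l c) := by
    have h' := h.map l.toAffineMap
    rwa [← mem_segment_iff_wbtw] at h'
  have hseg : segment ℝ (l a) (l c) ⊆ Ioi r :=
    (convex_Ioi r).segment_subset (hlt a ha hne.1.symm) (hlt c hc hne.2.symm)
  exact (hseg hmem).ne' hbr

end IsConfigFace

/-- The points of `V` at which `l` attains its minimum over `V`. -/
def minFace (V : Set E) (l : E →ₗ[ℝ] ℝ) : Set E :=
  {x ∈ V | ∀ y ∈ V, l x ≤ l y}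

theorem minFace_nonempty (hV : V.Finite) (hne : V.Nonempty) (l : E →ₗ[ℝ] ℝ) :
    (minFace V l).Nonempty :=
  V.exists_min_image l hV hne

theorem isConfigFace_minFace (hV : V.Finite) (hne : V.Nonempty) (l : E →ₗ[ℝ] ℝ) :
    IsConfigFace V (minFace V l) := by
  obtain ⟨x, hx⟩ := minFace_nonempty hV hne l
  refine ⟨fun _ hy => hy.1, l, l x, fun y hy => (hy.2 x hx.1).antisymm (hx.2 y hy.1),
    fun y hy hyV => ?_⟩
  by_contra! hle
  exact hyV ⟨hy, fun z hz => hle.trans (hx.2 z hz)⟩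

theorem exists_lt_of_ne {x y : E} (hxy : x ≠ y) : ∃ l : E →ₗ[ℝ] ℝ, l x < l y := by
  have hmem : y - x ∉ (⊥ : Submodule ℝ E) := by simpa [sub_eq_zero] using hxy.symm
  obtain ⟨l, hl, -⟩ := Submodule.exists_le_ker_of_notMem hmem
  rw [map_sub, sub_ne_zero] at hl
  rcases hl.lt_or_gt with hlt | hlt
  · exact ⟨-l, neg_lt_neg hlt⟩
  · exact ⟨l, hlt⟩

theorem exists_isConfigFace_singleton (hV : V.Finite) (hne : V.Nonempty) :
    ∃ v, IsConfigFace V {v} := by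
  induction hn : V.ncard using Nat.strong_induction_on generalizing V with
  | _ n ih =>
    rcases V.subsingleton_or_nontrivial with hsub | ⟨x, hx, y, hy, hxy⟩
    · obtain ⟨v, hv⟩ := hne
      exact ⟨v, hsub.eq_singleton_of_mem hv ▸ .refl V⟩
    · obtain ⟨l, hl⟩ := exists_lt_of_ne hxy
      have hface := isConfigFace_minFace hV hne l
      have hlt : (minFace V l).ncard < n :=
        hn ▸ ncard_lt_ncard ⟨hface.1, fun h => ((h hy).2 x hx).not_gt hl⟩ hV
      obtain ⟨v, hv⟩ := ih _ hlt (hV.subset hface.1) (minFace_nonempty hV hne l) rfl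
      exact ⟨v, hface.trans hV hv⟩

theorem exists_isConfigFace_singleton_mem_minFace (hV : V.Finite) (hne : V.Nonempty)
    (l : E →ₗ[ℝ] ℝ) : ∃ v ∈ minFace V l, IsConfigFace V {v} := by
  have hface := isConfigFace_minFace hV hne l
  obtain ⟨v, hv⟩ := exists_isConfigFace_singleton (hV.subset hface.1) (minFace_nonempty hV hne l)
  exact ⟨v, hv.mem, hface.trans hV hv⟩

theorem affDim_insert_le_ncard {C : Set E} (hC : C.Finite) (a : E) :
    affDim (insert a C) ≤ C.ncard := by
  induction C, hC using Set.Finite.induction_on with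
  | empty =>
    rw [insert_empty_eq, (affDim_eq_zero_iff (finite_singleton a)).2 subsingleton_singleton]
    exact Nat.zero_le _
  | @insert b C hb hC ih =>
    rw [insert_comm, ncard_insert_of_notMem hb hC]
    exact (finrank_vectorSpan_insert_le_set ℝ _ b).trans (Nat.add_le_add_right ih 1)

theorem exists_const_on_of_ncard_lt {C : Set E} (hC : C.Finite) (hCV : C.ncard < affDim V)
    (a : E) : ∃ l : E →ₗ[ℝ] ℝ, (∀ x ∈ C, l x = l a) ∧ ∃ y ∈ V, l y ≠ l a := by
  have := finiteDimensional_vectorSpan_of_finite ℝ (hC.insert a)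
  have hnle : ¬vectorSpan ℝ V ≤ vectorSpan ℝ (insert a C) := fun hle =>
    ((Submodule.finrank_mono hle).trans (affDim_insert_le_ncard hC a)).not_gt hCV
  obtain ⟨w, hwV, hwC⟩ := SetLike.not_le_iff_exists.1 hnle
  obtain ⟨l, hlw, hker⟩ := Submodule.exists_le_ker_of_notMem hwC
  refine ⟨l, fun x hx => ?_, ?_⟩
  · have hzero := hker (vsub_mem_vectorSpan ℝ (mem_insert_of_mem a hx) (mem_insert a C))
    rwa [LinearMap.mem_ker, vsub_eq_sub, map_sub, sub_eq_zero] at hzero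
  · by_contra! hconst
    exact hlw (vectorSpan_le_ker (fun x hx y hy => (hconst x hx).trans (hconst y hy).symm) hwV)

theorem affDim_lt_ncard_vertices (hV : V.Finite) (hne : V.Nonempty) :
    affDim V < {v | IsConfigFace V {v}}.ncard := by
  have hfin : {v | IsConfigFace V {v}}.Finite := hV.subset fun _ hv => hv.mem
  by_contra! hle
  obtain ⟨a, ha⟩ := exists_isConfigFace_singleton hV hne
  have hcard : ({v | IsConfigFace V {v}} \ {a}).ncard < affDim V :=
    (ncard_sdiff_singleton_lt_of_mem (s := {v | IsConfigFace V {v}}) ha hfin).trans_le hle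
  obtain ⟨l, hl, y, hy, hya⟩ := exists_const_on_of_ncard_lt (hfin.subset sdiff_subset) hcard a
  have hconst (v) (hv : IsConfigFace V {v}) : l v = l a := by
    by_cases hva : v = a
    exacts [congrArg l hva, hl v ⟨hv, hva⟩]
  obtain ⟨p, hp, hpV⟩ := exists_isConfigFace_singleton_mem_minFace hV hne l
  obtain ⟨q, hq, hqV⟩ := exists_isConfigFace_singleton_mem_minFace hV hne (-l)
  have hle : l a ≤ l y := hconst p hpV ▸ hp.2 y hy
  have hge : l y ≤ l a := hconst q hqV ▸ neg_le_neg_iff.1 (hq.2 y hy)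
  exact hya (hge.antisymm hle)

theorem exists_vertices_eq_pair (hV : V.Finite) (hdim : affDim V = 1) :
    ∃ a b, a ≠ b ∧ ∀ v, IsConfigFace V {v} ↔ v = a ∨ v = b := by
  have := finiteDimensional_vectorSpan_of_finite ℝ hV
  have hfin : {v | IsConfigFace V {v}}.Finite := hV.subset fun _ hv => hv.mem
  have hne : V.Nonempty := nonempty_iff_ne_empty.2 fun h => by
    rw [(affDim_eq_zero_iff hV).2 (h ▸ subsingleton_empty)] at hdim
    exact zero_ne_one hdim
  have hcard := affDim_lt_ncard_vertices hV hne
  rw [hdim, one_lt_ncard_iff hfin] at hcard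
  obtain ⟨a, b, ha, hb, hab⟩ := hcard
  refine ⟨a, b, hab, fun v => ⟨fun hv => ?_, ?_⟩⟩
  · have hcoll : Collinear ℝ {a, v, b} :=
      (collinear_iff_finrank_le_one.2 hdim.le).subset (by
        rintro x (rfl | rfl | rfl)
        exacts [ha.mem, hv.mem, hb.mem])
    rcases hcoll.wbtw_or_wbtw_or_wbtw with h | h | h
    · exact hv.eq_or_eq_of_wbtw ha.mem hb.mem h
    · rcases hb.eq_or_eq_of_wbtw hv.mem ha.mem h with h | h
      exacts [.inr h.symm, (hab h.symm).elim]
    · rcases ha.eq_or_eq_of_wbtw hb.mem hv.mem h with h | h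
      exacts [(hab h).elim, .inl h.symm]
  · rintro (rfl | rfl)
    exacts [ha, hb]

/-- `T` consists of the points of the configuration `V` on a `k`-dimensional face of the convex hull
of `V`. -/
def IsConfigFaceDim (V T : Set E) (k : ℕ) : Prop :=
  IsConfigFace V T ∧ T.Nonempty ∧ affDim T = k

namespace IsConfigFaceDim

theorem of_subset (hU : IsConfigFaceDim V U k) (hTV : T ⊆ V) (hUT : U ⊆ T) :
    IsConfigFaceDim T U k :=
  ⟨hU.1.of_subset hTV hUT, hU.2⟩

theorem trans (hV : V.Finite) (hT : IsConfigFace V T) (hU : IsConfigFaceDim T U k) :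
    IsConfigFaceDim V U k :=
  ⟨hT.trans hV hU.1, hU.2⟩

theorem eq_of_subset (hV : V.Finite) (hT : IsConfigFaceDim V T k) (hU : IsConfigFace V U)
    (hTU : T ⊆ U) (hUk : affDim U ≤ k) : T = U := by
  by_contra hne
  have hlt := (hT.1.of_subset hU.1 hTU).affDim_lt (hV.subset hU.1) hT.2.1 hne
  have hTk := hT.2.2
  omega

theorem eq_of_ne_of_subset (hV : V.Finite) {T' U' : Set E} (hT : IsConfigFaceDim V T k)
    (hT' : IsConfigFaceDim V T' k) (hne : T ≠ T') (hU : IsConfigFaceDim V U (k + 1))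
    (hU' : IsConfigFaceDim V U' (k + 1)) (hTU : T ⊆ U) (hT'U : T' ⊆ U) (hTU' : T ⊆ U')
    (hT'U' : T' ⊆ U') : U = U' := by
  have hinter : IsConfigFace V (U ∩ U') := hU.1.inter hU'.1
  have hdim : k + 1 ≤ affDim (U ∩ U') := by
    by_contra! hlt
    have hT_eq := hT.eq_of_subset hV hinter (subset_inter hTU hTU') (Nat.le_of_lt_succ hlt)
    have hT'_eq := hT'.eq_of_subset hV hinter (subset_inter hT'U hT'U') (Nat.le_of_lt_succ hlt)
    exact hne (hT_eq.trans hT'_eq.symm)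
  have hdim_eq : affDim (U ∩ U') = k + 1 :=
    ((affDim_mono (hV.subset hU.1.1) inter_subset_left).trans_eq hU.2.2).antisymm hdim
  have hface : IsConfigFaceDim V (U ∩ U') (k + 1) :=
    ⟨hinter, hT.2.1.mono (subset_inter hTU hTU'), hdim_eq⟩
  exact (hface.eq_of_subset hV hU.1 inter_subset_left hU.2.2.le).symm.trans
    (hface.eq_of_subset hV hU'.1 inter_subset_right hU'.2.2.le)

end IsConfigFaceDim

theorem isConfigFaceDim_zero_iff (hV : V.Finite) :
    IsConfigFaceDim V T 0 ↔ ∃ v, IsConfigFace V {v} ∧ T = {v} := by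
  constructor
  · rintro ⟨hT, ⟨v, hv⟩, hdim⟩
    have hTv := ((affDim_eq_zero_iff (hV.subset hT.1)).1 hdim).eq_singleton_of_mem hv
    exact ⟨v, hTv ▸ hT, hTv⟩
  · rintro ⟨v, hv, rfl⟩
    exact ⟨hv, singleton_nonempty v,
      (affDim_eq_zero_iff (finite_singleton v)).2 subsingleton_singleton⟩

theorem finite_setOf_isConfigFaceDim (hV : V.Finite) (k : ℕ) : {T | IsConfigFaceDim V T k}.Finite :=
  hV.finite_subsets.subset fun _ hT => hT.1.1

/-- The graph `G_k` of the convex hull of the configuration `V`, with each face represented by the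
points of `V` on it. -/
def configFaceGraph (V : Set E) (k : ℕ) : SimpleGraph {T // IsConfigFaceDim V T k} where
  Adj T U := T ≠ U ∧ ∃ F, IsConfigFaceDim V F (k + 1) ∧ T.1 ⊆ F ∧ U.1 ⊆ F
  symm := ⟨fun _ _ ⟨hne, F, hF, hT, hU⟩ => ⟨hne.symm, F, hF, hU, hT⟩⟩
  loopless := ⟨fun _ h => h.1 rfl⟩

section VertexFigure

variable {m : E →ₗ[ℝ] ℝ}

/-- The functional `m` attains its minimum over `V` at the vertex `v` only. -/
def Exposes (m : E →ₗ[ℝ] ℝ) (v : E) (V : Set E) : Prop :=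
  v ∈ V ∧ ∀ x ∈ V, x ≠ v → m v < m x

theorem IsConfigFace.exists_exposes (hv : IsConfigFace V {v}) : ∃ m, Exposes m v V := by
  obtain ⟨hvV, m, c, hvc, hlt⟩ := hv
  exact ⟨m, hvV rfl, fun x hx hxv => hvc v rfl ▸ hlt x hx hxv⟩

theorem Exposes.mono (hm : Exposes m v V) (hTV : T ⊆ V) (hvT : v ∈ T) : Exposes m v T :=
  ⟨hvT, fun x hx => hm.2 x (hTV hx)⟩

/-- The projection of `x` from `v` to the hyperplane `m = 1`, with `v` moved to the origin. -/
noncomputable def centralProj (m : E →ₗ[ℝ] ℝ) (v x : E) : E :=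
  (m x - m v)⁻¹ • (x - v)

/-- The vertex figure of `V` at `v`: the projection of the other points of `V` from `v`. -/
def vertexFigure (m : E →ₗ[ℝ] ℝ) (v : E) (V : Set E) : Set E :=
  centralProj m v '' (V \ {v})

/-- The part of `V` corresponding to the part `U` of its vertex figure at `v`. -/
def figureLift (m : E →ₗ[ℝ] ℝ) (v : E) (V U : Set E) : Set E :=
  {x ∈ V | x = v ∨ centralProj m v x ∈ U}

theorem finite_vertexFigure (hV : V.Finite) : (vertexFigure m v V).Finite :=
  hV.sdiff.image _

theorem nonempty_vertexFigure (hV : V.Nontrivial) : (vertexFigure m v V).Nonempty :=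
  Set.Nonempty.image _ (hV.exists_ne v)

theorem vertexFigure_mono (hTV : T ⊆ V) : vertexFigure m v T ⊆ vertexFigure m v V :=
  image_mono (sdiff_subset_sdiff_left hTV)

theorem figureLift_subset (m : E →ₗ[ℝ] ℝ) (v : E) (V U : Set E) : figureLift m v V U ⊆ V :=
  fun _ hx => hx.1

theorem figureLift_mono {U' : Set E} (hU : U ⊆ U') : figureLift m v V U ⊆ figureLift m v V U' :=
  fun _ hx => ⟨hx.1, hx.2.imp_right (@hU _)⟩

theorem vertexFigure_figureLift (hU : U ⊆ vertexFigure m v V) :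
    vertexFigure m v (figureLift m v V U) = U := by
  apply Subset.antisymm
  · rintro _ ⟨x, ⟨hx, hxv⟩, rfl⟩
    exact hx.2.resolve_left hxv
  · intro u hu
    obtain ⟨x, hx, rfl⟩ := hU hu
    exact ⟨x, ⟨⟨hx.1, .inr hu⟩, hx.2⟩, rfl⟩

namespace Exposes

variable {x : E}

theorem mem_figureLift (hm : Exposes m v V) (U : Set E) : v ∈ figureLift m v V U :=
  ⟨hm.1, .inl rfl⟩

theorem figureLift_empty (hm : Exposes m v V) : figureLift m v V ∅ = {v} :=
  Subset.antisymm (fun _ hx => hx.2.resolve_right (notMem_empty _))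
    (singleton_subset_iff.2 (hm.mem_figureLift ∅))

theorem smul_centralProj (hm : Exposes m v V) (hx : x ∈ V) (hxv : x ≠ v) :
    (m x - m v) • centralProj m v x = x - v :=
  smul_inv_smul₀ (sub_pos.2 (hm.2 x hx hxv)).ne' _

theorem mul_apply_centralProj (hm : Exposes m v V) (hx : x ∈ V) (hxv : x ≠ v)
    (l : E →ₗ[ℝ] ℝ) : (m x - m v) * l (centralProj m v x) = l x - l v := by
  rw [← smul_eq_mul, ← map_smul, hm.smul_centralProj hx hxv, map_sub]

theorem apply_centralProj_lt_iff (hm : Exposes m v V) (hx : x ∈ V) (hxv : x ≠ v)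
    (l : E →ₗ[ℝ] ℝ) : l (centralProj m v x) < 0 ↔ l x < l v := by
  rw [← sub_neg (a := l x), ← hm.mul_apply_centralProj hx hxv, ← smul_eq_mul,
    smul_neg_iff_of_pos_left (sub_pos.2 (hm.2 x hx hxv))]

theorem apply_eq_one_of_mem_vertexFigure (hm : Exposes m v V) {u : E}
    (hu : u ∈ vertexFigure m v V) : m u = 1 := by
  obtain ⟨x, ⟨hx, hxv⟩, rfl⟩ := hu
  have hpos := sub_pos.2 (hm.2 x hx hxv)
  exact mul_left_cancel₀ hpos.ne' ((hm.mul_apply_centralProj hx hxv m).trans (mul_one _).symm)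

theorem isConfigFace_vertexFigure (hm : Exposes m v V) (hT : IsConfigFace V T) (hvT : v ∈ T) :
    IsConfigFace (vertexFigure m v V) (vertexFigure m v T) := by
  obtain ⟨hTV, l, c, hTc, hlt⟩ := hT
  refine ⟨vertexFigure_mono hTV, l, 0, ?_, ?_⟩
  · rintro _ ⟨x, ⟨hx, hxv⟩, rfl⟩
    have hmul := hm.mul_apply_centralProj (hTV hx) hxv l
    rw [hTc x hx, hTc v hvT, sub_self] at hmul
    exact (mul_eq_zero.1 hmul).resolve_left (sub_pos.2 (hm.2 x (hTV hx) hxv)).ne'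
  · rintro _ ⟨x, ⟨hx, hxv⟩, rfl⟩ hxT
    have hxl := hlt x hx fun h => hxT ⟨x, ⟨h, hxv⟩, rfl⟩
    rw [← hTc v hvT, ← sub_pos, ← hm.mul_apply_centralProj hx hxv] at hxl
    exact pos_of_mul_pos_right hxl (sub_pos.2 (hm.2 x hx hxv)).le

theorem isConfigFace_figureLift (hm : Exposes m v V) (hU : IsConfigFace (vertexFigure m v V) U) :
    IsConfigFace V (figureLift m v V U) := by
  obtain ⟨-, l, c, hUc, hlt⟩ := hU
  have apply_eq {x} (hx : x ∈ V) (hxv : x ≠ v) :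
      (l - c • m) x = l v - c * m v + (m x - m v) * (l (centralProj m v x) - c) := by
    have hmul := hm.mul_apply_centralProj hx hxv l
    simp only [LinearMap.sub_apply, LinearMap.smul_apply, smul_eq_mul]
    linear_combination -hmul
  refine ⟨figureLift_subset m v V U, l - c • m, l v - c * m v, fun x hx => ?_,
    fun x hx hxU => ?_⟩
  · by_cases hxv : x = v
    · simp [hxv]
    · rw [apply_eq hx.1 hxv, hUc _ (hx.2.resolve_left hxv)]
      ring
  · have hxv : x ≠ v := fun h => hxU ⟨hx, .inl h⟩
    rw [apply_eq hx hxv]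
    have hpos := mul_pos (sub_pos.2 (hm.2 x hx hxv))
      (sub_pos.2 (hlt _ ⟨x, ⟨hx, hxv⟩, rfl⟩ fun h => hxU ⟨hx, .inr h⟩))
    linarith

theorem figureLift_vertexFigure (hm : Exposes m v V) (hT : IsConfigFace V T) (hvT : v ∈ T) :
    figureLift m v V (vertexFigure m v T) = T := by
  obtain ⟨hTV, l, c, hTc, hlt⟩ := hT
  apply Subset.antisymm
  · rintro x ⟨hx, hxT⟩
    by_contra hxT'
    have hxv : x ≠ v := fun h => hxT' (h ▸ hvT)
    obtain ⟨y, ⟨hy, hyv⟩, hyx⟩ := hxT.resolve_left hxv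
    have hmulx := hm.mul_apply_centralProj hx hxv l
    have hmuly := hm.mul_apply_centralProj (hTV hy) hyv l
    rw [hTc y hy, hTc v hvT, sub_self, hyx] at hmuly
    have hzero := (mul_eq_zero.1 hmuly).resolve_left (sub_pos.2 (hm.2 y (hTV hy) hyv)).ne'
    rw [hzero, mul_zero, hTc v hvT] at hmulx
    linarith [hlt x hx hxT']
  · intro x hx
    by_cases hxv : x = v
    exacts [⟨hTV hx, .inl hxv⟩, ⟨hTV hx, .inr ⟨x, ⟨hx, hxv⟩, rfl⟩⟩]

theorem span_vertexFigure (hm : Exposes m v V) :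
    Submodule.span ℝ (vertexFigure m v V) = vectorSpan ℝ V := by
  rw [vectorSpan_eq_span_vsub_set_right ℝ hm.1]
  apply le_antisymm <;> rw [Submodule.span_le]
  · rintro _ ⟨x, ⟨hx, -⟩, rfl⟩
    exact Submodule.smul_mem _ _ (Submodule.subset_span ⟨x, hx, rfl⟩)
  · rintro _ ⟨x, hx, rfl⟩
    by_cases hxv : x = v
    · simp [hxv]
    · change x - v ∈ _
      rw [← hm.smul_centralProj hx hxv]
      exact Submodule.smul_mem _ _ (Submodule.subset_span ⟨x, ⟨hx, hxv⟩, rfl⟩)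

end Exposes

theorem span_eq_vectorSpan_sup_span_singleton {u : E} (hu : u ∈ U) :
    Submodule.span ℝ U = vectorSpan ℝ U ⊔ Submodule.span ℝ {u} := by
  apply le_antisymm
  · rw [Submodule.span_le]
    intro x hx
    exact Submodule.mem_sup.2 ⟨x - u, vsub_mem_vectorSpan ℝ hx hu, u,
      Submodule.mem_span_singleton_self u, sub_add_cancel x u⟩
  · refine sup_le ?_ (Submodule.span_mono (singleton_subset_iff.2 hu))
    rw [vectorSpan_def, Submodule.span_le]
    rintro _ ⟨x, hx, y, hy, rfl⟩
    exact Submodule.sub_mem _ (Submodule.subset_span hx) (Submodule.subset_span hy)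

theorem finrank_span_of_apply_eq_one (hU : U.Finite) (hne : U.Nonempty)
    (hm : ∀ x ∈ U, m x = 1) : Module.finrank ℝ (Submodule.span ℝ U) = affDim U + 1 := by
  have := finiteDimensional_vectorSpan_of_finite ℝ hU
  obtain ⟨u, hu⟩ := hne
  have hu0 : u ≠ 0 := fun h => one_ne_zero ((hm u hu).symm.trans (by rw [h, map_zero]))
  have hdisj : Disjoint (vectorSpan ℝ U) (Submodule.span ℝ {u}) := by
    rw [Submodule.disjoint_span_singleton' hu0]
    intro hmem
    have hker := vectorSpan_le_ker (fun x hx y hy => (hm x hx).trans (hm y hy).symm) hmem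
    exact one_ne_zero ((hm u hu).symm.trans hker)
  have hsum := Submodule.finrank_sup_add_finrank_inf_eq (vectorSpan ℝ U) (Submodule.span ℝ {u})
  rwa [hdisj.eq_bot, finrank_bot, add_zero, finrank_span_singleton hu0,
    ← span_eq_vectorSpan_sup_span_singleton hu] at hsum

namespace Exposes

theorem affDim_vertexFigure (hm : Exposes m v V) (hV : V.Finite)
    (hne : (vertexFigure m v V).Nonempty) : affDim (vertexFigure m v V) + 1 = affDim V := by
  rw [← finrank_span_of_apply_eq_one (finite_vertexFigure hV) hne
    fun _ => hm.apply_eq_one_of_mem_vertexFigure, hm.span_vertexFigure, affDim]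

theorem affDim_figureLift (hm : Exposes m v V) (hV : V.Finite) (hU : U ⊆ vertexFigure m v V)
    (hne : U.Nonempty) : affDim (figureLift m v V U) = affDim U + 1 := by
  have hfig := vertexFigure_figureLift hU
  have hlift : Exposes m v (figureLift m v V U) :=
    hm.mono (figureLift_subset m v V U) (hm.mem_figureLift U)
  rw [← hlift.affDim_vertexFigure (hV.subset (figureLift_subset m v V U)) (hfig.symm ▸ hne), hfig]

theorem isConfigFaceDim_figureLift (hm : Exposes m v V) (hV : V.Finite)
    (hU : IsConfigFaceDim (vertexFigure m v V) U k) :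
    IsConfigFaceDim V (figureLift m v V U) (k + 1) :=
  ⟨hm.isConfigFace_figureLift hU.1, ⟨v, hm.mem_figureLift U⟩,
    (hm.affDim_figureLift hV hU.1.1 hU.2.1).trans (congrArg (· + 1) hU.2.2)⟩

theorem isConfigFaceDim_vertexFigure (hm : Exposes m v V) (hV : V.Finite)
    (hT : IsConfigFaceDim V T (k + 1)) (hvT : v ∈ T) :
    IsConfigFaceDim (vertexFigure m v V) (vertexFigure m v T) k := by
  have hTfin := hV.subset hT.1.1
  have hTn : T.Nontrivial := by
    rw [← not_subsingleton_iff, ← affDim_eq_zero_iff hTfin, hT.2.2]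
    exact k.succ_ne_zero
  have hne : (vertexFigure m v T).Nonempty := nonempty_vertexFigure hTn
  have hdim := (hm.mono hT.1.1 hvT).affDim_vertexFigure hTfin hne
  exact ⟨hm.isConfigFace_vertexFigure hT.1 hvT, hne,
    Nat.succ_injective (hdim.trans hT.2.2)⟩

/-- The faces of the vertex figure at `v`, as a graph, are the faces of `V` through `v`, one
dimension higher. -/
def linkIso (hm : Exposes m v V) (hV : V.Finite) (k : ℕ) :
    configFaceGraph (vertexFigure m v V) k ≃g
      (configFaceGraph V (k + 1)).induce {T | v ∈ T.1} where
  toFun U := ⟨⟨figureLift m v V U.1, hm.isConfigFaceDim_figureLift hV U.2⟩, hm.mem_figureLift U.1⟩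
  invFun T := ⟨vertexFigure m v T.1.1, hm.isConfigFaceDim_vertexFigure hV T.1.2 T.2⟩
  left_inv U := Subtype.ext (vertexFigure_figureLift U.2.1.1)
  right_inv T := Subtype.ext (Subtype.ext (hm.figureLift_vertexFigure T.1.2.1 T.2))
  map_rel_iff' {U U'} := by
    refine and_congr (not_congr ⟨fun h => Subtype.ext ?_, fun h => h ▸ rfl⟩) ⟨?_, ?_⟩
    · have hlift : figureLift m v V U.1 = figureLift m v V U'.1 := congrArg Subtype.val h
      rw [← vertexFigure_figureLift U.2.1.1, hlift, vertexFigure_figureLift U'.2.1.1]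
    · rintro ⟨F, hF, hUF, hU'F⟩
      refine ⟨vertexFigure m v F, hm.isConfigFaceDim_vertexFigure hV hF
        (hUF (hm.mem_figureLift U.1)), ?_, ?_⟩
      · exact (vertexFigure_figureLift U.2.1.1).symm.subset.trans (vertexFigure_mono hUF)
      · exact (vertexFigure_figureLift U'.2.1.1).symm.subset.trans (vertexFigure_mono hU'F)
    · rintro ⟨F, hF, hUF, hU'F⟩
      exact ⟨figureLift m v V F, hm.isConfigFaceDim_figureLift hV hF, figureLift_mono hUF,
        figureLift_mono hU'F⟩

end Exposes

end VertexFigure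

/-! ### Balinski's theorem -/

section Balinski

variable {C X : Set E} {a b x : E}

/-- The graph of vertices and edges of the convex hull of `V`. The points of `E` that are not
vertices are isolated nodes, so that the graphs of the faces of `V` are subgraphs. -/
def vertexGraph (V : Set E) : SimpleGraph E where
  Adj a b := a ≠ b ∧ IsConfigFace V {a} ∧ IsConfigFace V {b} ∧
    ∃ T, IsConfigFaceDim V T 1 ∧ a ∈ T ∧ b ∈ T
  symm := ⟨fun _ _ ⟨hne, ha, hb, T, hT, haT, hbT⟩ => ⟨hne.symm, hb, ha, T, hT, hbT, haT⟩⟩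
  loopless := ⟨fun _ h => h.1 rfl⟩

theorem vertexGraph_mono (hV : V.Finite) (hT : IsConfigFace V T) :
    vertexGraph T ≤ vertexGraph V :=
  fun _ _ ⟨hne, ha, hb, U, hU, haU, hbU⟩ =>
    ⟨hne, hT.trans hV ha, hT.trans hV hb, U, hU.trans hV hT, haU, hbU⟩

/-- The edge is found at a vertex of the vertex figure minimizing `l`. -/
theorem exists_vertexGraph_adj_lt (hV : V.Finite) (hv : IsConfigFace V {v}) (hx : x ∈ V)
    (hxv : l x < l v) : ∃ w, (vertexGraph V).Adj v w ∧ l w < l v := by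
  obtain ⟨m, hm⟩ := hv.exists_exposes
  have hfig : (vertexFigure m v V).Finite := finite_vertexFigure hV
  have hx_ne : x ≠ v := fun h => hxv.ne (congrArg l h)
  have hxfig : centralProj m v x ∈ vertexFigure m v V := ⟨x, ⟨hx, hx_ne⟩, rfl⟩
  obtain ⟨u, hu, huV⟩ := exists_isConfigFace_singleton_mem_minFace hfig ⟨_, hxfig⟩ l
  have hu_neg : l u < 0 :=
    (hu.2 _ hxfig).trans_lt ((hm.apply_centralProj_lt_iff hx hx_ne l).2 hxv)
  have hedge : IsConfigFaceDim V (figureLift m v V {u}) 1 :=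
    hm.isConfigFaceDim_figureLift hV ((isConfigFaceDim_zero_iff hfig).2 ⟨u, huV, rfl⟩)
  obtain ⟨y, ⟨hy, hyv⟩, rfl⟩ := hu.1
  have hylt : l y < l v := (hm.apply_centralProj_lt_iff hy hyv l).1 hu_neg
  have hyedge : y ∈ figureLift m v V {centralProj m v y} := ⟨hy, .inr rfl⟩
  obtain ⟨w, hw, hwface⟩ :=
    exists_isConfigFace_singleton_mem_minFace (hV.subset hedge.1.1) ⟨y, hyedge⟩ l
  have hwlt : l w < l v := (hw.2 y hyedge).trans_lt hylt
  exact ⟨w, ⟨fun h => hwlt.ne (congrArg l h.symm), hv, hedge.1.trans hV hwface, _, hedge,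
    hm.mem_figureLift _, hw.1⟩, hwlt⟩

theorem exists_mem_minFace_mem_iff (hV : V.Finite) (hX : IsComponentUnion (vertexGraph V) C X)
    (hv : IsConfigFace V {v}) (hvC : v ∉ C) (hC : ∀ x ∈ C, l v ≤ l x) :
    ∃ w ∈ minFace V l, IsConfigFace V {w} ∧ (v ∈ X ↔ w ∈ X) := by
  induction hn : {x ∈ V | l x < l v}.ncard using Nat.strong_induction_on generalizing v with
  | _ n ih =>
    by_cases hmin : v ∈ minFace V l
    · exact ⟨v, hmin, hv, Iff.rfl⟩
    · obtain ⟨x, hx, hxv⟩ : ∃ x ∈ V, l x < l v := by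
        by_contra! h
        exact hmin ⟨hv.mem, h⟩
      obtain ⟨w, hvw, hwv⟩ := exists_vertexGraph_adj_lt hV hv hx hxv
      have hw : IsConfigFace V {w} := hvw.2.2.1
      have hwC : w ∉ C := fun h => (hC w h).not_gt hwv
      have hdecr : {x ∈ V | l x < l w}.ncard < n := by
        rw [← hn]
        exact ncard_lt_ncard ⟨fun y hy => ⟨hy.1, hy.2.trans hwv⟩,
          fun h => (h ⟨hw.mem, hwv⟩).2.false⟩ (hV.subset fun _ hy => hy.1)
      obtain ⟨z, hz, hzV, hwz⟩ := ih _ hdecr hw hwC (fun x hx => hwv.le.trans (hC x hx)) rfl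
      exact ⟨z, hz, hzV, (hX hvw hvC hwC).trans hwz⟩

theorem mem_iff_mem_of_isComponentUnion_empty (hV : V.Finite)
    (hX : IsComponentUnion (vertexGraph V) ∅ X) (ha : IsConfigFace V {a})
    (hb : IsConfigFace V {b}) : a ∈ X ↔ b ∈ X := by
  obtain ⟨m, hm⟩ := hb.exists_exposes
  obtain ⟨w, hw, -, haw⟩ := exists_mem_minFace_mem_iff (l := m) hV hX ha (notMem_empty a) (by simp)
  have hwb : w = b := by
    by_contra hne
    exact (hw.2 b hb.mem).not_gt (hm.2 w hw.1 hne)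
  exact hwb ▸ haw

theorem mem_iff_mem_of_apply_le (hV : V.Finite) (hX : IsComponentUnion (vertexGraph V) C X)
    {c : ℝ} (hC : ∀ x ∈ C, c ≤ l x) (hlt : ∃ y ∈ V, l y < c) (ha : IsConfigFace V {a})
    (haC : a ∉ C) (hac : l a ≤ c) (hb : IsConfigFace V {b}) (hbC : b ∉ C) (hbc : l b ≤ c) :
    a ∈ X ↔ b ∈ X := by
  obtain ⟨y, hy, hyc⟩ := hlt
  obtain ⟨p, hp, hpV, hap⟩ :=
    exists_mem_minFace_mem_iff hV hX ha haC fun x hx => hac.trans (hC x hx)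
  obtain ⟨q, hq, hqV, hbq⟩ :=
    exists_mem_minFace_mem_iff hV hX hb hbC fun x hx => hbc.trans (hC x hx)
  have hF : IsConfigFace V (minFace V l) := isConfigFace_minFace hV ⟨y, hy⟩ l
  have hFC (x) (hx : x ∈ minFace V l) : x ∉ C :=
    fun hxC => (hC x hxC).not_gt ((hx.2 y hy).trans_lt hyc)
  have hXF : IsComponentUnion (vertexGraph (minFace V l)) ∅ X := fun u w huw _ _ =>
    hX (vertexGraph_mono hV hF huw) (hFC u huw.2.1.mem) (hFC w huw.2.2.1.mem)
  rw [hap, hbq]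
  exact mem_iff_mem_of_isComponentUnion_empty (hV.subset hF.1) hXF
    (hpV.of_subset hF.1 (singleton_subset_iff.2 hp))
    (hqV.of_subset hF.1 (singleton_subset_iff.2 hq))

theorem exists_const_on_of_ncard_lt_of_mem (hC : C.Finite) (hCV : C.ncard < affDim V) (a : E)
    (hb : b ∈ V) :
    ∃ l : E →ₗ[ℝ] ℝ, (∀ x ∈ C, l x = l a) ∧ l b ≤ l a ∧ ∃ y ∈ V, l y < l a := by
  obtain ⟨l, hl, y, hy, hya⟩ := exists_const_on_of_ncard_lt hC hCV a
  have hl_neg : ∀ x ∈ C, (-l) x = (-l) a := fun x hx => congrArg Neg.neg (hl x hx)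
  rcases lt_trichotomy (l b) (l a) with hba | hba | hba
  · exact ⟨l, hl, hba.le, b, hb, hba⟩
  · rcases hya.lt_or_gt with hya | hya
    · exact ⟨l, hl, hba.le, y, hy, hya⟩
    · exact ⟨-l, hl_neg, (congrArg Neg.neg hba).le, y, hy, neg_lt_neg hya⟩
  · exact ⟨-l, hl_neg, neg_le_neg hba.le, b, hb, neg_lt_neg hba⟩

/-- Balinski's theorem. A functional constant on the deleted vertices and `a`, chosen so that `b` is
on its lower side, decreases along paths from `a` and `b` to its minimal face, which avoid the
deleted vertices. -/
theorem mConnected_vertexGraph (hV : V.Finite) (hne : V.Nonempty) :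
    MConnected ((vertexGraph V).induce {v | IsConfigFace V {v}}) (affDim V) := by
  have hmem {Y : Set ↥{v | IsConfigFace V {v}}} {u : ↥{v | IsConfigFace V {v}}} :
      u.1 ∈ Subtype.val '' Y ↔ u ∈ Y := Subtype.val_injective.mem_set_image
  refine mConnected_of_forall_isComponentUnion (affDim_lt_ncard_vertices hV hne) ?_
  intro S hS hSV X hX a b ha hb haX
  have hX' : IsComponentUnion (vertexGraph V) (Subtype.val '' S) (Subtype.val '' X) := by
    intro u w huw hu hw
    lift u to ↥{v | IsConfigFace V {v}} using huw.2.1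
    lift w to ↥{v | IsConfigFace V {v}} using huw.2.2.1
    rw [hmem] at hu hw
    rw [hmem, hmem]
    exact hX huw hu hw
  obtain ⟨l, hl, hba, hlt⟩ := exists_const_on_of_ncard_lt_of_mem (hS.image _)
    ((ncard_image_of_injective S Subtype.val_injective).trans_lt hSV) a.1 b.2.mem
  rw [← hmem]
  exact (mem_iff_mem_of_apply_le hV hX' (fun x hx => (hl x hx).ge) hlt a.2 (hmem.not.2 ha) le_rfl
    b.2 (hmem.not.2 hb) hba).1 (hmem.2 haX)

end Balinski

/-! ### Faces of dimension one and two -/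

section EdgeGraph

variable {a b : E}

/-- The graph of vertices and edges of the convex hull of `V` is `G_0` of it. -/
noncomputable def vertexGraphIso (hV : V.Finite) :
    (vertexGraph V).induce {v | IsConfigFace V {v}} ≃g configFaceGraph V 0 where
  toEquiv := .ofBijective
    (fun v => ⟨{v.1}, (isConfigFaceDim_zero_iff hV).2 ⟨v, v.2, rfl⟩⟩)
    ⟨fun _ _ h => Subtype.ext (singleton_injective (congrArg Subtype.val h)), fun T =>
      let ⟨v, hv, hT⟩ := (isConfigFaceDim_zero_iff hV).1 T.2
      ⟨⟨v, hv⟩, Subtype.ext hT.symm⟩⟩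
  map_rel_iff' {v w} := by
    constructor
    · rintro ⟨hne, F, hF, hvF, hwF⟩
      exact ⟨fun h => hne (congrArg _ (Subtype.ext h)), v.2, w.2, F, hF, hvF rfl, hwF rfl⟩
    · rintro ⟨hne, -, -, F, hF, hvF, hwF⟩
      exact ⟨fun h => hne (singleton_injective (congrArg Subtype.val h)), F, hF,
        singleton_subset_iff.2 hvF, singleton_subset_iff.2 hwF⟩

theorem mConnected_link (hV : V.Finite) (hVn : V.Nontrivial) (hv : IsConfigFace V {v}) :
    MConnected ((configFaceGraph V 1).induce {T | v ∈ T.1}) (affDim V - 1) := by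
  obtain ⟨m, hm⟩ := hv.exists_exposes
  have hfig := finite_vertexFigure (m := m) (v := v) hV
  have hne := nonempty_vertexFigure (m := m) (v := v) hVn
  rw [← hm.affDim_vertexFigure hV hne, Nat.add_sub_cancel]
  exact ((mConnected_vertexGraph hfig hne).of_iso (vertexGraphIso hfig)).of_iso
    (hm.linkIso hV 0)

theorem Exposes.ncard_le_ncard_figureLift {m : E →ₗ[ℝ] ℝ} (hm : Exposes m v V) (hV : V.Finite)
    (U : Set E) (k : ℕ) :
    {T | IsConfigFaceDim (vertexFigure m v V) T k ∧ U ⊆ T}.ncard ≤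
      {T | IsConfigFaceDim V T (k + 1) ∧ figureLift m v V U ⊆ T}.ncard := by
  refine ncard_le_ncard_of_injOn (figureLift m v V)
    (fun T hT => ⟨hm.isConfigFaceDim_figureLift hV hT.1, figureLift_mono hT.2⟩)
    (fun T hT T' hT' h => ?_) ((finite_setOf_isConfigFaceDim hV (k + 1)).subset fun T hT => hT.1)
  rw [← vertexFigure_figureLift hT.1.1.1, h, vertexFigure_figureLift hT'.1.1.1]

theorem affDim_lt_ncard_setOf_isConfigFaceDim_zero (hV : V.Finite) (hne : V.Nonempty) :
    affDim V < {T | IsConfigFaceDim V T 0}.ncard := by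
  have himage : {T | IsConfigFaceDim V T 0} = singleton '' {v | IsConfigFace V {v}} := by
    ext T
    exact (isConfigFaceDim_zero_iff hV).trans (exists_congr fun v => and_congr_right' eq_comm)
  rw [himage, ncard_image_of_injective _ singleton_injective]
  exact affDim_lt_ncard_vertices hV hne

theorem affDim_le_ncard_add (hV : V.Finite) (hU : IsConfigFaceDim V U k) :
    affDim V ≤ {T | IsConfigFaceDim V T (k + 1) ∧ U ⊆ T}.ncard + k := by
  induction k generalizing V U with
  | zero =>
    obtain ⟨v, hv, rfl⟩ := (isConfigFaceDim_zero_iff hV).1 hU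
    obtain ⟨m, hm⟩ := hv.exists_exposes
    rcases V.subsingleton_or_nontrivial with hsub | hVn
    · rw [(affDim_eq_zero_iff hV).2 hsub]
      exact Nat.zero_le _
    have hne := nonempty_vertexFigure (m := m) (v := v) hVn
    have hcard := affDim_lt_ncard_setOf_isConfigFaceDim_zero (finite_vertexFigure hV) hne
    have hlift := hm.ncard_le_ncard_figureLift hV ∅ 0
    rw [hm.figureLift_empty] at hlift
    simp only [empty_subset, and_true] at hlift
    have hdim := hm.affDim_vertexFigure hV hne
    omega
  | succ k ih =>
    obtain ⟨v, hv⟩ := exists_isConfigFace_singleton (hV.subset hU.1.1) hU.2.1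
    obtain ⟨m, hm⟩ := (hU.1.trans hV hv).exists_exposes
    have hU' := hm.isConfigFaceDim_vertexFigure hV hU hv.mem
    have hcard := ih (finite_vertexFigure hV) hU'
    have hlift := hm.ncard_le_ncard_figureLift hV (vertexFigure m v U) (k + 1)
    rw [hm.figureLift_vertexFigure hU.1 hv.mem] at hlift
    have hdim := hm.affDim_vertexFigure hV (hU'.2.1.mono hU'.1.1)
    omega

theorem exists_isConfigFaceDim_ne (hV : V.Finite) (hU : IsConfigFaceDim V U k)
    (hdim : k + 2 ≤ affDim V) (T : Set E) :
    ∃ T', IsConfigFaceDim V T' (k + 1) ∧ U ⊆ T' ∧ T' ≠ T := by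
  have hcard := affDim_le_ncard_add hV hU
  obtain ⟨T', ⟨hT', hUT'⟩, hne⟩ := exists_ne_of_one_lt_ncard
    (s := {T | IsConfigFaceDim V T (k + 1) ∧ U ⊆ T}) (by omega) T
  exact ⟨T', hT', hUT', hne⟩

theorem IsConfigFaceDim.eq_of_mem_of_mem (hV : V.Finite) (ha : IsConfigFace V {a})
    (hb : IsConfigFace V {b}) (hab : a ≠ b) (hT : IsConfigFaceDim V T 1)
    (hU : IsConfigFaceDim V U 1) (haT : a ∈ T) (hbT : b ∈ T) (haU : a ∈ U) (hbU : b ∈ U) :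
    T = U := by
  have ha₀ := (isConfigFaceDim_zero_iff hV).2 ⟨a, ha, rfl⟩
  have hb₀ := (isConfigFaceDim_zero_iff hV).2 ⟨b, hb, rfl⟩
  exact ha₀.eq_of_ne_of_subset hV hb₀ (singleton_injective.ne hab) hT hU
    (singleton_subset_iff.2 haT) (singleton_subset_iff.2 hbT) (singleton_subset_iff.2 haU)
    (singleton_subset_iff.2 hbU)

theorem IsConfigFaceDim.exists_edge_ne (hV : V.Finite) (hF : IsConfigFaceDim V F 2)
    (ha : IsConfigFace V {a}) (haF : a ∈ F) (T : Set E) :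
    ∃ T', IsConfigFaceDim V T' 1 ∧ T' ⊆ F ∧ a ∈ T' ∧ T' ≠ T := by
  have hFfin := hV.subset hF.1.1
  have ha₀ : IsConfigFaceDim F {a} 0 := (isConfigFaceDim_zero_iff hFfin).2
    ⟨a, ha.of_subset hF.1.1 (singleton_subset_iff.2 haF), rfl⟩
  obtain ⟨T', hT', haT', hne⟩ := exists_isConfigFaceDim_ne hFfin ha₀ hF.2.2.ge T
  exact ⟨T', hT'.trans hV hF.1, hT'.1.1, haT' rfl, hne⟩

theorem IsConfigFaceDim.exists_injective_faces (hV : V.Finite) (hU : IsConfigFaceDim V U k) :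
    ∃ F : Fin (affDim V - k) → Set E, F.Injective ∧
      ∀ i, IsConfigFaceDim V (F i) (k + 1) ∧ U ⊆ F i := by
  have hcard := affDim_le_ncard_add hV hU
  have hfin : {T | IsConfigFaceDim V T (k + 1) ∧ U ⊆ T}.Finite :=
    (finite_setOf_isConfigFaceDim hV (k + 1)).subset fun T hT => hT.1
  have := hfin.to_subtype
  let e := Finite.equivFin ↥{T | IsConfigFaceDim V T (k + 1) ∧ U ⊆ T}
  have hle : affDim V - k ≤ Nat.card ↥{T | IsConfigFaceDim V T (k + 1) ∧ U ⊆ T} :=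
    Nat.sub_le_of_le_add hcard
  exact ⟨fun i => (e.symm (Fin.castLE hle i)).1,
    Subtype.val_injective.comp (e.symm.injective.comp (Fin.castLE_injective hle)),
    fun i => (e.symm (Fin.castLE hle i)).2⟩

/-- In each two-dimensional face containing the edge `T`, the other edge at `a` is matched with the
other edge at `b`. -/
theorem hasMatching_configFaceGraph (hV : V.Finite) (ha : IsConfigFace V {a})
    (hb : IsConfigFace V {b}) (hab : a ≠ b) (T : {T // IsConfigFaceDim V T 1}) (haT : a ∈ T.1)
    (hbT : b ∈ T.1) :
    HasMatching (configFaceGraph V 1) {U | U ≠ T ∧ a ∈ U.1} {U | U ≠ T ∧ b ∈ U.1}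
      (affDim V - 1) := by
  obtain ⟨F, hFinj, hF⟩ := T.2.exists_injective_faces hV
  have injective_of_mem {p : Fin (affDim V - 1) → {T // IsConfigFaceDim V T 1}}
      (hpF : ∀ i, (p i).1 ⊆ F i) (hpT : ∀ i, (p i).1 ≠ T.1) : p.Injective := by
    intro i j hij
    exact hFinj ((p i).2.eq_of_ne_of_subset hV T.2 (hpT i) (hF i).1 (hF j).1 (hpF i) (hF i).2
      (hij ▸ hpF j) (hF j).2)
  choose p hp hpF hap hpT using fun i => (hF i).1.exists_edge_ne hV ha ((hF i).2 haT) T.1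
  choose q hq hqF hbq hqT using fun i => (hF i).1.exists_edge_ne hV hb ((hF i).2 hbT) T.1
  refine ⟨fun i => ⟨p i, hp i⟩, fun i => ⟨q i, hq i⟩, injective_of_mem hpF hpT,
    injective_of_mem hqF hqT, fun i => ⟨⟨?_, hap i⟩, ⟨?_, hbq i⟩, ?_, F i, (hF i).1, hpF i, hqF i⟩⟩
  · exact fun h => hpT i (congrArg Subtype.val h)
  · exact fun h => hqT i (congrArg Subtype.val h)
  · intro h
    have hpq : p i = q i := congrArg Subtype.val h
    have hbp : b ∈ p i := hpq ▸ hbq i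
    exact hpT i ((hp i).eq_of_mem_of_mem hV ha hb hab T.2 (hap i) hbp haT hbT)

theorem isEdgeGraph_configFaceGraph (hV : V.Finite) (hVn : V.Nontrivial) :
    IsEdgeGraph
      (fun (v : ↥{v | IsConfigFace V {v}}) (T : {T // IsConfigFaceDim V T 1}) => v.1 ∈ T.1)
      ((vertexGraph V).induce {v | IsConfigFace V {v}}) (configFaceGraph V 1) (affDim V) where
  exists_ends T := by
    obtain ⟨a, b, hab, hends⟩ := exists_vertices_eq_pair (hV.subset T.2.1.1) T.2.2.2
    have hvertex (v) : IsConfigFace T.1 {v} → IsConfigFace V {v} := T.2.1.trans hV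
    refine ⟨⟨a, hvertex a ((hends a).2 (.inl rfl))⟩, ⟨b, hvertex b ((hends b).2 (.inr rfl))⟩,
      fun h => hab (congrArg Subtype.val h), fun v => ?_⟩
    rw [Subtype.ext_iff, Subtype.ext_iff, ← hends]
    exact ⟨fun hv => v.2.of_subset T.2.1.1 (singleton_subset_iff.2 hv), fun hv => hv.mem⟩
  edge_unique a b hab T U haT hbT haU hbU := Subtype.ext
    (T.2.eq_of_mem_of_mem hV a.2 b.2 (Subtype.val_injective.ne hab) U.2 haT hbT haU hbU)
  exists_edge _ _ hab :=
    let ⟨T, hT, haT, hbT⟩ := hab.2.2.2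
    ⟨⟨T, hT⟩, haT, hbT⟩
  link_mConnected v := mConnected_link hV hVn v.2
  hasMatching a b hab T haT hbT :=
    hasMatching_configFaceGraph hV a.2 b.2 (Subtype.val_injective.ne hab) T haT hbT

theorem mConnected_configFaceGraph_one (hV : V.Finite) (hdim : 4 ≤ affDim V) :
    MConnected (configFaceGraph V 1) (2 * affDim V - 2) := by
  have hVn : V.Nontrivial := by
    rw [← not_subsingleton_iff, ← affDim_eq_zero_iff hV]
    omega
  exact (isEdgeGraph_configFaceGraph hV hVn).mConnected hdim
    (mConnected_vertexGraph hV hVn.nonempty)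

end EdgeGraph

end Configuration

/-! ### Faces of polytopes -/

section ConvexHull

variable {E : Type*} [AddCommGroup E] [Module ℝ E] {V T : Set E} {l : E →ₗ[ℝ] ℝ}

theorem IsConfigFace.exists_eq_minFace (hT : IsConfigFace V T) (hne : T.Nonempty) :
    ∃ l, T = minFace V l := by
  obtain ⟨hTV, l, c, hTc, hlt⟩ := hT
  obtain ⟨t, ht⟩ := hne
  refine ⟨l, Subset.antisymm (fun x hx => ⟨hTV hx, fun y hy => ?_⟩) fun x hx => ?_⟩
  · by_cases hyT : y ∈ T
    exacts [((hTc x hx).trans (hTc y hyT).symm).le, (hTc x hx).trans_le (hlt y hy hyT).le]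
  · by_contra hxT
    exact ((hx.2 t (hTV ht)).trans_eq (hTc t ht)).not_gt (hlt x hx.1 hxT)

theorem le_of_mem_convexHull {c : ℝ} (hl : ∀ x ∈ V, c ≤ l x) {x : E} (hx : x ∈ convexHull ℝ V) :
    c ≤ l x :=
  convexHull_min hl (convex_halfSpace_ge l.isLinear c) hx

theorem minFace_eq_inter_minFace_convexHull (V : Set E) (l : E →ₗ[ℝ] ℝ) :
    minFace V l = minFace (convexHull ℝ V) l ∩ V := by
  ext x
  constructor
  · intro hx
    exact ⟨⟨subset_convexHull ℝ V hx.1, fun y => le_of_mem_convexHull hx.2⟩, hx.1⟩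
  · rintro ⟨hx, hxV⟩
    exact ⟨hxV, fun y hy => hx.2 y (subset_convexHull ℝ V hy)⟩

theorem convex_union_setOf_lt {s : Set E} (hs : Convex ℝ s) {c : ℝ} (hl : ∀ x ∈ s, c ≤ l x) :
    Convex ℝ (s ∪ {x | c < l x}) := by
  have hle : ∀ x ∈ s ∪ {x | c < l x}, c ≤ l x := by
    rintro x (hx | hx)
    exacts [hl x hx, hx.le]
  rw [convex_iff_forall_pos]
  intro x hx y hy a b ha hb hab
  by_cases hxy : x ∈ s ∧ y ∈ s
  · exact .inl (hs hxy.1 hxy.2 ha.le hb.le hab)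
  · right
    change c < l (a • x + b • y)
    have hc : c = a * c + b * c := by rw [← add_mul, hab, one_mul]
    rw [map_add, map_smul, map_smul, smul_eq_mul, smul_eq_mul, hc]
    rcases not_and_or.1 hxy with hxs | hys
    · exact add_lt_add_of_lt_of_le (mul_lt_mul_of_pos_left (hx.resolve_left hxs) ha)
        (mul_le_mul_of_nonneg_left (hle y hy) hb.le)
    · exact add_lt_add_of_le_of_lt (mul_le_mul_of_nonneg_left (hle x hx) ha.le)
        (mul_lt_mul_of_pos_left (hy.resolve_left hys) hb)

theorem convex_minFace (hV : Convex ℝ V) (l : E →ₗ[ℝ] ℝ) : Convex ℝ (minFace V l) := by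
  have hinter : minFace V l = V ∩ ⋂ y ∈ V, {x | l x ≤ l y} := by
    ext x
    simp [minFace]
  rw [hinter]
  exact hV.inter (convex_iInter₂ fun y _ => convex_halfSpace_le l.isLinear (l y))

theorem convexHull_minFace (V : Set E) (l : E →ₗ[ℝ] ℝ) :
    convexHull ℝ (minFace V l) = minFace (convexHull ℝ V) l := by
  apply Subset.antisymm
  · refine convexHull_min ?_ (convex_minFace (convex_convexHull ℝ V) l)
    rw [minFace_eq_inter_minFace_convexHull V]
    exact inter_subset_left
  · rintro x ⟨hx, hmin⟩
    have hVx (y) (hy : y ∈ V) : l x ≤ l y := hmin y (subset_convexHull ℝ V hy)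
    have hconv : Convex ℝ (convexHull ℝ (minFace V l) ∪ {y | l x < l y}) :=
      convex_union_setOf_lt (convex_convexHull ℝ _) fun y =>
        le_of_mem_convexHull fun z hz => hVx z hz.1
    refine (convexHull_min (fun y hy => ?_) hconv hx).resolve_right (lt_irrefl (l x))
    rcases (hVx y hy).eq_or_lt with hxy | hxy
    exacts [.inl (subset_convexHull ℝ _ ⟨hy, fun z hz => hxy ▸ hVx z hz⟩), .inr hxy]

end ConvexHull

section Polytope

variable {E : Type*} [AddCommGroup E] [Module ℝ E] [TopologicalSpace E] {A B : Set E}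

theorem exists_eq_minFace_of_isExposed (hB : IsExposed ℝ A B) (hne : B.Nonempty) :
    ∃ l : E →ₗ[ℝ] ℝ, B = minFace A l := by
  obtain ⟨l, rfl⟩ := hB hne
  exact ⟨-l.toLinearMap, by simp [minFace]⟩

theorem isExposed_minFace [IsTopologicalAddGroup E] [ContinuousSMul ℝ E] [T2Space E]
    [FiniteDimensional ℝ E] (A : Set E) (l : E →ₗ[ℝ] ℝ) : IsExposed ℝ A (minFace A l) :=
  fun _ => ⟨-l.toContinuousLinearMap, by simp [minFace]⟩

variable {N k : ℕ} {S T F : Set (EuclideanSpace ℝ (Fin N))}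

theorem sdim_convexHull (S : Set (EuclideanSpace ℝ (Fin N))) :
    sdim (convexHull ℝ S) = affDim S := by
  rw [sdim, affineSpan_convexHull, direction_affineSpan, affDim]

theorem isFaceDim_convexHull (hT : IsConfigFaceDim S T k) :
    IsFaceDim (convexHull ℝ S) (convexHull ℝ T) k := by
  obtain ⟨hTS, hne, hdim⟩ := hT
  refine ⟨?_, hne.convexHull, (sdim_convexHull T).trans hdim⟩
  obtain ⟨l, rfl⟩ := hTS.exists_eq_minFace hne
  exact convexHull_minFace S l ▸ isExposed_minFace _ l

theorem convexHull_inter_of_isConfigFace (hT : IsConfigFace S T) (hne : T.Nonempty) :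
    convexHull ℝ T ∩ S = T := by
  obtain ⟨l, rfl⟩ := hT.exists_eq_minFace hne
  rw [convexHull_minFace, ← minFace_eq_inter_minFace_convexHull]

theorem convexHull_inter_of_isFaceDim (hF : IsFaceDim (convexHull ℝ S) F k) :
    convexHull ℝ (F ∩ S) = F := by
  obtain ⟨l, rfl⟩ := exists_eq_minFace_of_isExposed hF.1 hF.2.1
  rw [← minFace_eq_inter_minFace_convexHull, convexHull_minFace]

theorem isConfigFaceDim_inter (hS : S.Finite) (hF : IsFaceDim (convexHull ℝ S) F k) :
    IsConfigFaceDim S (F ∩ S) k := by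
  have hull := convexHull_inter_of_isFaceDim hF
  obtain ⟨l, hl⟩ := exists_eq_minFace_of_isExposed hF.1 hF.2.1
  have hmin : minFace S l = F ∩ S := hl ▸ minFace_eq_inter_minFace_convexHull S l
  have hne : (F ∩ S).Nonempty := convexHull_nonempty_iff.1 (hull.symm ▸ hF.2.1)
  refine ⟨hmin ▸ isConfigFace_minFace hS (hne.mono inter_subset_right) l, hne, ?_⟩
  rw [← sdim_convexHull, hull, hF.2.2]

/-- A face of a polytope corresponds to the set of the given points on it. -/
def faceEquiv (hS : S.Finite) (k : ℕ) :
    {T // IsConfigFaceDim S T k} ≃ {F // IsFaceDim (convexHull ℝ S) F k} where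
  toFun T := ⟨convexHull ℝ T.1, isFaceDim_convexHull T.2⟩
  invFun F := ⟨F.1 ∩ S, isConfigFaceDim_inter hS F.2⟩
  left_inv T := Subtype.ext (convexHull_inter_of_isConfigFace T.2.1 T.2.2.1)
  right_inv F := Subtype.ext (convexHull_inter_of_isFaceDim F.2)

theorem faceGraph_adj_iff {P : Set (EuclideanSpace ℝ (Fin N))} {F F' : {F // IsFaceDim P F k}} :
    (faceGraph P k).Adj F F' ↔ F ≠ F' ∧ ∃ G, IsFaceDim P G (k + 1) ∧ F.1 ⊆ G ∧ F'.1 ⊆ G := by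
  simp only [faceGraph, SimpleGraph.fromRel_adj, and_comm (a := F'.1 ⊆ _), or_self]

/-- The faces of a polytope, as a graph, are the sets of the given points on them. -/
def faceGraphIso (hS : S.Finite) (k : ℕ) :
    configFaceGraph S k ≃g faceGraph (convexHull ℝ S) k where
  toEquiv := faceEquiv hS k
  map_rel_iff' {T U} := by
    rw [faceGraph_adj_iff]
    refine and_congr (faceEquiv hS k).injective.ne_iff ⟨?_, ?_⟩
    · rintro ⟨G, hG, hTG, hUG⟩
      exact ⟨G ∩ S, isConfigFaceDim_inter hS hG,
        subset_inter ((subset_convexHull ℝ T.1).trans hTG) T.2.1.1,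
        subset_inter ((subset_convexHull ℝ U.1).trans hUG) U.2.1.1⟩
    · rintro ⟨F, hF, hTF, hUF⟩
      exact ⟨convexHull ℝ F, isFaceDim_convexHull hF, convexHull_mono hTF, convexHull_mono hUF⟩

end Polytope

/-- For every convex polytope `P` of dimension `d ≥ 4`, the graph `G_1(P)` on
the edges of `P` is `(2d-2)`-vertex-connected. -/
theorem stmt_3 (d : ℕ) (hd : 4 ≤ d) {N : ℕ}
    (P : Set (EuclideanSpace ℝ (Fin N))) (hP : IsPolytope P) (hdim : sdim P = d) :
    MConnected (faceGraph P 1) (2 * d - 2) := by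
  obtain ⟨S, hS, rfl⟩ := hP
  rw [sdim_convexHull] at hdim
  subst hdim
  exact (mConnected_configFaceGraph_one hS hd).of_iso (faceGraphIso hS 1)
end
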